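/- The Goodstein process terminates: for every natural number ℓ there exists k such that G_k(ℓ) = 0. -/

import Mathlib

set_option maxHeartbeats 1000000

attribute [local instance] Classical.propDecidable

/-- Raw terms of the system `T`: `0`, `1`, `ψᵢ a` and (right-nested) sums `a + b`. -/
inductive Tm : Type where
  | zero : Tm
  | one  : Tm
  | psi  : ℕ → Tm → Tm
  | add  : Tm → Tm → Tm
deriving DecidableEq

instance : Nonempty Tm := ⟨Tm.zero⟩

/-- Head (first summand) of a term. -/
def Tm.hd : Tm → Tm
  | .add a _ => a
  | t => t

/-- Tail (remaining summands) of a term. -/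
def Tm.tl : Tm → Tm
  | .add _ b => b
  | _ => .zero

/-- Whether a term is a genuine sum. -/
def Tm.isAdd : Tm → Prop
  | .add _ _ => True
  | _ => False

/-- The comparison relation `<` on terms of `T`. -/
inductive TLt : Tm → Tm → Prop where
  | zero_lt {a : Tm} : a ≠ Tm.zero → TLt Tm.zero a
  | one_lt_psi0 {a : Tm} : TLt Tm.one (Tm.psi 0 a)
  | psi_mono {i : ℕ} {a b : Tm} : TLt a b → TLt (Tm.psi i a) (Tm.psi i b)
  | psi_lt {i j : ℕ} {a b : Tm} : i < j → TLt (Tm.psi i a) (Tm.psi j b)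
  | lex_hd {a b : Tm} : (Tm.isAdd a ∨ Tm.isAdd b) → TLt (Tm.hd a) (Tm.hd b) → TLt a b
  | lex_tl {a b : Tm} : (Tm.isAdd a ∨ Tm.isAdd b) → Tm.hd a = Tm.hd b →
      TLt (Tm.tl a) (Tm.tl b) → TLt a b

/-- `≤` on terms. -/
def TLe (a b : Tm) : Prop := TLt a b ∨ a = b

/-- Addition of terms: summands of the left argument smaller than the head of the
right argument are discarded. -/
noncomputable def Tm.addT : Tm → Tm → Tm
  | .zero, b => b
  | a, .zero => a
  | .add p r, b => if TLt p (Tm.hd b) then b else Tm.add p (Tm.addT r b)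
  | a, b => if TLt a (Tm.hd b) then b else Tm.add a b

/-- The term representing a natural number. -/
def natToTm : ℕ → Tm
  | 0 => .zero
  | 1 => .one
  | n + 2 => Tm.add Tm.one (natToTm (n + 1))

/-- The natural number represented by a (numeral) term. -/
def tmToNat : Tm → ℕ
  | .zero => 0
  | .one => 1
  | .psi _ _ => 0
  | .add a b => tmToNat a + tmToNat b

/-- Multiplication of a (principal) term by a natural number. -/
noncomputable def mulNat (a : Tm) : ℕ → Tm
  | 0 => .zero
  | n + 1 => Tm.addT (mulNat a n) a

/-- Principal terms: `1` and the `ψᵢ`-terms. -/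
def Tm.IsPrincipal : Tm → Prop
  | .one => True
  | .psi _ _ => True
  | _ => False

/-- The well-formed terms of the system `T`. -/
inductive InT : Tm → Prop where
  | zero : InT .zero
  | one : InT .one
  | psi {i : ℕ} {a : Tm} : i < 3 → InT a → InT (.psi i a)
  | add {a b : Tm} : Tm.IsPrincipal a → InT a → InT b → b ≠ .zero →
      TLe (Tm.hd b) a → InT (.add a b)

/-- `ω := ψ₀0`. -/
def omegaT : Tm := .psi 0 .zero
/-- `Ω := ψ₁0`. -/
def OmegaT : Tm := .psi 1 .zero
/-- `Ω₂ := ψ₂0`. -/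
def Omega2T : Tm := .psi 2 .zero

/-- The type `tp(α)` of a term. -/
def tp : Tm → Tm
  | .zero => .zero
  | .one => .one
  | .add _ b => tp b
  | .psi i a =>
    if tp a = Tm.zero then Tm.psi i Tm.zero
    else if tp a = Tm.one then omegaT
    else if (i = 0 ∧ tp a = OmegaT) ∨ (i = 1 ∧ tp a = Omega2T) then omegaT
    else tp a

/-- The fundamental sequence `α[x]` of a term `α` at index `x`. -/
noncomputable def fund : Tm → Tm → Tm
  | .zero, _ => .zero
  | .one, _ => .zero
  | .add a b, x => Tm.addT a (fund b x)
  | .psi i a, x =>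
    if tp a = Tm.zero then x
    else if tp a = Tm.one then mulNat (Tm.psi i (fund a Tm.zero)) (tmToNat x)
    else if i = 0 ∧ tp a = OmegaT then
      Tm.psi 0 (fund a (Nat.rec (motive := fun _ => Tm) Tm.zero
        (fun _ ih => Tm.psi 0 (fund a ih)) (tmToNat x)))
    else if i = 1 ∧ tp a = Omega2T then
      Tm.psi 1 (fund a (Nat.rec (motive := fun _ => Tm) Tm.zero
        (fun _ ih => Tm.psi 1 (fund a ih)) (tmToNat x)))
    else Tm.psi i (fund a x)
termination_by t _ => sizeOf t
decreasing_by all_goals simp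

/-- The finite set `G₁(α)`. -/
def G1 : Tm → Finset Tm
  | .zero => ∅
  | .one => ∅
  | .psi 0 _ => ∅
  | .psi 1 b => insert b (G1 b)
  | .psi 2 b => G1 b
  | .psi (_ + 3) _ => ∅
  | .add a b => G1 a ∪ G1 b

/-- The finite set `G₀(α)`. -/
def G0 : Tm → Finset Tm
  | .zero => ∅
  | .one => ∅
  | .psi 0 b => insert b (G0 b)
  | .psi 1 b => G0 b
  | .psi 2 b => G0 b
  | .psi (_ + 3) _ => ∅
  | .add a b => G0 a ∪ G0 b

/-- The well-founded subsystem `OT ⊆ T`. -/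
inductive InOT : Tm → Prop where
  | zero : InOT .zero
  | one : InOT .one
  | psi2 {b : Tm} : InOT b → InOT (.psi 2 b)
  | add {a b : Tm} : InT (.add a b) → InOT a → InOT b → InOT (.add a b)
  | psi1 {b : Tm} : InOT b → (∀ γ ∈ G1 b, TLt γ b) → InOT (.psi 1 b)
  | psi0 {b : Tm} : InOT b → (∀ γ ∈ G0 b, TLt γ b) → TLt b Omega2T → InOT (.psi 0 b)

/-- The norm `N(α)`. -/
def normN : Tm → ℕ
  | .zero => 0
  | .one => 1
  | .psi _ b => 1 + normN b
  | .add a b => normN a + normN b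

/-- `OT₀ := {α ∈ OT : α < ψ₁Ω₂ and G₀α < ψ₁Ω₂}`. -/
def InOT0 (a : Tm) : Prop :=
  InOT a ∧ TLt a (Tm.psi 1 Omega2T) ∧ ∀ γ ∈ G0 a, TLt γ (Tm.psi 1 Omega2T)

/-- Single-step descent: `b = a[x]` for some term `x ≤ n`. -/
def stepLe (n : ℕ) (b a : Tm) : Prop := ∃ x : Tm, TLe x (natToTm n) ∧ b = fund a x

/-- `a <ₙ b` : transitive closure of single-step descent. -/
def ltN (n : ℕ) (a b : Tm) : Prop := Relation.TransGen (stepLe n) a b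

/-- `a ≤ₙ b` : reflexive transitive closure of single-step descent. -/
def leN (n : ℕ) (a b : Tm) : Prop := Relation.ReflTransGen (stepLe n) a b

mutual
/-- Graph of the Hardy hierarchy: `HRel α k n` means `H_α(k) = n`. -/
inductive HRel : Tm → ℕ → ℕ → Prop where
  | zero {k : ℕ} : HRel Tm.zero k k
  | succ {α : Tm} {k n : ℕ} : tp α = Tm.one → HRel (fund α Tm.zero) k n →
      HRel α k (n * k)
  | lim {α β : Tm} {k n : ℕ} : tp α = omegaT → HIter α k k β → HRel β k n →
      HRel α k n

/-- Graph of the iteration `α{b}`: `HIter α k b β` means `α{b} = β`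
(where `α{0} = α[0]` and `α{b+1} = α[H_(α{b})(k)]`). -/
inductive HIter : Tm → ℕ → ℕ → Tm → Prop where
  | zero {α : Tm} {k : ℕ} : HIter α k 0 (fund α Tm.zero)
  | succ {α β : Tm} {k b n : ℕ} : HIter α k b β → HRel β k n →
      HIter α k (b + 1) (fund α (natToTm n))
end

/-- The Hardy function `H_α(k)`. -/
noncomputable def H (α : Tm) (k : ℕ) : ℕ := sInf {n | HRel α k n}

/-- The (unique, when it exists) ordinal term of the `k`-normal form of `m`:
the maximal `α ∈ OT₀ ∩ Ω` with `H_α(k) ≤ m`. -/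
noncomputable def nfAlpha (k m : ℕ) : Tm :=
  Classical.epsilon fun α =>
    InOT0 α ∧ TLt α OmegaT ∧ H α k ≤ m ∧
      ∀ β : Tm, InOT0 β → TLt β OmegaT → TLt α β → m < H β k

theorem tmToNat_le_normN (t : Tm) : tmToNat t ≤ normN t := by
  induction t with
  | zero => simp [tmToNat, normN]
  | one => simp [tmToNat, normN]
  | psi i a ih => simp [tmToNat, normN]
  | add a b iha ihb => simp only [tmToNat, normN]; omega

mutual
/-- Base change `α[k ← k+1]` on terms. -/
noncomputable def bcT (k : ℕ) : Tm → Tm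
  | .zero => .zero
  | .one => .one
  | .psi i a => .psi i (bcT k a)
  | .add a b =>
      if a = Tm.one then natToTm (bcN k (tmToNat (Tm.add a b)))
      else if h : 0 < normN a ∧ 0 < normN b then Tm.add (bcT k a) (bcT k b)
      else Tm.zero
termination_by a => 2 * normN a + 1
decreasing_by
  all_goals simp only [normN]
  · omega
  · have := tmToNat_le_normN (Tm.add a b); simp only [normN] at this ⊢; omega
  · omega
  · omega

/-- Base change `m[k ← k+1]` on natural numbers. -/
noncomputable def bcN (k m : ℕ) : ℕ :=
  if h1 : m < k then m
  else if h2 : m = k then k + 1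
  else if hg : normN (nfAlpha k m) < m ∧ 0 < H (nfAlpha k m) k ∧ H (nfAlpha k m) k ≤ m then
    H (bcT k (nfAlpha k m)) (k + 1) * (m / H (nfAlpha k m) k) + bcN k (m % H (nfAlpha k m) k)
  else 0
termination_by 2 * m
decreasing_by
  · omega
  · have := Nat.mod_lt m (y := H (nfAlpha k m) k) hg.2.1; omega
end

mutual
/-- The ordinal assignment `o_k` on terms of `OT₀`. -/
noncomputable def oT (k : ℕ) : Tm → Tm
  | .zero => .zero
  | .one => .one
  | .psi 0 b => .psi 1 (oT k b)
  | .psi 1 b => .psi 2 (oT k b)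
  | .psi (_ + 2) _ => .zero
  | .add a b =>
      if a = Tm.one then oN k (tmToNat (Tm.add a b))
      else if h : 0 < normN a ∧ 0 < normN b then Tm.addT (oT k a) (oT k b)
      else Tm.zero
termination_by a => 2 * normN a + 1
decreasing_by
  all_goals simp only [normN]
  · omega
  · omega
  · have := tmToNat_le_normN (Tm.add a b); simp only [normN] at this ⊢; omega
  · omega
  · omega

/-- The ordinal assignment `o_k` on natural numbers. -/
noncomputable def oN (k m : ℕ) : Tm :=
  if h1 : m < k then natToTm m
  else if h2 : m = k then omegaT
  else if hg : normN (nfAlpha k m) < m ∧ 0 < H (nfAlpha k m) k ∧ H (nfAlpha k m) k ≤ m then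
    Tm.addT (Tm.psi 0 (oT k (nfAlpha k m))) (oN k (m - H (nfAlpha k m) k))
  else Tm.zero
termination_by 2 * m
decreasing_by
  · omega
  · omega
end

/-- Ordinal contexts: a term with a single hole, either replacing a summand
(`ξ + ⟦·⟧ + η`) or nested under collapsing functions (`ξ + ψᵢ(μ⟦·⟧) + η`). -/
inductive Ctx : Type where
  | base : Tm → Tm → Ctx
  | psiC : Tm → ℕ → Ctx → Tm → Ctx

/-- Filling the hole of a context with a term. -/
noncomputable def Ctx.fill : Ctx → Tm → Tm
  | .base ξ η, γ => Tm.addT (Tm.addT ξ γ) η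
  | .psiC ξ i μ η, γ => Tm.addT (Tm.addT ξ (Tm.psi i (Ctx.fill μ γ))) η

/-- The truncated context `λ⁻⟦·⟧`: all summands following the hole are removed,
at every level. -/
def Ctx.trunc : Ctx → Ctx
  | .base ξ _ => .base ξ Tm.zero
  | .psiC ξ i μ _ => .psiC ξ i (Ctx.trunc μ) Tm.zero

/-- A context is valid if only `ψ₀` and `ψ₁` occur on the path to the hole. -/
def Ctx.Valid : Ctx → Prop
  | .base _ _ => True
  | .psiC _ i μ _ => i ≤ 1 ∧ Ctx.Valid μ

/-- A context is `ψ₀`-nesting free if its hole is not in the scope of a `ψ₀`. -/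
def Ctx.NestFree : Ctx → Prop
  | .base _ _ => True
  | .psiC _ i μ _ => i = 1 ∧ Ctx.NestFree μ

/-- The Goodstein process: `G_0(ℓ) = ℓ` and
`G_(k+1)(ℓ) = G_k(ℓ)[k+2 ← k+3] − 1` as long as `G_k(ℓ) > 0`. -/
noncomputable def Gseq (l : ℕ) : ℕ → ℕ
  | 0 => l
  | k + 1 => if 0 < Gseq l k then bcN (k + 2) (Gseq l k) - 1 else 0

/-!
A number `m` in base `k` is assigned an ordinal: in its hereditary `k`-normal form
`m = H_α(k) + n`, the Hardy value is replaced by `ψ₀ α*`, where `α*` arises from `α` by raising the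
collapsing indices and replacing the numerals by their own ordinals. Base change turns normal forms
into normal forms and therefore preserves this ordinal, whereas the predecessor lowers it, so that
the process cannot outlast the well-foundedness of the order on standard terms.

That base change respects normal forms amounts to `H_(α' + 1)(k + 1) ≤ H_β(k + 1)` for all notations
`β > α'`, by induction on `β`. If `β` is a limit whose fundamental sequence consists of notations,
an element of that sequence at most `α'` would exhibit `β` as the base change of some `γ > α` with
`H_γ(k) ≤ m`, against the maximality of `α`. The remaining `β` stem from gaps in `OT0`: the order
on terms puts `1` below `ψ₀ a` only, so that terms such as `ψ₀ 1` and `Ω + 1` are no notations. The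
sequence `ψᵢ (c + n)` of `β = ψᵢ (c + ω)` may leave `OT0`, and its elements are then replaced by the
multiples of `ψᵢ c`, of which `α'` exceeds no more than there are collapsing terms in `α`.
-/

/-- Formal sums of collapsing terms: `cons i a r` stands for `D i a + r`, where `D 0 0 = 1` and
`D (i + 1) a = ψᵢ a`. The shift of indices lets `1` be treated like the other principal terms.
Unlike `Tm`, whose sums are binary trees, this type has no two representations of one sum. -/
inductive PsiSum : Type where
  | nil : PsiSum
  | cons : ℕ → PsiSum → PsiSum → PsiSum
deriving DecidableEq

namespace PsiSum

variable {L i j l m n : ℕ} {a b q r s t : PsiSum}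

/-! ## The order -/

/-- The lexicographic order in which a principal term is compared first by its index and then by
its argument. -/
def Lex : PsiSum → PsiSum → Prop
  | _, nil => False
  | nil, cons _ _ _ => True
  | cons i a r, cons j b s => i < j ∨ (i = j ∧ (Lex a b ∨ (a = b ∧ Lex r s)))

theorem lex_irrefl (a : PsiSum) : ¬ Lex a a := by
  induction a with
  | nil => simp [Lex]
  | cons i a r iha ihr => simp [Lex, iha, ihr]

theorem lex_trans : ∀ {a b c : PsiSum}, Lex a b → Lex b c → Lex a c
  | _, _, nil => by simp [Lex]
  | nil, _, cons _ _ _ => by simp [Lex]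
  | cons _ _ _, nil, cons _ _ _ => by simp [Lex]
  | cons i a r, cons j b s, cons k c u => by
    have iha : Lex a b → Lex b c → Lex a c := lex_trans
    have ihr : Lex r s → Lex s u → Lex r u := lex_trans
    simp only [Lex]
    grind

theorem lex_trichotomous : ∀ a b : PsiSum, Lex a b ∨ a = b ∨ Lex b a
  | nil, nil => by simp
  | nil, cons _ _ _ => by simp [Lex]
  | cons _ _ _, nil => by simp [Lex]
  | cons i a r, cons j b s => by
    have iha := lex_trichotomous a b
    have ihr := lex_trichotomous r s
    simp only [Lex, cons.injEq]
    grind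

instance : IsStrictTotalOrder PsiSum Lex where
  trichotomous a b hab hba := ((lex_trichotomous a b).resolve_left hab).resolve_right hba
  irrefl := lex_irrefl
  trans _ _ _ := lex_trans

noncomputable instance : LinearOrder PsiSum := linearOrderOfSTO Lex

theorem cons_lt_cons : cons i a r < cons j b s ↔ i < j ∨ (i = j ∧ (a < b ∨ (a = b ∧ r < s))) :=
  Iff.rfl

@[simp] theorem not_lt_nil (a : PsiSum) : ¬ a < nil := by
  cases a <;> exact id

@[simp] theorem nil_lt_cons (i : ℕ) (a r : PsiSum) : nil < cons i a r := trivial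

@[simp] theorem nil_le (a : PsiSum) : nil ≤ a := not_lt.1 (not_lt_nil a)

theorem nil_lt_iff : nil < a ↔ a ≠ nil := by cases a <;> simp

@[simp] theorem le_nil_iff : a ≤ nil ↔ a = nil :=
  ⟨fun h => le_antisymm h (nil_le a), fun h => h.le⟩

theorem cons_le_cons : cons i a r ≤ cons j b s ↔ i < j ∨ (i = j ∧ (a < b ∨ (a = b ∧ r ≤ s))) := by
  simp only [le_iff_lt_or_eq, cons_lt_cons, cons.injEq]
  tauto

@[simp] theorem cons_lt_cons_right : cons i a r < cons i a s ↔ r < s := by simp [cons_lt_cons]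

@[simp] theorem cons_le_cons_right : cons i a r ≤ cons i a s ↔ r ≤ s := by simp [cons_le_cons]

@[simp] theorem single_lt_single : cons i a nil < cons i b nil ↔ a < b := by simp [cons_lt_cons]

@[simp] theorem single_le_single : cons i a nil ≤ cons i b nil ↔ a ≤ b := by
  simp [le_iff_lt_or_eq]

theorem cons_nil_le : cons i a nil ≤ cons i a r := by simp

/-- The number of summands. -/
def length : PsiSum → ℕ
  | nil => 0
  | cons _ _ r => length r + 1

/-- Juxtaposition of sums. Unlike addition of terms it discards no summands. -/
def append : PsiSum → PsiSum → PsiSum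
  | nil, s => s
  | cons i a r, s => cons i a (append r s)

/-- The multiple `D i a · n`. -/
def replicate (i : ℕ) (a : PsiSum) : ℕ → PsiSum
  | 0 => nil
  | n + 1 => cons i a (replicate i a n)

/-- The natural number `n` as a sum of ones. -/
abbrev numeral (n : ℕ) : PsiSum := replicate 0 nil n

/-- The index of the leading summand, with junk value `0` for the empty sum. -/
def headIdx : PsiSum → ℕ
  | nil => 0
  | cons i _ _ => i

/-- The number of occurrences of principal terms; it agrees with the norm `N`. -/
def size : PsiSum → ℕ
  | nil => 0
  | cons _ a r => size a + size r + 1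

theorem headIdx_mono (h : s ≤ t) : headIdx s ≤ headIdx t := by
  cases s with
  | nil => exact Nat.zero_le _
  | cons i a r =>
    cases t with
    | nil => simp at h
    | cons j b u => rw [cons_le_cons] at h; simp only [headIdx]; omega

theorem lt_cons_of_headIdx_lt (h : headIdx s < i) : s < cons i a r := by
  cases s with
  | nil => simp
  | cons j b u => exact cons_lt_cons.2 (Or.inl h)

/-! ## Standard sums -/

/-- `HeadLE r i a` says that the leading summand of `r` is at most `D i a`. -/
def HeadLE : PsiSum → ℕ → PsiSum → Prop
  | nil, _, _ => True
  | cons j b _, i, a => j < i ∨ (j = i ∧ b ≤ a)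

/-- `CoeffsBelow i q c` is the condition `Gᵢ q < c`: the arguments of the occurrences of `D i` in
`q` that lie only under `D j` with `j ≥ i` are below `c`. -/
def CoeffsBelow (i : ℕ) : PsiSum → PsiSum → Prop
  | nil, _ => True
  | cons j a r, c => (i ≤ j → (j = i → a < c) ∧ CoeffsBelow i a c) ∧ CoeffsBelow i r c

/-- Standard sums with indices at most `L`: summands decrease weakly, and the arguments of `D i` for
`1 ≤ i < L` satisfy the collapsing condition. -/
def Standard (L : ℕ) : PsiSum → Prop
  | nil => True
  | cons i a r => i ≤ L ∧ (i = 0 → a = nil) ∧ Standard L a ∧ Standard L r ∧ HeadLE r i a ∧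
      (1 ≤ i ∧ i < L → CoeffsBelow i a a)

namespace Standard

theorem idx_le (h : Standard L (cons i a r)) : i ≤ L := h.1

theorem arg (h : Standard L (cons i a r)) : Standard L a := h.2.2.1

theorem tail (h : Standard L (cons i a r)) : Standard L r := h.2.2.2.1

theorem headLE (h : Standard L (cons i a r)) : HeadLE r i a := h.2.2.2.2.1

theorem coeffsBelow (h : Standard L (cons i a r)) : 1 ≤ i ∧ i < L → CoeffsBelow i a a :=
  h.2.2.2.2.2

theorem arg_eq_nil (h : Standard L (cons 0 a r)) : a = nil := h.2.1 rfl

theorem single (h : Standard L (cons i a r)) : Standard L (cons i a nil) :=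
  ⟨h.1, h.2.1, h.2.2.1, trivial, trivial, h.2.2.2.2.2⟩

theorem headIdx_le (h : Standard L q) : headIdx q ≤ L := by
  cases q with
  | nil => exact Nat.zero_le _
  | cons i a r => exact h.idx_le

theorem tail_lt : ∀ {r : PsiSum} {i : ℕ} {a : PsiSum}, Standard L (cons i a r) → r < cons i a r
  | nil, _, _, _ => nil_lt_cons _ _ _
  | cons j b s, i, a, h => by
    rw [cons_lt_cons]
    rcases h.headLE with hij | ⟨rfl, hba⟩
    · exact Or.inl hij
    · exact Or.inr ⟨rfl, hba.lt_or_eq.imp_right fun e => ⟨e, e ▸ h.tail.tail_lt⟩⟩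

theorem headIdx_tail_le (h : Standard L (cons i a r)) : headIdx r ≤ i :=
  headIdx_mono h.tail_lt.le

end Standard

theorem CoeffsBelow.mono : ∀ {q c d : PsiSum}, CoeffsBelow i q c → c ≤ d → CoeffsBelow i q d
  | nil, _, _, _, _ => trivial
  | cons _ _ _, _, _, h, hc =>
    ⟨fun hi => ⟨fun e => ((h.1 hi).1 e).trans_le hc, (h.1 hi).2.mono hc⟩, h.2.mono hc⟩

theorem headLE_of_lt_single (h : r < cons i a nil) : HeadLE r i a := by
  cases r with
  | nil => trivial
  | cons j b s =>
    simp only [cons_lt_cons, not_lt_nil, and_false, or_false] at h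
    exact h.imp_right fun ⟨hij, hba⟩ => ⟨hij, hba.le⟩

/-! ## Well-foundedness -/

/-- The components of `q` at level `j`, that is, the maximal subterms of `q` with leading index at
most `j`, all satisfy `P`. -/
def ComponentsIn (P : PsiSum → Prop) (j : ℕ) : PsiSum → Prop
  | nil => True
  | cons i a r => if i ≤ j then P (cons i a r) else ComponentsIn P j a ∧ ComponentsIn P j r

/-- The standard sums of leading index at most `l` whose components at all levels `j < l` lie in
`W j`. -/
def AdmissibleFor (L l : ℕ) (W : ∀ j < l, PsiSum → Prop) (q : PsiSum) : Prop :=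
  Standard L q ∧ headIdx q ≤ l ∧ ∀ j (h : j < l), ComponentsIn (W j h) j q

/-- The accessible part `W l` of the admissible sums, defined by recursion on `l` as in the
well-ordering proof for iterated inductive definitions. -/
def AccPart (L l : ℕ) (q : PsiSum) : Prop :=
  AdmissibleFor L l (fun j _ => AccPart L j) q ∧
    Acc (fun s t => AdmissibleFor L l (fun j _ => AccPart L j) s ∧ s < t) q

/-- The sums that are admissible for the accessible parts of lower level. -/
def Admissible (L l : ℕ) (q : PsiSum) : Prop := AdmissibleFor L l (fun j _ => AccPart L j) q

theorem accPart_iff :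
    AccPart L l q ↔ Admissible L l q ∧ Acc (fun s t => Admissible L l s ∧ s < t) q := by
  rw [AccPart]; rfl

theorem componentsIn_cons_of_le {P : PsiSum → Prop} (h : i ≤ j) :
    ComponentsIn P j (cons i a r) ↔ P (cons i a r) := by
  simp [ComponentsIn, h]

theorem componentsIn_cons_of_lt {P : PsiSum → Prop} (h : j < i) :
    ComponentsIn P j (cons i a r) ↔ ComponentsIn P j a ∧ ComponentsIn P j r := by
  simp [ComponentsIn, h]

namespace AccPart

theorem admissible (h : AccPart L l q) : Admissible L l q := (accPart_iff.1 h).1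

theorem standard (h : AccPart L l q) : Standard L q := h.admissible.1

theorem headIdx_le (h : AccPart L l q) : headIdx q ≤ l := h.admissible.2.1

theorem of_lt (h : AccPart L l q) (hs : Admissible L l s) (hlt : s < q) : AccPart L l s :=
  accPart_iff.2 ⟨hs, (accPart_iff.1 h).2.inv ⟨hs, hlt⟩⟩

theorem of_le (h : AccPart L l q) (hs : Admissible L l s) (hle : s ≤ q) : AccPart L l s :=
  hle.lt_or_eq.elim (h.of_lt hs) fun e => e ▸ h

theorem intro (h : Admissible L l q) (h' : ∀ s, Admissible L l s → s < q → AccPart L l s) :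
    AccPart L l q :=
  accPart_iff.2 ⟨h, Acc.intro _ fun s hs => (accPart_iff.1 (h' s hs.1 hs.2)).2⟩

theorem induction {P : ∀ q, AccPart L l q → Prop}
    (h : ∀ q hq, (∀ s hs, s < q → P s hs) → P q hq) {q : PsiSum} (hq : AccPart L l q) :
    P q hq := by
  induction (accPart_iff.1 hq).2 with
  | intro q _ ih => exact h q hq fun s hs hlt => ih s ⟨hs.admissible, hlt⟩ hs

theorem nil : AccPart L l nil :=
  intro ⟨trivial, Nat.zero_le _, fun _ _ => trivial⟩ fun _ _ hs => absurd hs (not_lt_nil _)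

theorem componentsIn (h : AccPart L j q) : ComponentsIn (AccPart L j) j q := by
  cases q with
  | nil => trivial
  | cons i a r => exact (componentsIn_cons_of_le h.headIdx_le).2 h

end AccPart

theorem ComponentsIn.accPart (h : ComponentsIn (AccPart L j) j q) (hq : headIdx q ≤ j) :
    AccPart L j q := by
  cases q with
  | nil => exact AccPart.nil
  | cons i a r => exact (componentsIn_cons_of_le hq).1 h

theorem componentsIn_head_and_tail (ho : Standard L (cons i a r)) {j : ℕ}
    (h : ∀ j' ≤ j, ComponentsIn (AccPart L j') j' (cons i a r)) :
    ComponentsIn (AccPart L j) j (cons i a nil) ∧ ComponentsIn (AccPart L j) j r := by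
  induction j using Nat.strong_induction_on with
  | _ j ih =>
  have hlower : ∀ j' < j, _ := fun j' hj' => ih j' hj' fun j'' hj'' => h j'' (by omega)
  rcases le_or_gt i j with hij | hij
  · have hcons := (h j le_rfl).accPart hij
    exact ⟨(hcons.of_le ⟨ho.single, hij, fun j' hj' => (hlower j' hj').1⟩
        cons_nil_le).componentsIn,
      (hcons.of_lt ⟨ho.tail, ho.headIdx_tail_le.trans hij, fun j' hj' => (hlower j' hj').2⟩
        ho.tail_lt).componentsIn⟩
  · have hcons := (componentsIn_cons_of_lt hij).1 (h j le_rfl)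
    exact ⟨(componentsIn_cons_of_lt hij).2 ⟨hcons.1, trivial⟩, hcons.2⟩

namespace Admissible

theorem head (h : Admissible L l (cons i a r)) : Admissible L l (cons i a nil) :=
  ⟨h.1.single, h.2.1, fun _ hj =>
    (componentsIn_head_and_tail h.1 fun j' hj' => h.2.2 j' (hj'.trans_lt hj)).1⟩

theorem tail (h : Admissible L l (cons i a r)) : Admissible L l r :=
  ⟨h.1.tail, h.1.headIdx_tail_le.trans h.2.1, fun _ hj =>
    (componentsIn_head_and_tail h.1 fun j' hj' => h.2.2 j' (hj'.trans_lt hj)).2⟩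

theorem componentsIn_arg (h : Admissible L l (cons l a r)) (hj : j < l) :
    ComponentsIn (AccPart L j) j a :=
  ((componentsIn_cons_of_lt hj).1 (h.2.2 j hj)).1

end Admissible

theorem AccPart.cons (hp : AccPart L l (.cons i a .nil)) (hr : AccPart L l r)
    (ho : Standard L (.cons i a r)) : AccPart L l (.cons i a r) := by
  induction l using Nat.strong_induction_on generalizing i a r with
  | _ l ihl =>
  generalize hpe : PsiSum.cons i a PsiSum.nil = p at hp
  induction hp using AccPart.induction generalizing i a r with
  | h p hp ihp =>
  subst hpe
  have below_head : ∀ s, Admissible L l s → s < PsiSum.cons i a .nil → AccPart L l s := by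
    intro s
    induction s with
    | nil => exact fun _ _ => AccPart.nil
    | cons i' a' r' _ ihr =>
      intro hs hlt
      have hhead := cons_nil_le.trans_lt hlt
      exact ihp _ (hp.of_lt hs.head hhead) hhead (ihr hs.tail (hs.1.tail_lt.trans hlt)) hs.1 rfl
  induction hr using AccPart.induction with
  | h r hr ihr =>
  refine AccPart.intro ⟨ho, hp.headIdx_le, fun j hj => ?_⟩ fun s hs hlt => ?_
  · have hpj := hp.admissible.2.2 j hj
    have hrj := hr.admissible.2.2 j hj
    rcases le_or_gt i j with hij | hij
    · have hrj' := hrj.accPart (ho.headIdx_tail_le.trans hij)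
      exact (ihl j hj (hpj.accPart hij) hrj' ho).componentsIn
    · exact (componentsIn_cons_of_lt hij).2 ⟨((componentsIn_cons_of_lt hij).1 hpj).1, hrj⟩
  · cases s with
    | nil => exact AccPart.nil
    | cons i' a' r' =>
      rcases cons_lt_cons.1 hlt with h | ⟨rfl, h | ⟨rfl, h⟩⟩
      · exact below_head _ hs (cons_lt_cons.2 (Or.inl h))
      · exact below_head _ hs (cons_lt_cons.2 (Or.inr ⟨rfl, Or.inl h⟩))
      · exact ihr r' (hr.of_lt hs.tail h) h hs.1

theorem AccPart.succ (hb : AccPart L l b) : AccPart L (l + 1) b := by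
  induction hb using AccPart.induction with
  | h b hb ih =>
  refine AccPart.intro ⟨hb.standard, hb.headIdx_le.trans l.le_succ, fun j hj => ?_⟩
    fun s hs hlt => ?_
  · rcases Nat.lt_succ_iff_lt_or_eq.1 hj with h | rfl
    · exact hb.admissible.2.2 j h
    · exact hb.componentsIn
  · have hsl : headIdx s ≤ l := (headIdx_mono hlt.le).trans hb.headIdx_le
    exact ih s ((hs.2.2 l l.lt_succ_self).accPart hsl) hlt

theorem AccPart.mono (h : l ≤ m) (hb : AccPart L l b) : AccPart L m b := by
  induction m, h using Nat.le_induction with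
  | base => exact hb
  | succ m _ ih => exact ih.succ

theorem accPart_of_componentsIn (hl : l ≤ L)
    (hpsi : ∀ i, l < i → i ≤ L → ∀ a, AccPart L L a → Standard L (cons i a nil) →
      AccPart L i (cons i a nil))
    (ho : Standard L b) (h : ∀ j ≤ l, ComponentsIn (AccPart L j) j b) : AccPart L L b := by
  induction b with
  | nil => exact AccPart.nil
  | cons i a r iha ihr =>
    rcases le_or_gt i l with hi | hi
    · exact ((h l le_rfl).accPart hi).mono hl
    · have hj : ∀ j ≤ l, _ := fun j hj => (componentsIn_cons_of_lt (hj.trans_lt hi)).1 (h j hj)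
      have ha := iha ho.arg fun j hjl => (hj j hjl).1
      have hr := ihr ho.tail fun j hjl => (hj j hjl).2
      exact AccPart.cons ((hpsi i hi ho.1 a ha ho.single).mono ho.1) hr ho

theorem componentsIn_of_coeffsBelow
    (ih : ∀ s, size s < n → Admissible L i s → s < cons i a nil → AccPart L i s)
    (hn : size t < n) (ho : Standard L t) (hj : ∀ j < i, ComponentsIn (AccPart L j) j t)
    (hg : CoeffsBelow i t a) : ComponentsIn (AccPart L i) i t := by
  induction t with
  | nil => trivial
  | cons i' c u ihc ihu =>
    rcases le_or_gt i' i with hi | hi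
    · rw [componentsIn_cons_of_le hi]
      refine ih _ hn ⟨ho, hi, hj⟩ (cons_lt_cons.2 (hi.lt_or_eq.imp_right ?_))
      rintro rfl
      exact ⟨rfl, Or.inl ((hg.1 le_rfl).1 rfl)⟩
    · have hj' : ∀ j < i, _ := fun j hji => (componentsIn_cons_of_lt (hji.trans hi)).1 (hj j hji)
      simp only [size] at hn
      exact (componentsIn_cons_of_lt hi).2
        ⟨ihc (by omega) ho.arg (fun j hji => (hj' j hji).1) (hg.1 hi.le).2,
          ihu (by omega) ho.tail (fun j hji => (hj' j hji).2) hg.2⟩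

-- The collapsing condition is what makes this work: the components of `b` at level `l` are below
-- `D l a` because the coefficients of `b` are below `b < a`.
theorem accPart_single_of_lt (hl : l ≤ L)
    (hpsi : ∀ i, l < i → i ≤ L → ∀ a, AccPart L L a → Standard L (cons i a nil) →
      AccPart L i (cons i a nil))
    (ha : AccPart L L a) (ho : Standard L (cons l a nil))
    (iha : ∀ b, AccPart L L b → b < a → Standard L (cons l b nil) → AccPart L l (cons l b nil))
    (ihs : ∀ s, size s ≤ size b → Admissible L l s → s < cons l a nil → AccPart L l s)
    (hb : Admissible L l (cons l b nil)) (hba : b < a) : AccPart L l (cons l b nil) := by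
  refine iha b ?_ hba hb.1
  rcases hl.lt_or_eq with hlL | rfl
  · have hl1 : 1 ≤ l := by
      rcases Nat.eq_zero_or_pos l with rfl | h
      · exact absurd (ho.arg_eq_nil ▸ hba) (not_lt_nil _)
      · exact h
    refine accPart_of_componentsIn hl hpsi hb.1.arg fun j hj => ?_
    rcases hj.lt_or_eq with hj | rfl
    · exact hb.componentsIn_arg hj
    · exact componentsIn_of_coeffsBelow (fun s hs => ihs s (Nat.lt_succ_iff.1 hs))
        (Nat.lt_succ_self _) hb.1.arg (fun _ => hb.componentsIn_arg)
        ((hb.1.coeffsBelow ⟨hl1, hlL⟩).mono hba.le)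
  · exact ha.of_lt ⟨hb.1.arg, hb.1.arg.headIdx_le, fun _ => hb.componentsIn_arg⟩ hba

theorem accPart_single (hl : l ≤ L) (ha : AccPart L L a) (ho : Standard L (cons l a nil)) :
    AccPart L l (cons l a nil) := by
  induction hn : L - l using Nat.strong_induction_on generalizing l a with
  | _ n ihn =>
  have hpsi : ∀ i, l < i → i ≤ L → ∀ a, AccPart L L a → Standard L (cons i a nil) →
      AccPart L i (cons i a nil) := fun i hi hiL a ha ho => ihn (L - i) (by omega) hiL ha ho rfl
  induction ha using AccPart.induction with
  | h a ha iha =>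
  refine AccPart.intro ⟨ho, le_rfl, fun j hj =>
    (componentsIn_cons_of_lt hj).2 ⟨ha.admissible.2.2 j (by omega), trivial⟩⟩ fun s => ?_
  induction hN : size s using Nat.strong_induction_on generalizing s with
  | _ N ihN =>
  subst hN
  intro hs hlt
  cases s with
  | nil => exact AccPart.nil
  | cons i b r =>
    refine AccPart.cons ?_ (ihN _ (by simp only [size]; omega) r rfl hs.tail
      (hs.1.tail_lt.trans hlt)) hs.1
    rcases hs.2.1.lt_or_eq with hi | hi
    · exact ((hs.head.2.2 i hi).accPart le_rfl).mono hi.le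
    · change i = l at hi
      subst hi
      have hba : b < a := by simpa using cons_nil_le.trans_lt hlt
      exact accPart_single_of_lt hl hpsi ha ho iha
        (fun s hsb => ihN _ (by simp only [size]; omega) s rfl) hs.head hba

theorem Standard.accPart (ho : Standard L b) : AccPart L L b := by
  induction b with
  | nil => exact AccPart.nil
  | cons i a r iha ihr =>
    exact AccPart.cons ((accPart_single ho.1 (iha ho.arg) ho.single).mono ho.1) (ihr ho.tail) ho

theorem Standard.induction {P : ∀ q, Standard L q → Prop}
    (h : ∀ q hq, (∀ s hs, s < q → P s hs) → P q hq) {q : PsiSum} (hq : Standard L q) :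
    P q hq := by
  induction hq.accPart using AccPart.induction with
  | h q _ ih => exact h q hq fun s hs hlt => ih s hs.accPart hlt hs

end PsiSum

namespace PsiSum

variable {i : ℕ} {a b h q r s t : PsiSum}

/-! ## Cofinality types and fundamental sequences -/

/-- The cofinality type `tp` of a sum; `Ω` and `Ω₂` are not distinguished, since the index of the
summand at which the fundamental sequence acts tells them apart. -/
inductive CofType
  | zero | succ | omega | uncountable

/-- The cofinality type `tp q`. -/
def cofType : PsiSum → CofType
  | nil => .zero
  | cons _ _ (cons j b s) => cofType (cons j b s)
  | cons 0 _ nil => .succ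
  | cons (i + 1) a nil =>
    match cofType a with
    | .zero | .uncountable => if i = 0 then .omega else .uncountable
    | .succ | .omega => .omega

/-- The iteration `z₀ = 0`, `zₙ₊₁ = ψ₀ (g zₙ)` that collapses an uncountable fundamental
sequence `g`. -/
def nestIter (g : PsiSum → PsiSum) : ℕ → PsiSum
  | 0 => nil
  | n + 1 => cons 1 (g (nestIter g n)) nil

/-- The fundamental sequence `q[x]`. For countable types only the length of `x` matters, so that
the number `n` may be passed as `numeral n`. -/
def fundSeq : PsiSum → PsiSum → PsiSum
  | nil => fun _ => nil
  | cons i a (cons j b s) => fun x => cons i a (fundSeq (cons j b s) x)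
  | cons 0 _ nil => fun _ => nil
  | cons (i + 1) a nil => fun x =>
    match cofType a with
    | .zero => x
    | .succ => replicate (i + 1) (fundSeq a nil) (length x)
    | .omega => cons (i + 1) (fundSeq a x) nil
    | .uncountable =>
      if i = 0 then cons 1 (fundSeq a (nestIter (fundSeq a) (length x))) nil
      else cons (i + 1) (fundSeq a x) nil

@[simp] theorem cofType_nil : cofType nil = .zero := rfl

theorem cofType_cons (hr : r ≠ nil) : cofType (cons i a r) = cofType r := by
  cases r with
  | nil => exact absurd rfl hr
  | cons j b s => rw [cofType]

theorem fundSeq_cons (hr : r ≠ nil) (x : PsiSum) :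
    fundSeq (cons i a r) x = cons i a (fundSeq r x) := by
  cases r with
  | nil => exact absurd rfl hr
  | cons j b s => rw [fundSeq]

@[simp] theorem cofType_one (a : PsiSum) : cofType (cons 0 a nil) = .succ := rfl

@[simp] theorem fundSeq_one (a x : PsiSum) : fundSeq (cons 0 a nil) x = nil := by rw [fundSeq]

@[simp] theorem cofType_omega : cofType (cons 1 nil nil) = .omega := rfl

@[simp] theorem fundSeq_cardinal (i : ℕ) (x : PsiSum) : fundSeq (cons (i + 1) nil nil) x = x := by
  rw [fundSeq]; rfl

theorem cofType_cardinal (hi : 2 ≤ i) : cofType (cons i nil nil) = .uncountable := by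
  obtain ⟨i, rfl⟩ := Nat.exists_eq_add_of_le' hi
  rfl

theorem cofType_psi_succ (hi : 1 ≤ i) (ha : cofType a = .succ) :
    cofType (cons i a nil) = .omega := by
  obtain ⟨i, rfl⟩ := Nat.exists_eq_add_of_le' hi
  simp [cofType, ha]

theorem fundSeq_psi_succ (hi : 1 ≤ i) (ha : cofType a = .succ) (x : PsiSum) :
    fundSeq (cons i a nil) x = replicate i (fundSeq a nil) (length x) := by
  obtain ⟨i, rfl⟩ := Nat.exists_eq_add_of_le' hi
  simp [fundSeq, ha]

theorem cofType_psi_omega (ha : cofType a = .omega) : cofType (cons (i + 1) a nil) = .omega := by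
  simp [cofType, ha]

theorem fundSeq_psi_omega (ha : cofType a = .omega) (x : PsiSum) :
    fundSeq (cons (i + 1) a nil) x = cons (i + 1) (fundSeq a x) nil := by
  simp [fundSeq, ha]

theorem cofType_psi_zero_uncountable (ha : cofType a = .uncountable) :
    cofType (cons 1 a nil) = .omega := by
  simp [cofType, ha]

theorem fundSeq_psi_zero_uncountable (ha : cofType a = .uncountable) (x : PsiSum) :
    fundSeq (cons 1 a nil) x =
      cons 1 (fundSeq a (nestIter (fundSeq a) (length x))) nil := by
  simp [fundSeq, ha]

theorem cofType_psi_uncountable (hi : 1 ≤ i) (ha : cofType a = .uncountable) :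
    cofType (cons (i + 1) a nil) = .uncountable := by
  simp [cofType, ha, Nat.one_le_iff_ne_zero.1 hi]

theorem fundSeq_psi_uncountable (hi : 1 ≤ i) (ha : cofType a = .uncountable) (x : PsiSum) :
    fundSeq (cons (i + 1) a nil) x = cons (i + 1) (fundSeq a x) nil := by
  simp [fundSeq, ha, Nat.one_le_iff_ne_zero.1 hi]

theorem cofType_eq_zero_iff : cofType q = .zero ↔ q = nil := by
  fun_induction cofType q with
  | case2 i a j b s ih => simpa using ih
  | _ => simp

/-! ## Spines -/

/-- Contexts for the summand of a term at which its fundamental sequence acts: `after i a k` puts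
the sum filled into `k` behind the summand `D i a`, and `under i k` puts it under `ψᵢ`. -/
inductive Spine
  | hole : Spine
  | after : ℕ → PsiSum → Spine → Spine
  | under : ℕ → Spine → Spine

namespace Spine

/-- The sum obtained by filling the hole of a spine. -/
def fill : Spine → PsiSum → PsiSum
  | hole, h => h
  | after i b k, h => cons i b (fill k h)
  | under i k, h => cons (i + 1) (fill k h) nil

/-- Composition of spines. -/
def comp : Spine → Spine → Spine
  | hole, l => l
  | after i b k, l => after i b (comp k l)
  | under i k, l => under i (comp k l)

/-- The hole is not inside an argument of `ψ₀`, so that an uncountable type is passed on. -/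
def AvoidsPsiZero : Spine → Prop
  | hole => True
  | after _ _ k => AvoidsPsiZero k
  | under i k => 1 ≤ i ∧ AvoidsPsiZero k

variable {k : Spine}

theorem fill_comp (k l : Spine) (h : PsiSum) : (k.comp l).fill h = k.fill (l.fill h) := by
  induction k with
  | hole => rfl
  | after i b k ih | under i k ih => simp only [comp, fill, ih]

@[simp] theorem fill_lt_fill : k.fill s < k.fill t ↔ s < t := by
  induction k with
  | hole => rfl
  | after i b k ih | under i k ih => simp only [fill, cons_lt_cons_right, single_lt_single, ih]

@[simp] theorem fill_le_fill : k.fill s ≤ k.fill t ↔ s ≤ t := by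
  rw [← not_lt, fill_lt_fill, not_lt]

theorem fill_ne_nil (hh : h ≠ nil) : k.fill h ≠ nil := by
  cases k with
  | hole => exact hh
  | after | under => exact nofun

theorem cofType_fill (hh : cofType h = .omega) : cofType (k.fill h) = .omega := by
  have hn : h ≠ nil := by rintro rfl; simp at hh
  induction k with
  | hole => exact hh
  | after i b k ih => rw [fill, cofType_cons (fill_ne_nil hn), ih]
  | under i k ih => exact cofType_psi_omega ih

theorem fundSeq_fill (hh : cofType h = .omega) (x : PsiSum) :
    fundSeq (k.fill h) x = k.fill (fundSeq h x) := by
  have hn : h ≠ nil := by rintro rfl; simp at hh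
  induction k with
  | hole => rfl
  | after i b k ih => rw [fill, fundSeq_cons (fill_ne_nil hn), ih, fill]
  | under i k ih => rw [fill, fundSeq_psi_omega (cofType_fill hh), ih, fill]

theorem AvoidsPsiZero.cofType_fill (hk : AvoidsPsiZero k) (hh : cofType h = .uncountable) :
    cofType (k.fill h) = .uncountable := by
  have hn : h ≠ nil := by rintro rfl; simp at hh
  induction k with
  | hole => exact hh
  | after i b k ih => rw [fill, cofType_cons (fill_ne_nil hn), ih hk]
  | under i k ih => exact cofType_psi_uncountable hk.1 (ih hk.2)

theorem AvoidsPsiZero.fundSeq_fill (hk : AvoidsPsiZero k) (hh : cofType h = .uncountable)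
    (x : PsiSum) : fundSeq (k.fill h) x = k.fill (fundSeq h x) := by
  have hn : h ≠ nil := by rintro rfl; simp at hh
  induction k with
  | hole => rfl
  | after i b k ih => rw [fill, fundSeq_cons (fill_ne_nil hn), ih hk, fill]
  | under i k ih => rw [fill, fundSeq_psi_uncountable hk.1 (hk.2.cofType_fill hh), ih hk.2, fill]

end Spine

open Spine

theorem exists_fill_cardinal (hq : cofType q = .uncountable) :
    ∃ (k : Spine) (i : ℕ), AvoidsPsiZero k ∧ 2 ≤ i ∧ q = k.fill (cons i nil nil) := by
  fun_induction cofType q with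
  | case2 i a j b s ih =>
    obtain ⟨k, n, hk, hn, hs⟩ := ih hq
    exact ⟨.after i a k, n, hk, hn, congrArg (cons i a) hs⟩
  | case5 i a ha hi =>
    obtain rfl := cofType_eq_zero_iff.1 ha
    exact ⟨.hole, i + 1, trivial, by omega, rfl⟩
  | case7 i a ha hi ih =>
    obtain ⟨k, n, hk, hn, hs⟩ := ih ha
    exact ⟨.under i k, n, ⟨by omega, hk⟩, hn, congrArg (cons (i + 1) · nil) hs⟩
  | _ => simp_all

theorem fundSeq_fill_cardinal {k : Spine} (hk : AvoidsPsiZero k) (hi : 2 ≤ i) (x : PsiSum) :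
    fundSeq (k.fill (cons i nil nil)) x = k.fill x := by
  obtain ⟨i, rfl⟩ := Nat.exists_eq_add_of_le' hi
  rw [hk.fundSeq_fill (cofType_cardinal hi), fundSeq_cardinal]

theorem exists_append_one (hq : cofType q = .succ) :
    ∃ s a, q = append s (cons 0 a nil) ∧ ∀ x, fundSeq q x = s := by
  fun_induction cofType q with
  | case2 i a j b s ih =>
    obtain ⟨t, c, hs, hfund⟩ := ih hq
    exact ⟨cons i a t, c, congrArg (cons i a) hs, fun x => by simp only [fundSeq, hfund]⟩
  | case3 a => exact ⟨nil, a, rfl, fundSeq_one a⟩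
  | _ => simp_all

/-- The terms of countable cofinality at which the recursion of the fundamental sequences stops:
`ω`, terms with a successor argument, and collapses `ψ₀ a` of terms of uncountable type. -/
inductive OmegaBase : PsiSum → Prop
  | omega : OmegaBase (cons 1 nil nil)
  | psi_succ (i : ℕ) (a : PsiSum) : 1 ≤ i → cofType a = .succ → OmegaBase (cons i a nil)
  | collapse (a : PsiSum) : cofType a = .uncountable → OmegaBase (cons 1 a nil)

theorem OmegaBase.cofType (h : OmegaBase t) : cofType t = .omega := by
  cases h with
  | omega => rfl
  | psi_succ i a hi ha => exact cofType_psi_succ hi ha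
  | collapse a ha => exact cofType_psi_zero_uncountable ha

theorem exists_fill_omegaBase (hq : cofType q = .omega) :
    ∃ (k : Spine) (t : PsiSum), OmegaBase t ∧ q = k.fill t := by
  fun_induction cofType q with
  | case2 i a j b s ih =>
    obtain ⟨k, t, ht, hs⟩ := ih hq
    exact ⟨.after i a k, t, ht, congrArg (cons i a) hs⟩
  | case4 a ha =>
    obtain rfl := cofType_eq_zero_iff.1 ha
    exact ⟨.hole, _, .omega, rfl⟩
  | case6 a ha => exact ⟨.hole, _, .collapse a ha, rfl⟩
  | case8 i a ha => exact ⟨.hole, _, .psi_succ (i + 1) a (by omega) ha, rfl⟩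
  | case9 i a ha ih =>
    obtain ⟨k, t, ht, hs⟩ := ih ha
    exact ⟨.under i k, t, ht, congrArg (cons (i + 1) · nil) hs⟩
  | _ => simp_all

@[simp] theorem length_replicate (i : ℕ) (a : PsiSum) (n : ℕ) : length (replicate i a n) = n := by
  induction n with
  | zero => rfl
  | succ n ih => simp only [replicate, length, ih]

theorem replicate_lt (h : a < b) (n : ℕ) : replicate i a n < cons i b nil := by
  cases n with
  | zero => simp [replicate]
  | succ n => simp [replicate, cons_lt_cons, h]

theorem headIdx_nestIter_le (g : PsiSum → PsiSum) (n : ℕ) : headIdx (nestIter g n) ≤ 1 := by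
  cases n <;> simp [nestIter, headIdx]

end PsiSum

namespace PsiSum

open Spine

variable {L i j : ℕ} {a c e q r s t x z : PsiSum} {k l : Spine}

theorem le_append (s t : PsiSum) : s ≤ append s t := by
  induction s with
  | nil => exact nil_le t
  | cons i a r _ ih => simpa only [append, cons_le_cons_right] using ih

theorem lt_append (s : PsiSum) (ht : t ≠ nil) : s < append s t := by
  induction s with
  | nil => exact nil_lt_iff.2 ht
  | cons i a r _ ih => simpa only [append, cons_lt_cons_right] using ih

theorem le_of_lt_append_one : ∀ {g s : PsiSum}, g < append s (cons 0 nil nil) → g ≤ s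
  | nil, _, _ => nil_le _
  | cons j c g, nil, h => by simp [append, cons_lt_cons] at h
  | cons j c g, cons i a r, h => by
    simp only [append, cons_lt_cons] at h
    rw [cons_le_cons]
    exact h.imp_right (And.imp_right (Or.imp_right (And.imp_right le_of_lt_append_one)))

theorem fundSeq_lt_of_succ (hq : cofType q = .succ) (x : PsiSum) : fundSeq q x < q := by
  obtain ⟨s, a, rfl, hs⟩ := exists_append_one hq
  rw [hs]
  exact lt_append s nofun

theorem fundSeq_lt_of_uncountable (hq : cofType q = .uncountable) (hx : headIdx x ≤ 1) :
    fundSeq q x < q := by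
  obtain ⟨k, i, hk, hi, rfl⟩ := exists_fill_cardinal hq
  rw [fundSeq_fill_cardinal hk hi, fill_lt_fill]
  exact lt_cons_of_headIdx_lt (by omega)

theorem OmegaBase.fundSeq_lt (ht : OmegaBase t) (n : ℕ) : fundSeq t (numeral n) < t := by
  cases ht with
  | omega =>
    rw [fundSeq_cardinal]
    exact lt_cons_of_headIdx_lt (by cases n <;> simp [replicate, headIdx])
  | psi_succ i a hi ha =>
    rw [fundSeq_psi_succ hi ha]
    exact replicate_lt (fundSeq_lt_of_succ ha _) _
  | collapse a ha =>
    rw [fundSeq_psi_zero_uncountable ha, single_lt_single]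
    exact fundSeq_lt_of_uncountable ha (headIdx_nestIter_le _ _)

theorem fundSeq_numeral_lt (hq : cofType q = .omega) (n : ℕ) : fundSeq q (numeral n) < q := by
  obtain ⟨k, t, ht, rfl⟩ := exists_fill_omegaBase hq
  rw [fundSeq_fill ht.cofType, fill_lt_fill]
  exact ht.fundSeq_lt n

namespace Spine

theorem exists_size_add_le :
    ∀ {k : Spine} {g : PsiSum}, k.fill s ≤ g → g < k.fill t →
      ∃ u, s ≤ u ∧ u < t ∧ size (k.fill nil) + size u ≤ size g
  | hole, g, hsg, hgt => ⟨g, hsg, hgt, by simp [fill, size]⟩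
  | after i b k, nil, hsg, _ => by simp [fill] at hsg
  | after i b k, cons j c g, hsg, hgt => by
    simp only [fill, cons_le_cons, cons_lt_cons] at hsg hgt
    have hji : j = i := by omega
    have hcb : c = b := by
      apply le_antisymm
      · rcases hgt with h | ⟨-, h | ⟨h, -⟩⟩
        exacts [by omega, h.le, h.le]
      · rcases hsg with h | ⟨-, h | ⟨h, -⟩⟩
        exacts [by omega, h.le, h.le]
    subst hji hcb
    simp only [lt_self_iff_false, true_and, false_or] at hsg hgt
    obtain ⟨u, hsu, hut, hsize⟩ := exists_size_add_le hsg hgt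
    exact ⟨u, hsu, hut, by simp only [fill, size]; omega⟩
  | under i k, nil, hsg, _ => by simp [fill] at hsg
  | under i k, cons j c g, hsg, hgt => by
    simp only [fill, cons_le_cons, cons_lt_cons, not_lt_nil, nil_le, and_true, and_false,
      or_false, ← le_iff_lt_or_eq] at hsg hgt
    obtain rfl : j = i + 1 := by omega
    simp only [lt_self_iff_false, true_and, false_or] at hsg hgt
    obtain ⟨u, hsu, hut, hsize⟩ := exists_size_add_le hsg hgt
    exact ⟨u, hsu, hut, by simp only [fill, size]; omega⟩

/-- Between `k.fill s` and `k.fill t` every term contains a smaller term between `s` and `t`, so an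
infinite descent in size excludes `k.fill s ≤ s`. -/
theorem lt_fill_of_lt_fill (hk : 1 ≤ size (k.fill nil)) (hst : s ≤ t) (ht : t < k.fill t) :
    s < k.fill s := by
  rcases hst.lt_or_eq with hst | rfl
  swap
  · exact ht
  by_contra! hfill
  have no_term_between : ∀ n u, size u = n → s ≤ u → ¬ u < t := by
    intro n
    induction n using Nat.strong_induction_on with
    | _ n ih =>
    intro u hn hsu hut
    obtain ⟨v, hsv, hvt, hsize⟩ := exists_size_add_le (hfill.trans hsu) (hut.trans ht)
    exact ih (size v) (by omega) v rfl hsv hvt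
  exact no_term_between _ s rfl le_rfl hst

theorem one_le_size_comp_under (k l : Spine) (i : ℕ) (x : PsiSum) :
    1 ≤ size ((k.comp (under i l)).fill x) := by
  induction k <;> simp only [comp, fill, size] <;> omega

theorem size_lt_size_comp_after (k l : Spine) (i : ℕ) (b x : PsiSum) :
    size b < size ((k.comp (after i b l)).fill x) := by
  induction k <;> simp only [comp, fill, size] <;> omega

theorem comp_assoc (k l m : Spine) : (k.comp l).comp m = k.comp (l.comp m) := by
  induction k with
  | hole => rfl
  | after i b k ih | under i k ih => simp only [comp, ih]

end Spine

theorem CoeffsBelow.of_forall_size_lt : ∀ {q c d : PsiSum}, CoeffsBelow i q c →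
    (∀ g, g < c → size g < size q → g < d) → CoeffsBelow i q d
  | nil, _, _, _, _ => trivial
  | cons j a r, c, d, h, hg =>
    ⟨fun hi => ⟨fun e => hg _ ((h.1 hi).1 e) (by simp only [size]; omega),
      (h.1 hi).2.of_forall_size_lt fun g hgc hga => hg g hgc (by simp only [size]; omega)⟩,
      h.2.of_forall_size_lt fun g hgc hgr => hg g hgc (by simp only [size]; omega)⟩

theorem CoeffsBelow.fill_of_lt (hst : s < t) (l : Spine) : ∀ k : Spine,
    CoeffsBelow 1 (l.fill t) ((k.comp l).fill t) → CoeffsBelow 1 s ((k.comp l).fill s) →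
      CoeffsBelow 1 (l.fill s) ((k.comp l).fill s) := by
  induction l with
  | hole => exact fun _ _ hs => hs
  | after i b l ih =>
    intro k ht hs
    have hb : ∀ g, g < (k.comp (after i b l)).fill t → size g ≤ size b →
        g < (k.comp (after i b l)).fill s := by
      intro g hgt hgb
      by_contra! hsg
      obtain ⟨u, -, -, hsize⟩ := exists_size_add_le hsg hgt
      have := size_lt_size_comp_after k l i b nil
      omega
    have htail := ih (k.comp (after i b hole))
    rw [comp_assoc] at htail
    exact ⟨fun hi => ⟨fun e => hb b ((ht.1 hi).1 e) le_rfl,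
      (ht.1 hi).2.of_forall_size_lt fun g hgt hgb => hb g hgt hgb.le⟩, htail ht.2 hs⟩
  | under i l ih =>
    intro k ht hs
    have harg := ih (k.comp (under i hole))
    rw [comp_assoc] at harg
    refine ⟨fun hi => ⟨fun e => ?_, harg (ht.1 hi).2 hs⟩, trivial⟩
    have hlt := (ht.1 hi).1 e
    change l.fill t < (k.comp ((under i hole).comp l)).fill t at hlt
    change l.fill s < (k.comp ((under i hole).comp l)).fill s
    rw [← comp_assoc, fill_comp] at hlt ⊢
    exact lt_fill_of_lt_fill (one_le_size_comp_under k hole i nil) (fill_le_fill.2 hst.le) hlt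

theorem HeadLE.of_le (hr : HeadLE r i a) (hs : s ≤ r) : HeadLE s i a := by
  cases s with
  | nil => trivial
  | cons j b u =>
    cases r with
    | nil => exact absurd hs (by simp)
    | cons j' b' u' =>
      simp only [HeadLE] at hr ⊢
      rw [cons_le_cons] at hs
      rcases hs with h | ⟨rfl, h | ⟨rfl, -⟩⟩
      · exact Or.inl (by omega)
      · exact hr.imp_right (And.imp_right h.le.trans)
      · exact hr

theorem Standard.tail_of_le (h : Standard L (cons i a r)) (hs : Standard L s) (hsr : s ≤ r) :
    Standard L (cons i a s) :=
  ⟨h.1, h.2.1, h.arg, hs, h.headLE.of_le hsr, h.coeffsBelow⟩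

theorem CoeffsBelow.of_fill_one : ∀ {l : Spine}, CoeffsBelow 1 (l.fill t) c → CoeffsBelow 1 t c
  | hole, h => h
  | after _ _ _, h => h.2.of_fill_one
  | under i _, h => (h.1 (Nat.le_add_left 1 i)).2.of_fill_one

theorem Standard.of_fill : ∀ {k : Spine}, Standard L (k.fill t) → Standard L t
  | hole, h => h
  | after _ _ _, h => h.tail.of_fill
  | under _ _, h => h.arg.of_fill

theorem standard_fill_of_lt (hst : s < t) (hs : Standard 2 s)
    (hcoeffs : ∀ l : Spine, CoeffsBelow 1 t (l.fill t) → CoeffsBelow 1 s (l.fill s)) :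
    ∀ {k : Spine}, Standard 2 (k.fill t) → Standard 2 (k.fill s)
  | hole, _ => hs
  | after i b k, h =>
    h.tail_of_le (standard_fill_of_lt hst hs hcoeffs h.tail) (fill_le_fill.2 hst.le)
  | under i k, h => by
    refine ⟨h.1, nofun, standard_fill_of_lt hst hs hcoeffs h.arg, trivial, trivial, fun hi => ?_⟩
    obtain rfl : i = 0 := by omega
    have hc := h.coeffsBelow hi
    exact hc.fill_of_lt hst k hole (hcoeffs k hc.of_fill_one)

theorem Spine.AvoidsPsiZero.standard_fill_of_lt (hst : s < t) (hs : Standard 2 s) :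
    ∀ {k : Spine}, AvoidsPsiZero k → Standard 2 (k.fill t) → Standard 2 (k.fill s)
  | hole, _, _ => hs
  | after i b k, hk, h =>
    h.tail_of_le (AvoidsPsiZero.standard_fill_of_lt (k := k) hst hs hk h.tail)
      (fill_le_fill.2 hst.le)
  | under i k, hk, h =>
    ⟨h.1, nofun, hk.2.standard_fill_of_lt hst hs h.arg, trivial, trivial,
      fun hi => by have := hk.1; omega⟩

theorem coeffsBelow_numeral (n : ℕ) (c : PsiSum) : CoeffsBelow 1 (numeral n) c := by
  induction n with
  | zero => trivial
  | succ n ih => exact ⟨fun h => by omega, ih⟩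

theorem headLE_replicate (i : ℕ) (a : PsiSum) (n : ℕ) : HeadLE (replicate i a n) i a := by
  cases n with
  | zero => trivial
  | succ n => exact Or.inr ⟨rfl, le_rfl⟩

theorem Standard.replicate (h : Standard L (cons i a nil)) (n : ℕ) :
    Standard L (replicate i a n) := by
  induction n with
  | zero => trivial
  | succ n ih => exact ⟨h.1, h.2.1, h.arg, ih, headLE_replicate i a n, h.coeffsBelow⟩

theorem standard_one : Standard L (cons 0 nil nil) :=
  ⟨L.zero_le, fun _ => rfl, trivial, trivial, trivial, fun h => by omega⟩

theorem CoeffsBelow.replicate (h : CoeffsBelow i (cons j a nil) c) (n : ℕ) :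
    CoeffsBelow i (replicate j a n) c := by
  induction n with
  | zero => trivial
  | succ n ih => exact ⟨h.1, ih⟩

theorem CoeffsBelow.of_append_left : ∀ {s : PsiSum}, CoeffsBelow i (append s t) c →
    CoeffsBelow i s c
  | nil, _ => trivial
  | cons _ _ _, h => ⟨h.1, h.2.of_append_left⟩

theorem Standard.of_append_left : ∀ {s : PsiSum}, Standard L (append s t) → Standard L s
  | nil, _ => trivial
  | cons _ _ s, h => h.tail_of_le h.tail.of_append_left (le_append s t)

theorem Standard.of_append_right : ∀ {s : PsiSum}, Standard L (append s t) → Standard L t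
  | nil, h => h
  | cons _ _ _, h => h.tail.of_append_right

theorem Standard.exists_append_one (h : Standard L q) (hq : cofType q = .succ) :
    ∃ s, Standard L s ∧ q = append s (cons 0 nil nil) ∧ ∀ x, fundSeq q x = s := by
  obtain ⟨s, a, rfl, hs⟩ := PsiSum.exists_append_one hq
  obtain rfl := h.of_append_right.arg_eq_nil
  exact ⟨s, h.of_append_left, rfl, hs⟩

/-! ## Fundamental sequences of standard sums are standard -/

theorem Standard.fundSeq_of_succ (h : Standard L q) (hq : cofType q = .succ) (x : PsiSum) :
    Standard L (fundSeq q x) := by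
  obtain ⟨s, hs, -, hx⟩ := h.exists_append_one hq
  rwa [hx]

theorem Standard.psi_fundSeq_of_succ (h : Standard L (cons i a nil)) (ha : cofType a = .succ) :
    Standard L (cons i (fundSeq a nil) nil) := by
  obtain ⟨s, hs, rfl, hx⟩ := h.arg.exists_append_one ha
  rw [hx]
  refine ⟨h.1, ?_, hs, trivial, trivial, fun hi => ?_⟩
  · rintro rfl
    rw [h.arg_eq_nil, cofType_nil] at ha
    cases ha
  · refine (h.coeffsBelow hi).of_append_left.of_forall_size_lt fun g hg hsize => ?_
    refine (le_of_lt_append_one hg).lt_of_ne ?_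
    rintro rfl
    exact hsize.false

theorem nestIter_lt_succ (he : cofType e = .uncountable) (n : ℕ) :
    nestIter (fundSeq e) n < nestIter (fundSeq e) (n + 1) := by
  obtain ⟨k, i, hk, hi, rfl⟩ := exists_fill_cardinal he
  induction n with
  | zero => simp [nestIter]
  | succ n ih =>
    rw [nestIter, nestIter, single_lt_single, fundSeq_fill_cardinal hk hi,
      fundSeq_fill_cardinal hk hi, fill_lt_fill]
    exact ih

theorem Standard.psi_zero_fill (hk : AvoidsPsiZero k) (hi : 2 ≤ i)
    (h : Standard 2 (cons 1 (k.fill (cons i nil nil)) nil)) (hz : headIdx z ≤ 1)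
    (hsz : Standard 2 z) (hcz : CoeffsBelow 1 z (k.fill z)) :
    Standard 2 (cons 1 (k.fill z) nil) := by
  have hlt : z < cons i nil nil := lt_cons_of_headIdx_lt (by omega)
  exact ⟨one_le_two, nofun, hk.standard_fill_of_lt hlt hsz h.arg, trivial, trivial,
    fun _ => (h.coeffsBelow (by omega)).fill_of_lt hlt k hole hcz⟩

theorem Standard.nestIter_succ (he : cofType e = .uncountable) (h : Standard 2 (cons 1 e nil))
    (n : ℕ) : Standard 2 (nestIter (fundSeq e) (n + 1)) := by
  have hincr := nestIter_lt_succ he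
  obtain ⟨k, i, hk, hi, rfl⟩ := exists_fill_cardinal he
  set z := nestIter (fundSeq (k.fill (cons i nil nil)))
  have hz : ∀ n, z (n + 1) = cons 1 (k.fill (z n)) nil := fun n => by
    rw [← fundSeq_fill_cardinal hk hi]; rfl
  induction n with
  | zero =>
    rw [hz]
    exact h.psi_zero_fill hk hi (Nat.zero_le _) trivial trivial
  | succ n ih =>
    rw [hz]
    refine h.psi_zero_fill hk hi (headIdx_nestIter_le _ _) ih ?_
    have hlt := fill_lt_fill (k := k).2 (hincr n)
    rw [hz n] at ih ⊢
    rw [hz n] at hlt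
    exact ⟨fun _ => ⟨fun _ => hlt, (ih.coeffsBelow (by omega)).mono hlt.le⟩, trivial⟩

theorem OmegaBase.standard_fundSeq (ht : OmegaBase t) (h : Standard 2 t) (n : ℕ) :
    Standard 2 (fundSeq t (numeral n)) := by
  cases ht with
  | omega =>
    rw [fundSeq_cardinal]
    exact standard_one.replicate n
  | psi_succ i a hi ha =>
    rw [fundSeq_psi_succ hi ha]
    exact (h.psi_fundSeq_of_succ ha).replicate _
  | collapse a ha =>
    rw [fundSeq_psi_zero_uncountable ha]
    exact h.nestIter_succ ha _

theorem CoeffsBelow.psi_fundSeq_of_succ (h : Standard L (cons i a nil))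
    (ha : cofType a = .succ) (hi : 1 ≤ i)
    (hc : CoeffsBelow 1 (cons i a nil) (l.fill (cons i a nil))) :
    CoeffsBelow 1 (cons i (fundSeq a nil) nil) (l.fill (cons i (fundSeq a nil) nil)) := by
  obtain ⟨i, rfl⟩ := Nat.exists_eq_add_of_le' hi
  obtain ⟨s, -, rfl, hs⟩ := h.arg.exists_append_one ha
  rw [hs]
  have hfill : ∀ x, l.fill (cons (i + 1) x nil) = (l.comp (under i hole)).fill x :=
    fun x => (fill_comp l (under i hole) x).symm
  rw [hfill] at hc ⊢
  refine ⟨fun _ => ⟨fun e => ?_, ?_⟩, trivial⟩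
  · exact lt_fill_of_lt_fill (one_le_size_comp_under l hole i nil) (le_append s _)
      ((hc.1 hi).1 e)
  · refine (hc.1 hi).2.of_append_left.of_forall_size_lt fun g hg hgs => ?_
    by_contra! hsg
    obtain ⟨u, hsu, hus, hsize⟩ := exists_size_add_le hsg hg
    obtain rfl := le_antisymm (le_of_lt_append_one hus) hsu
    omega

theorem OmegaBase.coeffsBelow_fundSeq (ht : OmegaBase t) (h : Standard 2 t) (n : ℕ)
    (hc : CoeffsBelow 1 t (l.fill t)) :
    CoeffsBelow 1 (fundSeq t (numeral n)) (l.fill (fundSeq t (numeral n))) := by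
  cases ht with
  | omega =>
    rw [fundSeq_cardinal]
    exact coeffsBelow_numeral n _
  | psi_succ i a hi ha =>
    rw [fundSeq_psi_succ hi ha, length_replicate]
    cases n with
    | zero => trivial
    | succ n =>
      refine CoeffsBelow.replicate ((hc.psi_fundSeq_of_succ h ha hi).mono ?_) _
      exact fill_le_fill.2 (by simp [PsiSum.replicate])
  | collapse a ha =>
    have hiter := h.nestIter_succ ha n
    rw [fundSeq_psi_zero_uncountable ha, length_replicate]
    rw [nestIter] at hiter
    have hfill : ∀ x, l.fill (cons 1 x nil) = (l.comp (under 0 hole)).fill x :=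
      fun x => (fill_comp l (under 0 hole) x).symm
    rw [hfill] at hc ⊢
    have hlt := lt_fill_of_lt_fill (one_le_size_comp_under l hole 0 nil)
      (fundSeq_lt_of_uncountable ha (headIdx_nestIter_le (fundSeq a) n)).le ((hc.1 le_rfl).1 rfl)
    exact ⟨fun _ => ⟨fun _ => hlt, (hiter.coeffsBelow (by omega)).mono hlt.le⟩, trivial⟩

theorem Standard.fundSeq_of_omega (h : Standard 2 q) (hq : cofType q = .omega) (n : ℕ) :
    Standard 2 (fundSeq q (numeral n)) := by
  obtain ⟨k, t, ht, rfl⟩ := exists_fill_omegaBase hq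
  rw [fundSeq_fill ht.cofType]
  exact standard_fill_of_lt (ht.fundSeq_lt n) (ht.standard_fundSeq h.of_fill n)
    (fun l => ht.coeffsBelow_fundSeq h.of_fill n) h

end PsiSum

namespace PsiSum

open Spine

variable {L i m n : ℕ} {a b c d e q r s t u y : PsiSum}

/-! ## Nestedness of fundamental sequences -/

/-- The arguments at which the values `d[y]` are compared: for countable cofinality only positive
numerals. -/
def PositiveAt (d y : PsiSum) : Prop := cofType d = .omega → ∃ n, y = numeral (n + 1)

/-- The Bachmann property for the interval between `s` and `t`, restricted to terms with
coefficients below `c`. -/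
def Nested (c s t : PsiSum) : Prop :=
  ∀ u, Standard 2 u → CoeffsBelow 1 u c → s < u → u < t → ∀ y, PositiveAt u y → s ≤ fundSeq u y

theorem positiveAt_cons (hr : r ≠ nil) : PositiveAt (cons i a r) y ↔ PositiveAt r y := by
  rw [PositiveAt, PositiveAt, cofType_cons hr]

theorem single_le_fundSeq_single (hi : 1 ≤ i) (hab : a < b)
    (h : ∀ y, PositiveAt b y → a ≤ fundSeq b y) (hy : PositiveAt (cons i b nil) y) :
    cons i a nil ≤ fundSeq (cons i b nil) y := by
  obtain ⟨i, rfl⟩ := Nat.exists_eq_add_of_le' hi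
  cases hb : cofType b with
  | zero => exact absurd (cofType_eq_zero_iff.1 hb ▸ hab) (not_lt_nil _)
  | succ =>
    obtain ⟨n, rfl⟩ := hy (cofType_psi_succ hi hb)
    rw [fundSeq_psi_succ hi hb, length_replicate, replicate, cons_le_cons]
    exact Or.inr ⟨rfl, (h nil fun h' => by simp [hb] at h').lt_or_eq.imp_right
      fun e => ⟨e, nil_le _⟩⟩
  | omega =>
    obtain ⟨n, rfl⟩ := hy (cofType_psi_omega hb)
    rw [fundSeq_psi_omega hb, single_le_single]
    exact h _ fun _ => ⟨n, rfl⟩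
  | uncountable =>
    have hle : ∀ x, a ≤ fundSeq b x := fun x => h x fun h' => by simp [hb] at h'
    rcases Nat.eq_zero_or_pos i with rfl | hi0
    · rw [fundSeq_psi_zero_uncountable hb, single_le_single]
      exact hle _
    · rw [fundSeq_psi_uncountable hi0 hb, single_le_single]
      exact hle _

theorem single_le_fundSeq (hi : 1 ≤ i) (hab : cons i a nil < cons i b r)
    (h : a < b → ∀ y, PositiveAt b y → a ≤ fundSeq b y) (hy : PositiveAt (cons i b r) y) :
    cons i a nil ≤ fundSeq (cons i b r) y := by
  rcases eq_or_ne r nil with rfl | hr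
  · rw [single_lt_single] at hab
    exact single_le_fundSeq_single hi hab (h hab) hy
  · rw [cons_lt_cons] at hab
    rw [fundSeq_cons hr, cons_le_cons]
    exact hab.imp_right (And.imp_right (Or.imp_right (And.imp_right fun _ => nil_le _)))

theorem Nested.fill (h : Nested c s t) : ∀ k : Spine, Nested c (k.fill s) (k.fill t)
  | hole => h
  | after i b k => by
    rintro (_ | ⟨j, b', d⟩) hstd hcoeffs hsd hdt y hy
    · exact absurd hsd (not_lt_nil _)
    simp only [Spine.fill] at hsd hdt ⊢
    obtain ⟨rfl, rfl⟩ : j = i ∧ b' = b := by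
      rw [cons_lt_cons] at hsd hdt
      obtain rfl : j = i := by omega
      simp only [lt_self_iff_false, true_and, false_or] at hsd hdt
      exact ⟨rfl, le_antisymm (hdt.elim le_of_lt fun h => h.1.le)
        (hsd.elim le_of_lt fun h => h.1.le)⟩
    rw [cons_lt_cons_right] at hsd hdt
    have hd : d ≠ nil := (nil_le _).trans_lt hsd |> nil_lt_iff.1
    rw [fundSeq_cons hd, cons_le_cons_right]
    exact h.fill k d hstd.tail hcoeffs.2 hsd hdt y ((positiveAt_cons hd).1 hy)
  | under i k => by
    rintro (_ | ⟨j, d, r⟩) hstd hcoeffs hsd hdt y hy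
    · exact absurd hsd (not_lt_nil _)
    simp only [Spine.fill] at hsd hdt ⊢
    obtain rfl : j = i + 1 := by
      rw [cons_lt_cons] at hsd hdt
      omega
    have hdt' : d < k.fill t := by simpa [cons_lt_cons] using hdt
    exact single_le_fundSeq (by omega) hsd
      (fun hsd' => h.fill k d hstd.arg (hcoeffs.1 (by omega)).2 hsd' hdt') hy

theorem Nested.psi_zero (h : Nested e a e) : Nested e (cons 1 a nil) (cons 2 nil nil) := by
  rintro (_ | ⟨j, d, r⟩) hstd hcoeffs hsd hdt y hy
  · exact absurd hsd (not_lt_nil _)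
  obtain rfl : j = 1 := by
    simp only [cons_lt_cons, not_lt_nil, and_false, or_false] at hsd hdt
    omega
  have hd := hcoeffs.1 le_rfl
  exact single_le_fundSeq le_rfl hsd (fun had => h d hstd.arg hd.2 had (hd.1 rfl)) hy

theorem nested_nestIter (he : cofType e = .uncountable) (hstd : Standard 2 e) (n : ℕ) :
    Nested e (nestIter (fundSeq e) n) (cons 2 nil nil) := by
  obtain ⟨k, i, hk, hi, rfl⟩ := exists_fill_cardinal he
  obtain rfl : i = 2 := le_antisymm hstd.of_fill.idx_le hi
  induction n with
  | zero => exact fun _ _ _ _ _ _ _ => nil_le _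
  | succ n ih =>
    rw [nestIter, fundSeq_fill_cardinal hk hi]
    exact (ih.fill k).psi_zero

theorem coeffsBelow_cons_three : ∀ {d : PsiSum}, Standard 2 d → CoeffsBelow 1 d (cons 3 nil nil)
  | nil, _ => trivial
  | cons _ _ _, h =>
    ⟨fun _ => ⟨fun _ => lt_cons_of_headIdx_lt (Nat.lt_succ_of_le h.arg.headIdx_le),
      coeffsBelow_cons_three h.arg⟩, coeffsBelow_cons_three h.tail⟩

theorem Standard.coeffsBelow_of_lt : ∀ {v : PsiSum}, Standard 2 v → v < cons 1 e nil →
    CoeffsBelow 1 v e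
  | nil, _, _ => trivial
  | cons j d r, h, hlt => by
    refine ⟨fun hj => ?_, h.tail.coeffsBelow_of_lt (h.tail_lt.trans hlt)⟩
    simp only [cons_lt_cons, not_lt_nil, and_false, or_false] at hlt
    obtain rfl : j = 1 := by omega
    have hd : d < e := by simpa using hlt
    exact ⟨fun _ => hd, (h.coeffsBelow (by omega)).mono hd.le⟩

theorem replicate_le_fundSeq (hab : a < b) (hmax : ∀ g, g < b → g ≤ a) (hu : Standard 2 u)
    (hlt : replicate i a n < u) (hub : u < cons i b nil) (y : PsiSum) :
    replicate i a n ≤ fundSeq u y := by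
  induction n generalizing u with
  | zero => exact nil_le _
  | succ n ih =>
    cases u with
    | nil => exact absurd hlt (not_lt_nil _)
    | cons j d r =>
      simp only [replicate] at hlt ⊢
      obtain rfl : j = i := by
        rw [cons_lt_cons] at hlt hub
        omega
      have hda : d ≤ a := hmax d (by simpa [cons_lt_cons] using hub)
      simp only [cons_lt_cons, lt_self_iff_false, hda.not_gt, true_and, false_or] at hlt
      obtain ⟨rfl, hlt⟩ := hlt
      rw [fundSeq_cons (nil_lt_iff.1 ((nil_le _).trans_lt hlt)), cons_le_cons_right]
      exact ih hu.tail hlt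
        (hu.tail_lt.trans_le (cons_le_cons.2 (Or.inr ⟨rfl, Or.inl hab⟩)))

theorem Standard.eq_numeral : ∀ {q : PsiSum}, Standard L q → headIdx q = 0 → q = numeral (length q)
  | nil, _, _ => rfl
  | cons i a r, h, h0 => by
    obtain rfl : i = 0 := h0
    rw [h.arg_eq_nil]
    exact congrArg (cons 0 nil) (h.tail.eq_numeral (Nat.le_zero.1 h.headIdx_tail_le))

theorem numeral_succ (n : ℕ) : numeral (n + 1) = cons 0 nil (numeral n) := rfl

theorem cofType_numeral_succ (n : ℕ) : cofType (numeral (n + 1)) = .succ := by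
  induction n with
  | zero => rfl
  | succ n ih => rw [numeral_succ, cofType_cons (by simp [replicate]), ih]

theorem fundSeq_numeral_succ (n : ℕ) (x : PsiSum) : fundSeq (numeral (n + 1)) x = numeral n := by
  induction n with
  | zero => exact fundSeq_one nil x
  | succ n ih => rw [numeral_succ, fundSeq_cons (by simp [replicate]), ih]; rfl

theorem replicate_le_replicate (h : m ≤ n) : replicate i a m ≤ replicate i a n := by
  induction m generalizing n with
  | zero => exact nil_le _
  | succ m ih =>
    obtain ⟨n, rfl⟩ := Nat.exists_eq_add_of_le' (Nat.succ_pos m |>.trans_le h)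
    exact cons_le_cons_right.2 (ih (Nat.le_of_succ_le_succ h))

theorem numeral_lt_numeral : numeral m < numeral n ↔ m < n := by
  induction m generalizing n with
  | zero => cases n <;> simp [replicate]
  | succ m ih =>
    cases n with
    | zero => simp [replicate]
    | succ n => rw [numeral_succ, numeral_succ, cons_lt_cons_right, ih, Nat.succ_lt_succ_iff]

theorem numeral_le_numeral : numeral m ≤ numeral n ↔ m ≤ n := by
  rw [← not_lt, numeral_lt_numeral, not_lt]

theorem Standard.le_fundSeq_of_lt (h : Standard L a) (ha : cofType a = .succ) (hb : b < a) :
    b ≤ fundSeq a nil := by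
  obtain ⟨s, -, rfl, hs⟩ := h.exists_append_one ha
  rw [hs]
  exact le_of_lt_append_one hb

theorem OmegaBase.nested (ht : OmegaBase t) (h : Standard 2 t) (n : ℕ) :
    Nested c (fundSeq t (numeral n)) t := by
  intro u hu _ hlt hut y hy
  cases ht with
  | omega =>
    rw [fundSeq_cardinal] at hlt ⊢
    have hu0 : headIdx u = 0 := by
      rcases u with _ | ⟨i, a, r⟩
      · rfl
      · simpa [cons_lt_cons, headIdx] using hut
    rw [hu.eq_numeral hu0] at hlt ⊢
    rw [numeral_lt_numeral] at hlt
    obtain ⟨m, hm⟩ := Nat.exists_eq_add_of_le' (Nat.zero_lt_of_lt hlt)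
    rw [hm, fundSeq_numeral_succ, numeral_le_numeral]
    omega
  | psi_succ i a hi ha =>
    rw [fundSeq_psi_succ hi ha] at hlt ⊢
    exact replicate_le_fundSeq (fundSeq_lt_of_succ ha _) (fun _ => h.arg.le_fundSeq_of_lt ha) hu hlt
      hut y
  | collapse e he =>
    have hnested := nested_nestIter he h.arg (n + 1)
    rw [fundSeq_psi_zero_uncountable he, length_replicate] at hlt ⊢
    exact hnested u hu (hu.coeffsBelow_of_lt hut) hlt
      (hut.trans (cons_lt_cons.2 (Or.inl one_lt_two))) y hy

theorem Standard.nested (h : Standard 2 q) (hq : cofType q = .omega) (n : ℕ) (hd : Standard 2 d)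
    (hlt : fundSeq q (numeral n) < d) (hdq : d < q) (hy : PositiveAt d y) :
    fundSeq q (numeral n) ≤ fundSeq d y := by
  obtain ⟨k, t, ht, rfl⟩ := exists_fill_omegaBase hq
  rw [fundSeq_fill ht.cofType] at hlt ⊢
  exact (ht.nested h.of_fill n).fill k d hd (coeffsBelow_cons_three hd) hlt hdq y hy

theorem fundSeq_numeral_mono (hq : cofType q = .omega) (hmn : m ≤ n) :
    fundSeq q (numeral m) ≤ fundSeq q (numeral n) := by
  obtain ⟨k, t, ht, rfl⟩ := exists_fill_omegaBase hq
  rw [fundSeq_fill ht.cofType, fundSeq_fill ht.cofType, fill_le_fill]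
  cases ht with
  | omega =>
    simp only [fundSeq_cardinal]
    exact replicate_le_replicate hmn
  | psi_succ i a hi ha =>
    simp only [fundSeq_psi_succ hi ha, length_replicate]
    exact replicate_le_replicate hmn
  | collapse e he =>
    obtain ⟨k, i, hk, hi, rfl⟩ := exists_fill_cardinal he
    simp only [fundSeq_psi_zero_uncountable he, length_replicate, single_le_single]
    simp only [fundSeq_fill_cardinal hk hi, fill_le_fill]
    exact monotone_nat_of_le_succ (fun n => (nestIter_lt_succ he n).le) hmn

end PsiSum

namespace PsiSum

variable {i : ℕ} {a q r x : PsiSum}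

/-! ## Sums as terms -/

/-- The principal term `D i t`, that is `1` for `i = 0` and `ψᵢ₋₁ t` otherwise. -/
def collapse : ℕ → Tm → Tm
  | 0, _ => .one
  | i + 1, t => .psi i t

/-- The term denoted by a sum. -/
def toTm : PsiSum → Tm
  | nil => .zero
  | cons i a r => if r = nil then collapse i (toTm a) else .add (collapse i (toTm a)) (toTm r)

/-- The sums on which `toTm` is injective: the argument of `D 0`, which it forgets, is `0`. Only
`ψ₀` and `ψ₁` are admitted. -/
def IsCode : PsiSum → Prop
  | nil => True
  | cons i a r => i ≤ 2 ∧ (i = 0 → a = nil) ∧ IsCode a ∧ IsCode r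

theorem Standard.isCode : ∀ {q : PsiSum}, Standard 2 q → IsCode q
  | nil, _ => trivial
  | cons _ _ _, h => ⟨h.1, h.2.1, h.arg.isCode, h.tail.isCode⟩

theorem IsCode.single (h : IsCode (cons i a r)) : IsCode (cons i a nil) :=
  ⟨h.1, h.2.1, h.2.2.1, trivial⟩

theorem toTm_single (i : ℕ) (a : PsiSum) : toTm (cons i a nil) = collapse i (toTm a) := by
  simp [toTm]

theorem toTm_cons (h : r ≠ nil) :
    toTm (cons i a r) = .add (collapse i (toTm a)) (toTm r) := by
  simp [toTm, h]

theorem collapse_ne_zero (i : ℕ) (t : Tm) : collapse i t ≠ .zero := by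
  cases i <;> simp [collapse]

theorem hd_collapse (i : ℕ) (t : Tm) : (collapse i t).hd = collapse i t := by cases i <;> rfl

theorem tl_collapse (i : ℕ) (t : Tm) : (collapse i t).tl = .zero := by cases i <;> rfl

theorem toTm_eq_zero_iff : toTm q = .zero ↔ q = nil := by
  cases q with
  | nil => simp [toTm]
  | cons i a r =>
    simp only [toTm]
    split_ifs <;> simp [collapse_ne_zero]

theorem eq_cons_of_toTm_eq_one (h : toTm q = .one) : ∃ a, q = cons 0 a nil := by
  rcases q with _ | ⟨_ | i, a, r⟩
  · simp [toTm] at h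
  all_goals
    simp only [toTm, collapse] at h
    split_ifs at h with hr
  exact ⟨a, by rw [hr]⟩

theorem eq_cons_of_toTm_eq_psi {u : Tm} (h : toTm q = .psi i u) :
    ∃ a, q = cons (i + 1) a nil ∧ toTm a = u := by
  rcases q with _ | ⟨_ | j, a, r⟩
  · simp [toTm] at h
  all_goals
    simp only [toTm, collapse] at h
    split_ifs at h with hr
  obtain ⟨rfl, rfl⟩ := Tm.psi.inj h
  exact ⟨a, by rw [hr], rfl⟩

theorem hd_toTm (i : ℕ) (a r : PsiSum) : (toTm (cons i a r)).hd = toTm (cons i a nil) := by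
  by_cases h : r = nil
  · rw [h, toTm_single, hd_collapse]
  · rw [toTm_cons h, toTm_single, Tm.hd]

theorem tl_toTm (i : ℕ) (a r : PsiSum) : (toTm (cons i a r)).tl = toTm r := by
  by_cases h : r = nil
  · rw [h, toTm_single, tl_collapse, toTm]
  · rw [toTm_cons h, Tm.tl]

theorem toTm_inj : ∀ {q r : PsiSum}, IsCode q → IsCode r → toTm q = toTm r → q = r
  | nil, _, _, _, h => (toTm_eq_zero_iff.1 h.symm).symm
  | cons _ _ _, nil, _, _, h => toTm_eq_zero_iff.1 h
  | cons i a s, cons j b t, hq, hr, h => by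
    have hhd : collapse i (toTm a) = collapse j (toTm b) := by
      simpa only [hd_toTm, toTm_single] using congrArg Tm.hd h
    have hst : s = t := toTm_inj hq.2.2.2 hr.2.2.2 (by simpa only [tl_toTm] using congrArg Tm.tl h)
    rcases i with _ | i <;> rcases j with _ | j <;> simp only [collapse, reduceCtorEq] at hhd
    · rw [hq.2.1 rfl, hr.2.1 rfl, hst]
    · obtain ⟨rfl, hab⟩ := Tm.psi.inj hhd
      rw [toTm_inj hq.2.2.1 hr.2.2.1 hab, hst]

theorem not_tLt_zero {u : Tm} : ¬ TLt u .zero := by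
  suffices ∀ {u v}, TLt u v → v ≠ .zero from fun h => this h rfl
  intro u v h
  induction h with
  | zero_lt h => exact h
  | lex_hd _ _ ih | lex_tl _ _ _ ih => rintro rfl; exact ih rfl
  | _ => simp

theorem lt_of_tLt_toTm (hq : IsCode q) (hr : IsCode r) (h : TLt (toTm q) (toTm r)) : q < r := by
  generalize hu : toTm q = u, hv : toTm r = v at h
  induction h generalizing q r with
  | zero_lt h =>
    rw [toTm_eq_zero_iff.1 hu, nil_lt_iff]
    rintro rfl
    exact h hv.symm
  | one_lt_psi0 =>
    obtain ⟨a, rfl⟩ := eq_cons_of_toTm_eq_one hu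
    obtain ⟨b, rfl, -⟩ := eq_cons_of_toTm_eq_psi hv
    exact cons_lt_cons.2 (Or.inl one_pos)
  | psi_mono _ ih =>
    obtain ⟨a, rfl, rfl⟩ := eq_cons_of_toTm_eq_psi hu
    obtain ⟨b, rfl, rfl⟩ := eq_cons_of_toTm_eq_psi hv
    exact single_lt_single.2 (ih hq.2.2.1 hr.2.2.1 rfl rfl)
  | psi_lt hij =>
    obtain ⟨a, rfl, -⟩ := eq_cons_of_toTm_eq_psi hu
    obtain ⟨b, rfl, -⟩ := eq_cons_of_toTm_eq_psi hv
    exact cons_lt_cons.2 (Or.inl (Nat.succ_lt_succ hij))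
  | lex_hd _ h ih =>
    subst hu hv
    rcases q with _ | ⟨i, a, q⟩ <;> rcases r with _ | ⟨j, b, r⟩
    · exact absurd h not_tLt_zero
    · exact nil_lt_cons ..
    · exact absurd h not_tLt_zero
    · have := cons_lt_cons.1 (ih hq.single hr.single (hd_toTm ..).symm (hd_toTm ..).symm)
      exact cons_lt_cons.2 (this.imp_right (And.imp_right fun h => h.imp_right
        fun h => absurd h.2 (not_lt_nil _)))
  | lex_tl _ hhd h ih =>
    subst hu hv
    rcases q with _ | ⟨i, a, q⟩ <;> rcases r with _ | ⟨j, b, r⟩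
    · exact absurd h not_tLt_zero
    · exact nil_lt_cons ..
    · exact absurd h not_tLt_zero
    · rw [hd_toTm, hd_toTm] at hhd
      obtain ⟨rfl, rfl, -⟩ := cons.inj (toTm_inj hq.single hr.single hhd)
      exact cons_lt_cons_right.2 (ih hq.2.2.2 hr.2.2.2 (tl_toTm ..).symm (tl_toTm ..).symm)

theorem not_tLt_toTm_self (h : IsCode q) : ¬ TLt (toTm q) (toTm q) :=
  fun hlt => lt_irrefl _ (lt_of_tLt_toTm h h hlt)

/-- The term by which `tp` encodes a cofinality type; for sums of level `2` the only uncountable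
type is `Ω`. -/
def CofType.toTm : CofType → Tm
  | .zero => .zero
  | .succ => .one
  | .omega => omegaT
  | .uncountable => OmegaT

theorem tp_toTm : ∀ {q : PsiSum}, IsCode q → tp (toTm q) = (cofType q).toTm
  | nil, _ => rfl
  | cons i a r, h => by
    by_cases hr : r = nil
    · subst hr
      rw [toTm_single]
      cases i with
      | zero => rfl
      | succ i =>
        simp only [collapse, tp, cofType, tp_toTm h.2.2.1]
        obtain rfl | rfl : i = 0 ∨ i = 1 := by have := h.1; omega
        all_goals cases cofType a <;> simp [CofType.toTm, omegaT, OmegaT, Omega2T]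
    · rw [toTm_cons hr, tp, tp_toTm h.2.2.2, cofType_cons hr]

theorem toTm_numeral_add_two (n : ℕ) :
    toTm (numeral (n + 2)) = .add .one (toTm (numeral (n + 1))) := by
  rw [numeral_succ, toTm_cons (by simp [replicate])]
  rfl

theorem natToTm_eq_toTm : ∀ n, natToTm n = toTm (numeral n)
  | 0 => rfl
  | 1 => rfl
  | n + 2 => by rw [natToTm, natToTm_eq_toTm (n + 1), toTm_numeral_add_two]

theorem tmToNat_toTm_numeral : ∀ n, tmToNat (toTm (numeral n)) = n
  | 0 => rfl
  | 1 => rfl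
  | n + 2 => by
    rw [toTm_numeral_add_two, tmToNat, tmToNat_toTm_numeral (n + 1), tmToNat, Nat.add_comm]

theorem addT_collapse (i : ℕ) (t : Tm) {u : Tm} (hu : u ≠ .zero) :
    Tm.addT (collapse i t) u =
      if TLt (collapse i t) u.hd then u else .add (collapse i t) u := by
  cases i <;> cases u <;> simp_all only [collapse, Tm.addT, ne_eq, not_true_eq_false] <;> congr

theorem addT_add (t u : Tm) {v : Tm} (hv : v ≠ .zero) :
    Tm.addT (.add t u) v = if TLt t v.hd then v else .add t (Tm.addT u v) := by
  cases v <;> simp_all only [Tm.addT, ne_eq, not_true_eq_false]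

theorem addT_collapse_toTm (h : IsCode (cons i a r)) (hr : HeadLE r i a) :
    Tm.addT (collapse i (toTm a)) (toTm r) = toTm (cons i a r) := by
  cases r with
  | nil => rw [toTm_single]; cases i <;> rfl
  | cons j b s =>
    have hnot : ¬ TLt (toTm (cons i a nil)) (toTm (cons j b nil)) := fun hlt =>
      (lt_of_tLt_toTm h.single h.2.2.2.single hlt).not_ge
        (cons_le_cons.2 (hr.imp_right (And.imp_right fun h => h.lt_or_eq.imp_right
          fun e => ⟨e, le_rfl⟩)))
    rw [addT_collapse _ _ (toTm_eq_zero_iff.not.2 (by simp)), hd_toTm, ← toTm_single, if_neg hnot,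
      toTm_single, toTm_cons (r := cons j b s) (by simp)]

theorem IsCode.replicate (h : IsCode (cons i a nil)) : ∀ n, IsCode (replicate i a n)
  | 0 => trivial
  | n + 1 => ⟨h.1, h.2.1, h.2.2.1, h.replicate n⟩

theorem addT_toTm_replicate (h : IsCode (cons i a nil)) (n : ℕ) :
    Tm.addT (toTm (replicate i a n)) (toTm (cons i a nil)) = toTm (replicate i a (n + 1)) := by
  have hne : toTm (cons i a nil) ≠ .zero := toTm_eq_zero_iff.not.2 (by simp)
  have hhd : (toTm (cons i a nil)).hd = collapse i (toTm a) := by rw [hd_toTm, toTm_single]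
  have hirrefl : ¬ TLt (collapse i (toTm a)) (collapse i (toTm a)) := by
    rw [← toTm_single]
    exact not_tLt_toTm_self h
  induction n with
  | zero => simp [PsiSum.replicate, toTm, Tm.addT]
  | succ n ih =>
    cases n with
    | zero =>
      simp only [PsiSum.replicate]
      rw [toTm_single, addT_collapse _ _ (collapse_ne_zero _ _), hd_collapse, if_neg hirrefl,
        toTm_cons (by simp), toTm_single]
    | succ n =>
      rw [PsiSum.replicate, toTm_cons (by simp [PsiSum.replicate]), addT_add _ _ hne, hhd,
        if_neg hirrefl, ih,
        ← toTm_cons (by simp [PsiSum.replicate]), ← PsiSum.replicate]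

theorem mulNat_collapse_toTm (h : IsCode (cons i a nil)) (n : ℕ) :
    mulNat (collapse i (toTm a)) n = toTm (replicate i a n) := by
  induction n with
  | zero => rfl
  | succ n ih => rw [mulNat, ih, ← toTm_single, addT_toTm_replicate h]

theorem isCode_numeral (n : ℕ) : IsCode (numeral n) := (standard_one (L := 2).replicate n).isCode

theorem IsCode.nestIter {g : PsiSum → PsiSum} (hg : ∀ x, IsCode x → IsCode (g x)) :
    ∀ n, IsCode (nestIter g n)
  | 0 => trivial
  | n + 1 => ⟨one_le_two, by simp, hg _ (IsCode.nestIter hg n), trivial⟩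

theorem IsCode.fundSeq : ∀ {q : PsiSum}, IsCode q → ∀ x, IsCode x → IsCode (fundSeq q x)
  | nil, _, _, _ => trivial
  | cons i a r, h, x, hx => by
    by_cases hr : r = nil
    · subst hr
      rcases i with _ | i
      · rw [fundSeq_one]
        trivial
      · have ih := h.2.2.1.fundSeq
        simp only [PsiSum.fundSeq]
        split
        · exact hx
        · exact IsCode.replicate ⟨h.1, by simp, ih nil trivial, trivial⟩ _
        · exact ⟨h.1, by simp, ih x hx, trivial⟩
        · split_ifs
          · exact ⟨one_le_two, by simp, ih _ (IsCode.nestIter ih _), trivial⟩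
          · exact ⟨h.1, by simp, ih x hx, trivial⟩
    · rw [fundSeq_cons hr]
      exact ⟨h.1, h.2.1, h.2.2.1, h.2.2.2.fundSeq x hx⟩

/-- The values `x` for which `q[x]` is defined: numerals for type `ω`, countable sums for
type `Ω`. -/
def IsIndex (q x : PsiSum) : Prop :=
  (cofType q = .omega → ∃ n, x = numeral n) ∧ (cofType q = .uncountable → headIdx x ≤ 1)

theorem isIndex_numeral (hq : cofType q = .omega) (n : ℕ) : IsIndex q (numeral n) :=
  ⟨fun _ => ⟨n, rfl⟩, fun h => by simp [hq] at h⟩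

theorem isIndex_of_succ (hq : cofType q = .succ) (x : PsiSum) : IsIndex q x := by
  simp [IsIndex, hq]

theorem isIndex_of_uncountable (hq : cofType q = .uncountable) (hx : headIdx x ≤ 1) :
    IsIndex q x :=
  ⟨fun h => by simp [hq] at h, fun _ => hx⟩

theorem fundSeq_lt (hq : q ≠ nil) (hx : IsIndex q x) : fundSeq q x < q := by
  cases h : cofType q with
  | zero => exact absurd (cofType_eq_zero_iff.1 h) hq
  | succ => exact fundSeq_lt_of_succ h _
  | omega =>
    obtain ⟨n, rfl⟩ := hx.1 h
    exact fundSeq_numeral_lt h _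
  | uncountable => exact fundSeq_lt_of_uncountable h (hx.2 h)

theorem natRec_fund_toTm (ha : IsCode a)
    (ih : ∀ x, IsCode x → headIdx x ≤ 1 → fund (toTm a) (toTm x) = toTm (fundSeq a x)) (n : ℕ) :
    Nat.rec (motive := fun _ => Tm) .zero (fun _ t => .psi 0 (fund (toTm a) t)) n =
      toTm (nestIter (fundSeq a) n) := by
  induction n with
  | zero => rfl
  | succ n ih' =>
    dsimp only
    rw [ih', ih _ (IsCode.nestIter ha.fundSeq n) (headIdx_nestIter_le ..), nestIter, toTm_single,
      collapse]

theorem fund_psi_toTm (h : IsCode (cons (i + 1) a nil))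
    (ih : ∀ x, IsCode x → IsIndex a x → fund (toTm a) (toTm x) = toTm (fundSeq a x))
    (hx : IsCode x) (hidx : IsIndex (cons (i + 1) a nil) x) :
    fund (.psi i (toTm a)) (toTm x) = toTm (fundSeq (cons (i + 1) a nil) x) := by
  have ha := h.2.2.1
  rw [fund, tp_toTm ha]
  cases hc : cofType a with
  | zero => simp [CofType.toTm, fundSeq, hc]
  | succ =>
    obtain ⟨n, rfl⟩ := hidx.1 (cofType_psi_succ (Nat.succ_pos i) hc)
    have hcode : IsCode (cons (i + 1) (fundSeq a nil) nil) :=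
      ⟨h.1, by simp, ha.fundSeq nil trivial, trivial⟩
    have hfund : fund (toTm a) .zero = toTm (fundSeq a nil) :=
      ih nil trivial (isIndex_of_succ hc nil)
    rw [fundSeq_psi_succ (Nat.succ_pos i) hc, ← mulNat_collapse_toTm hcode, length_replicate,
      tmToNat_toTm_numeral, hfund]
    simp [CofType.toTm, collapse]
  | omega =>
    obtain ⟨n, rfl⟩ := hidx.1 (cofType_psi_omega hc)
    rw [ih _ hx (isIndex_numeral hc n), fundSeq_psi_omega hc, toTm_single]
    simp [CofType.toTm, collapse, omegaT, OmegaT, Omega2T]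
  | uncountable =>
    have ih' : ∀ x, IsCode x → headIdx x ≤ 1 → fund (toTm a) (toTm x) = toTm (fundSeq a x) :=
      fun x hx hle => ih x hx (isIndex_of_uncountable hc hle)
    rcases Nat.eq_zero_or_pos i with rfl | hi
    · obtain ⟨n, rfl⟩ := hidx.1 (cofType_psi_zero_uncountable hc)
      rw [fundSeq_psi_zero_uncountable hc, length_replicate, toTm_single, tmToNat_toTm_numeral,
        natRec_fund_toTm ha ih',
        ih' _ (IsCode.nestIter ha.fundSeq n) (headIdx_nestIter_le ..)]
      simp [CofType.toTm, OmegaT, collapse]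
    · rw [ih' x hx (hidx.2 (cofType_psi_uncountable hi hc)), fundSeq_psi_uncountable hi hc,
        toTm_single]
      simp [CofType.toTm, OmegaT, Omega2T, collapse, hi.ne']

theorem fund_toTm : ∀ {q : PsiSum}, Standard 2 q → ∀ x, IsCode x → IsIndex q x →
    fund (toTm q) (toTm x) = toTm (fundSeq q x)
  | nil, _, x, _, _ => by simp [toTm, fund, fundSeq]
  | cons i a r, h, x, hx, hidx => by
    by_cases hr : r = nil
    · subst hr
      rw [toTm_single]
      cases i with
      | zero => simp [collapse, fund, toTm]
      | succ i => exact fund_psi_toTm h.isCode (fund_toTm h.arg) hx hidx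
    · have hidx' : IsIndex r x := by rwa [IsIndex, cofType_cons hr] at hidx
      rw [toTm_cons hr, fund, fund_toTm h.tail x hx hidx', fundSeq_cons hr]
      exact addT_collapse_toTm ⟨h.1, h.2.1, h.arg.isCode, h.tail.isCode.fundSeq x hx⟩
        (h.headLE.of_le (fundSeq_lt hr hidx').le)

end PsiSum

/-! ## The Hardy hierarchy -/

section HardyGraph

variable {α β : Tm} {b k n : ℕ}

theorem hRel_zero_iff : HRel .zero k n ↔ n = k := by
  constructor
  · rintro (_ | ⟨h, -⟩ | ⟨h, -, -⟩)
    · rfl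
    all_goals simp [tp, omegaT] at h
  · rintro rfl
    exact .zero

theorem hRel_iff_of_tp_eq_one (h : tp α = .one) :
    HRel α k n ↔ ∃ m, HRel (fund α .zero) k m ∧ n = m * k := by
  constructor
  · rintro (_ | ⟨-, hm⟩ | ⟨h', -, -⟩)
    · simp [tp] at h
    · exact ⟨_, hm, rfl⟩
    · simp [h, omegaT] at h'
  · rintro ⟨m, hm, rfl⟩
    exact .succ h hm

theorem hRel_iff_of_tp_eq_omega (h : tp α = omegaT) :
    HRel α k n ↔ ∃ β, HIter α k k β ∧ HRel β k n := by
  constructor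
  · rintro (_ | ⟨h', -⟩ | ⟨-, hβ, hn⟩)
    · simp [tp, omegaT] at h
    · simp [h, omegaT] at h'
    · exact ⟨_, hβ, hn⟩
  · rintro ⟨β, hβ, hn⟩
    exact .lim h hβ hn

theorem hIter_zero_iff : HIter α k 0 β ↔ β = fund α .zero := by
  constructor
  · rintro ⟨⟩
    rfl
  · rintro rfl
    exact .zero

theorem hIter_succ_iff :
    HIter α k (b + 1) β ↔ ∃ γ m, HIter α k b γ ∧ HRel γ k m ∧ β = fund α (natToTm m) := by
  constructor
  · rintro (_ | ⟨hγ, hm⟩)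
    exact ⟨_, _, hγ, hm, rfl⟩
  · rintro ⟨γ, m, hγ, hm, rfl⟩
    exact .succ hγ hm

theorem H_eq_of_forall_hRel_iff {c : ℕ} (h : ∀ n, HRel α k n ↔ n = c) : H α k = c := by
  simp only [H, h, Set.ofPred_eq_eq_singleton, csInf_singleton]

end HardyGraph

namespace PsiSum

variable {L b k m n x y : ℕ} {d g q t : PsiSum}

/-- The countable standard sums, that is those below `Ω`. -/
structure IsCountable (q : PsiSum) : Prop where
  standard : Standard 2 q
  headIdx_le : headIdx q ≤ 1

theorem Standard.two_le_headIdx : ∀ {q : PsiSum}, Standard 2 q → cofType q = .uncountable →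
    2 ≤ headIdx q
  | cons i a r, h, hq => by
    by_cases hr : r = nil
    · subst hr
      rcases i with _ | _ | i
      · simp at hq
      · revert hq
        simp only [cofType]
        split <;> simp
      · exact Nat.le_add_left 2 i
    · rw [cofType_cons hr] at hq
      exact (h.tail.two_le_headIdx hq).trans h.headIdx_tail_le

namespace IsCountable

theorem eq_nil_or_cofType (h : IsCountable q) :
    q = nil ∨ cofType q = .succ ∨ cofType q = .omega := by
  cases hq : cofType q with
  | zero => exact Or.inl (cofType_eq_zero_iff.1 hq)
  | succ => simp
  | omega => simp
  | uncountable =>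
    exact absurd (h.standard.two_le_headIdx hq) (Nat.not_le.2 (Nat.lt_succ_of_le h.2))

theorem fundSeq_of_succ (h : IsCountable q) (hq : cofType q = .succ) (x : PsiSum) :
    IsCountable (fundSeq q x) :=
  ⟨h.standard.fundSeq_of_succ hq x, (headIdx_mono (fundSeq_lt_of_succ hq x).le).trans h.2⟩

theorem fundSeq_of_omega (h : IsCountable q) (hq : cofType q = .omega) (n : ℕ) :
    IsCountable (fundSeq q (numeral n)) :=
  ⟨h.standard.fundSeq_of_omega hq n, (headIdx_mono (fundSeq_numeral_lt hq n).le).trans h.2⟩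

theorem induction {P : ∀ q, IsCountable q → Prop} (nil : P nil ⟨trivial, Nat.zero_le _⟩)
    (succ : ∀ q (hc : IsCountable q) (hq : cofType q = .succ),
      P (fundSeq q .nil) (hc.fundSeq_of_succ hq .nil) → P q hc)
    (omega : ∀ q (hc : IsCountable q) (hq : cofType q = .omega),
      (∀ n, P (fundSeq q (numeral n)) (hc.fundSeq_of_omega hq n)) → P q hc)
    (hc : IsCountable q) : P q hc := by
  obtain ⟨h, hle⟩ := hc
  induction h using Standard.induction with
  | h q h ih =>
    have hc : IsCountable q := ⟨h, hle⟩
    have ih' : ∀ s (hs : IsCountable s), s < q → P s hs := fun s hs hlt => ih s hs.1 hlt hs.2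
    rcases hc.eq_nil_or_cofType with rfl | hq | hq
    · exact nil
    · exact succ q hc hq (ih' _ _ (fundSeq_lt_of_succ hq _))
    · exact omega q hc hq fun n => ih' _ _ (fundSeq_numeral_lt hq n)

end IsCountable

/-- The Hardy function `H_q(k)`. -/
noncomputable def hardy (q : PsiSum) (k : ℕ) : ℕ := H (toTm q) k

/-- The indices in the iteration defining `H_q` at limits: `q{b} = q[hardyIter q k b]`. -/
noncomputable def hardyIter (q : PsiSum) (k : ℕ) : ℕ → ℕ
  | 0 => 0
  | b + 1 => hardy (fundSeq q (numeral (hardyIter q k b))) k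

theorem hRel_toTm_iff_of_succ (hc : IsCountable q) (hq : cofType q = .succ) :
    HRel (toTm q) k n ↔ ∃ m, HRel (toTm (fundSeq q nil)) k m ∧ n = m * k := by
  have htp : tp (toTm q) = .one := by rw [tp_toTm hc.1.isCode, hq, CofType.toTm]
  have hfund := fund_toTm hc.1 nil trivial (isIndex_of_succ hq nil)
  rw [hRel_iff_of_tp_eq_one htp, ← hfund, toTm]

theorem hIter_toTm_iff (hc : IsCountable q) (hq : cofType q = .omega)
    (ih : ∀ m n, HRel (toTm (fundSeq q (numeral m))) k n ↔ n = hardy (fundSeq q (numeral m)) k)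
    {β : Tm} : HIter (toTm q) k b β ↔ β = toTm (fundSeq q (numeral (hardyIter q k b))) := by
  have hfund n := fund_toTm hc.1 _ (isCode_numeral n) (isIndex_numeral hq n)
  induction b generalizing β with
  | zero => rw [hIter_zero_iff, hardyIter, ← hfund 0]; rfl
  | succ b ihb => simp only [hIter_succ_iff, ihb, ih, exists_and_left, exists_eq_left, hardyIter,
      natToTm_eq_toTm, hfund]

theorem hRel_toTm_iff_of_omega (hc : IsCountable q) (hq : cofType q = .omega)
    (ih : ∀ m n, HRel (toTm (fundSeq q (numeral m))) k n ↔ n = hardy (fundSeq q (numeral m)) k) :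
    HRel (toTm q) k n ↔ n = hardyIter q k (k + 1) := by
  have htp : tp (toTm q) = omegaT := by rw [tp_toTm hc.1.isCode, hq, CofType.toTm]
  simp only [hRel_iff_of_tp_eq_omega htp, hIter_toTm_iff hc hq ih, exists_eq_left, ih, hardyIter]

theorem hRel_toTm_iff (hc : IsCountable q) : ∀ n, HRel (toTm q) k n ↔ n = hardy q k := by
  suffices ∃ c, ∀ n, HRel (toTm q) k n ↔ n = c by
    obtain ⟨c, hc⟩ := this
    rwa [hardy, H_eq_of_forall_hRel_iff hc]
  have key {s : PsiSum} {c} (h : ∀ n, HRel (toTm s) k n ↔ n = c) :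
      ∀ n, HRel (toTm s) k n ↔ n = hardy s k := by rwa [hardy, H_eq_of_forall_hRel_iff h]
  induction hc using IsCountable.induction with
  | nil => exact ⟨k, fun n => hRel_zero_iff⟩
  | succ q hc hq ih =>
    obtain ⟨c, ih⟩ := ih
    exact ⟨c * k, fun n => by simp only [hRel_toTm_iff_of_succ hc hq, ih, exists_eq_left]⟩
  | omega q hc hq ih =>
    exact ⟨_, fun n => hRel_toTm_iff_of_omega hc hq fun m => key (ih m).choose_spec⟩

theorem hardy_nil (k : ℕ) : hardy nil k = k := H_eq_of_forall_hRel_iff fun _ => hRel_zero_iff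

theorem hardy_of_succ (hc : IsCountable q) (hq : cofType q = .succ) (k : ℕ) :
    hardy q k = hardy (fundSeq q nil) k * k :=
  H_eq_of_forall_hRel_iff fun n => by
    simp only [hRel_toTm_iff_of_succ hc hq, hRel_toTm_iff (hc.fundSeq_of_succ hq nil),
      exists_eq_left]

theorem hardy_of_omega (hc : IsCountable q) (hq : cofType q = .omega) (k : ℕ) :
    hardy q k = hardyIter q k (k + 1) :=
  H_eq_of_forall_hRel_iff fun _ => hRel_toTm_iff_of_omega hc hq fun m =>
    hRel_toTm_iff (hc.fundSeq_of_omega hq m)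

theorem le_hardy (hk : 1 ≤ k) (hc : IsCountable q) : k ≤ hardy q k := by
  induction hc using IsCountable.induction with
  | nil => rw [hardy_nil]
  | succ q hc hq ih =>
    rw [hardy_of_succ hc hq]
    exact ih.trans (Nat.le_mul_of_pos_right _ hk)
  | omega q hc hq ih =>
    rw [hardy_of_omega hc hq]
    exact ih _

theorem le_hardyIter (hk : 1 ≤ k) (hc : IsCountable q) (hq : cofType q = .omega) (hm : 1 ≤ m) :
    k ≤ hardyIter q k m := by
  obtain ⟨m, rfl⟩ := Nat.exists_eq_add_of_le' hm
  exact le_hardy hk (hc.fundSeq_of_omega hq _)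

theorem hardy_fundSeq_le_of_mem_Ico (hk : 1 ≤ k) (hg : IsCountable g) (hω : cofType g = .omega)
    (hc : IsCountable d) (hd : d ∈ Set.Ico (fundSeq g (numeral x)) g) :
    hardy (fundSeq g (numeral x)) k ≤ hardy d k := by
  induction hc using IsCountable.induction with
  | nil => rw [le_antisymm hd.1 (nil_le _)]
  | succ d hc hs ih =>
    rcases hd.1.eq_or_lt with h | h
    · rw [h]
    · have hle := hg.1.nested hω x hc.1 h hd.2 (y := nil) fun h => by simp [hs] at h
      rw [hardy_of_succ hc hs]
      exact (ih ⟨hle, (fundSeq_lt_of_succ hs _).trans hd.2⟩).trans (Nat.le_mul_of_pos_right _ hk)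
  | omega d hc hs ih =>
    rcases hd.1.eq_or_lt with h | h
    · rw [h]
    · obtain ⟨n, hn⟩ := Nat.exists_eq_add_of_le' (hk.trans (le_hardyIter hk hc hs hk))
      have hle := hg.1.nested hω x hc.1 h hd.2 fun _ => ⟨n, rfl⟩
      rw [hardy_of_omega hc hs, hardyIter, hn]
      exact ih _ ⟨hle, (fundSeq_numeral_lt hs _).trans hd.2⟩

theorem hardy_fundSeq_mono (hk : 1 ≤ k) (hg : IsCountable g) (hω : cofType g = .omega)
    (h : x ≤ y) : hardy (fundSeq g (numeral x)) k ≤ hardy (fundSeq g (numeral y)) k :=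
  hardy_fundSeq_le_of_mem_Ico hk hg hω (hg.fundSeq_of_omega hω y)
    ⟨fundSeq_numeral_mono hω h, fundSeq_numeral_lt hω y⟩

theorem hardyIter_mono (hk : 1 ≤ k) (hg : IsCountable g) (hω : cofType g = .omega) :
    Monotone (hardyIter g k) :=
  monotone_nat_of_le_succ fun n => by
    induction n with
    | zero => exact Nat.zero_le _
    | succ n ih => exact hardy_fundSeq_mono hk hg hω ih

theorem hardy_fundSeq_le (hk : 1 ≤ k) (hg : IsCountable g) (hω : cofType g = .omega)
    (h : x ≤ k) : hardy (fundSeq g (numeral x)) k ≤ hardy g k := by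
  rw [hardy_of_omega hg hω, hardyIter]
  exact hardy_fundSeq_mono hk hg hω (h.trans (le_hardyIter hk hg hω hk))

/-! ## The Hardy function dominates the size -/

theorem size_fill (k : Spine) (s : PsiSum) : size (k.fill s) = size (k.fill nil) + size s := by
  induction k with
  | hole => simp [Spine.fill, size]
  | after _ _ _ ih | under _ _ ih =>
    simp only [Spine.fill, size, ih]
    omega

theorem size_append (s t : PsiSum) : size (append s t) = size s + size t := by
  induction s with
  | nil => simp [append, size]
  | cons i a r _ ih =>
    simp only [append, size, ih]
    omega

theorem size_replicate (i : ℕ) (a : PsiSum) (n : ℕ) :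
    size (replicate i a n) = n * (size a + 1) := by
  induction n with
  | zero => simp [replicate, size]
  | succ n ih =>
    simp only [replicate, size, ih]
    ring

theorem Standard.size_of_succ (h : Standard L q) (hq : cofType q = .succ) (x : PsiSum) :
    size q = size (fundSeq q x) + 1 := by
  obtain ⟨s, -, rfl, hs⟩ := h.exists_append_one hq
  simp [hs, size_append, size]

theorem OmegaBase.size_le (ht : OmegaBase t) (h : Standard 2 t) (hn : 2 ≤ n) :
    size t ≤ size (fundSeq t (numeral n)) := by
  cases ht with
  | omega =>
    rw [fundSeq_cardinal, size_replicate]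
    simp only [size]
    omega
  | psi_succ i a hi ha =>
    rw [fundSeq_psi_succ hi ha, length_replicate, size_replicate]
    simp only [size]
    rw [h.arg.size_of_succ ha nil]
    nlinarith
  | collapse e he =>
    obtain ⟨k, i, hk, hi, rfl⟩ := exists_fill_cardinal he
    obtain ⟨n, rfl⟩ := Nat.exists_eq_add_of_le' (one_le_two.trans hn)
    rw [fundSeq_psi_zero_uncountable he, length_replicate, fundSeq_fill_cardinal hk hi]
    have hpos : 1 ≤ size (nestIter (fundSeq (k.fill (cons i nil nil))) (n + 1)) := by
      simp only [nestIter, size]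
      omega
    simp only [size]
    rw [size_fill k (cons i nil nil), size_fill k (nestIter _ _)]
    simp only [size]
    omega

theorem Standard.size_le_of_omega (h : Standard 2 q) (hq : cofType q = .omega) (hn : 2 ≤ n) :
    size q ≤ size (fundSeq q (numeral n)) := by
  obtain ⟨k, t, ht, rfl⟩ := exists_fill_omegaBase hq
  rw [Spine.fundSeq_fill ht.cofType, size_fill k t, size_fill k (fundSeq t _)]
  exact Nat.add_le_add_left (ht.size_le h.of_fill hn) _

theorem size_add_le_hardy (hk : 2 ≤ k) (hc : IsCountable q) : size q + k ≤ hardy q k := by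
  induction hc using IsCountable.induction with
  | nil => simp [hardy_nil, size]
  | succ q hc hq ih =>
    rw [hardy_of_succ hc hq, hc.1.size_of_succ hq nil]
    nlinarith
  | omega q hc hq ih =>
    rw [hardy_of_omega hc hq]
    have h2 : 2 ≤ hardyIter q k k := hk.trans (le_hardyIter (by omega) hc hq (by omega))
    exact (Nat.add_le_add_right (hc.1.size_le_of_omega hq h2) k).trans (ih _)

end PsiSum

/-! ## Padding by ones -/

namespace PsiSum

variable {i k k' n : ℕ} {a b c r s : PsiSum}

theorem append_nil (a : PsiSum) : append a nil = a := by
  induction a with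
  | nil => rfl
  | cons i a r _ ih => rw [append, ih]

theorem append_ne_nil (hb : b ≠ nil) : append a b ≠ nil := by
  cases a <;> simp [append, hb]

theorem cofType_append (hb : b ≠ nil) : cofType (append a b) = cofType b := by
  induction a with
  | nil => rfl
  | cons i a r _ ih => rw [append, cofType_cons (append_ne_nil hb), ih]

theorem fundSeq_append (hb : b ≠ nil) (x : PsiSum) :
    fundSeq (append a b) x = append a (fundSeq b x) := by
  induction a with
  | nil => rfl
  | cons i a r _ ih => rw [append, fundSeq_cons (append_ne_nil hb), ih, append]

theorem fundSeq_eq_of_succ (hb : cofType b = .succ) (x y : PsiSum) :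
    fundSeq b x = fundSeq b y := by
  obtain ⟨s, a, -, hs⟩ := exists_append_one hb
  rw [hs, hs]

/-- `b` arises from `a` by appending ones to sums at any depth. -/
def PadLE : PsiSum → PsiSum → Prop
  | nil, nil => True
  | nil, cons j _ s => j = 0 ∧ PadLE nil s
  | cons _ _ _, nil => False
  | cons i a r, cons j b s => i = j ∧ PadLE a b ∧ PadLE r s

namespace PadLE

theorem refl : ∀ a, PadLE a a
  | nil => trivial
  | cons _ a r => ⟨rfl, refl a, refl r⟩

theorem trans : ∀ {a b c}, PadLE a b → PadLE b c → PadLE a c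
  | nil, nil, _, _, h => h
  | nil, cons _ _ _, cons _ _ _, ⟨rfl, h⟩, ⟨rfl, _, h'⟩ => ⟨rfl, trans h h'⟩
  | cons _ _ _, cons _ _ _, cons _ _ _, ⟨rfl, h, h'⟩, ⟨rfl, k, k'⟩ => ⟨rfl, trans h k, trans h' k'⟩

theorem eq_nil : ∀ {a}, PadLE a nil → a = nil
  | nil, _ => rfl

theorem nil_numeral : ∀ n, PadLE nil (numeral n)
  | 0 => trivial
  | n + 1 => ⟨rfl, nil_numeral n⟩

theorem append_numeral (n : ℕ) : ∀ a, PadLE a (append a (numeral n))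
  | nil => nil_numeral n
  | cons _ _ r => ⟨rfl, refl _, append_numeral n r⟩

theorem single (h : PadLE a b) : PadLE (cons i a nil) (cons i b nil) := ⟨rfl, h, trivial⟩

theorem replicate (h : PadLE a b) (n : ℕ) : PadLE (replicate i a n) (replicate i b n) := by
  induction n with
  | zero => exact trivial
  | succ n ih => exact ⟨rfl, h, ih⟩

theorem fill (h : PadLE a b) (k : Spine) : PadLE (k.fill a) (k.fill b) := by
  induction k with
  | hole => exact h
  | after i c k ih => exact ⟨rfl, refl c, ih⟩
  | under i k ih => exact ih.single

theorem cofType_of_nil : ∀ {b}, PadLE nil b → b ≠ nil → cofType b = .succ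
  | cons _ c s, ⟨rfl, h⟩, _ => by
    by_cases hs : s = nil
    · rw [hs, cofType_one]
    · rw [cofType_cons hs, h.cofType_of_nil hs]

theorem nil_fundSeq : ∀ {b}, PadLE nil b → ∀ x, PadLE nil (fundSeq b x)
  | nil, _, _ => trivial
  | cons _ c s, ⟨rfl, h⟩, x => by
    by_cases hs : s = nil
    · rw [hs, fundSeq_one]
      trivial
    · rw [fundSeq_cons hs]
      exact ⟨rfl, h.nil_fundSeq x⟩

end PadLE

/-- A single step down from `b` still leaves a padding of `a`. -/
structure Absorbs (a b : PsiSum) : Prop where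
  ne_nil : b ≠ nil
  cofType_ne : cofType b ≠ .uncountable
  padLE : PadLE a (fundSeq b (numeral 1))

/-- The fundamental sequences of `a` and `b` run in parallel and preserve padding. -/
structure FundCompatible (a b : PsiSum) : Prop where
  cofType_eq : cofType a = cofType b
  padLE : ∀ x y, PadLE x y → length x = length y → PadLE (fundSeq a x) (fundSeq b y)

theorem PadLE.absorbs_nil (h : PadLE nil b) (hb : b ≠ nil) : Absorbs nil b :=
  ⟨hb, by simp [h.cofType_of_nil hb], h.nil_fundSeq _⟩

theorem Absorbs.cons (h : Absorbs r s) (hab : PadLE a b) : Absorbs (cons i a r) (cons i b s) where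
  ne_nil := by simp
  cofType_ne := by rw [cofType_cons h.ne_nil]; exact h.cofType_ne
  padLE := by rw [fundSeq_cons h.ne_nil]; exact ⟨rfl, hab, h.padLE⟩

theorem Absorbs.psi (h : Absorbs a b) : Absorbs (.cons (i + 1) a nil) (.cons (i + 1) b nil) := by
  have hi : 1 ≤ i + 1 := Nat.le_add_left 1 i
  cases hb : cofType b with
  | zero => exact absurd (cofType_eq_zero_iff.1 hb) h.ne_nil
  | uncountable => exact absurd hb h.cofType_ne
  | succ =>
    refine ⟨by simp, by simp [cofType_psi_succ hi hb], ?_⟩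
    rw [fundSeq_psi_succ hi hb, fundSeq_eq_of_succ hb nil (numeral 1)]
    exact h.padLE.single
  | omega =>
    refine ⟨by simp, by simp [cofType_psi_omega hb], ?_⟩
    rw [fundSeq_psi_omega hb]
    exact h.padLE.single

theorem FundCompatible.cons (h : FundCompatible r s) (hr : r ≠ nil) (hs : s ≠ nil)
    (hab : PadLE a b) : FundCompatible (cons i a r) (cons i b s) where
  cofType_eq := by rw [cofType_cons hr, cofType_cons hs, h.cofType_eq]
  padLE x y hxy hlen := by
    rw [fundSeq_cons hr, fundSeq_cons hs]
    exact ⟨rfl, hab, h.padLE x y hxy hlen⟩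

theorem FundCompatible.nestIter (h : FundCompatible a b) : ∀ n,
    PadLE (nestIter (fundSeq a) n) (nestIter (fundSeq b) n) ∧
      length (nestIter (fundSeq a) n) = length (nestIter (fundSeq b) n)
  | 0 => ⟨trivial, rfl⟩
  | n + 1 => ⟨(h.padLE _ _ (h.nestIter n).1 (h.nestIter n).2).single, rfl⟩

theorem FundCompatible.psi (h : FundCompatible a b) :
    FundCompatible (.cons (i + 1) a nil) (.cons (i + 1) b nil) where
  cofType_eq := by simp only [cofType, h.cofType_eq]
  padLE x y hxy hlen := by
    have hi : 1 ≤ i + 1 := Nat.le_add_left 1 i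
    cases hb : cofType b with
    | zero =>
      rw [cofType_eq_zero_iff.1 hb, cofType_eq_zero_iff.1 (h.cofType_eq.trans hb)]
      simpa only [fundSeq_cardinal] using hxy
    | succ =>
      rw [fundSeq_psi_succ hi hb, fundSeq_psi_succ hi (h.cofType_eq.trans hb), hlen]
      exact (h.padLE nil nil trivial rfl).replicate _
    | omega =>
      rw [fundSeq_psi_omega hb, fundSeq_psi_omega (h.cofType_eq.trans hb)]
      exact (h.padLE x y hxy hlen).single
    | uncountable =>
      obtain rfl | hi := Nat.eq_zero_or_pos i
      · rw [fundSeq_psi_zero_uncountable hb, fundSeq_psi_zero_uncountable (h.cofType_eq.trans hb),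
          hlen]
        exact (h.padLE _ _ (h.nestIter _).1 (h.nestIter _).2).single
      · rw [fundSeq_psi_uncountable hi hb, fundSeq_psi_uncountable hi (h.cofType_eq.trans hb)]
        exact (h.padLE x y hxy hlen).single

theorem PadLE.absorbs_or_fundCompatible :
    ∀ {a b : PsiSum}, PadLE a b → Absorbs a b ∨ FundCompatible a b
  | nil, nil, _ => .inr ⟨rfl, fun _ _ _ _ => trivial⟩
  | nil, .cons _ _ _, h => .inl (h.absorbs_nil (by simp))
  | .cons i a r, .cons j b s, h => by
    obtain ⟨rfl, hab, hrs⟩ := h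
    by_cases hs : s = nil
    · subst hs
      obtain rfl := hrs.eq_nil
      cases i with
      | zero => exact .inr ⟨rfl, fun x y _ _ => by simp only [fundSeq_one, PadLE]⟩
      | succ i => exact hab.absorbs_or_fundCompatible.imp Absorbs.psi FundCompatible.psi
    · by_cases hr : r = nil
      · subst hr
        exact .inl ((hrs.absorbs_nil hs).cons hab)
      · exact hrs.absorbs_or_fundCompatible.imp (·.cons hab) (·.cons hr hs hab)

theorem hardyIter_le_hardyIter_of_fundCompatible (hk' : 1 ≤ k') (ha : IsCountable a)
    (hb : IsCountable b) (hω : cofType b = .omega) (h : FundCompatible a b)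
    (ih : ∀ n {c}, IsCountable c → PadLE c (fundSeq b (numeral n)) →
      hardy c k ≤ hardy (fundSeq b (numeral n)) k') : ∀ n, hardyIter a k n ≤ hardyIter b k' n
  | 0 => le_rfl
  | n + 1 =>
    (ih _ (ha.fundSeq_of_omega (h.cofType_eq.trans hω) _) (h.padLE _ _ (.refl _) rfl)).trans
      (hardy_fundSeq_mono hk' hb hω
        (hardyIter_le_hardyIter_of_fundCompatible hk' ha hb hω h ih n))

theorem hardy_le_hardyIter_of_padLE (hk : 1 ≤ k) (hkk : k ≤ k') (ha : IsCountable a)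
    (hb : IsCountable b) (hω : cofType b = .omega) (h : PadLE a b)
    (ih : ∀ n {c}, IsCountable c → PadLE c (fundSeq b (numeral n)) →
      hardy c k ≤ hardy (fundSeq b (numeral n)) k') (hn : k < n) :
    hardy a k ≤ hardyIter b k' n := by
  have hk' : 1 ≤ k' := hk.trans hkk
  have hmono : Monotone (hardyIter b k') := hardyIter_mono hk' hb hω
  rcases h.absorbs_or_fundCompatible with h | h
  · calc hardy a k ≤ hardy (fundSeq b (numeral 1)) k' := ih 1 ha h.padLE
      _ ≤ hardyIter b k' 2 :=
        hardy_fundSeq_mono hk' hb hω (hk'.trans (le_hardyIter hk' hb hω le_rfl))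
      _ ≤ hardyIter b k' n := hmono (by omega)
  · rw [hardy_of_omega ha (h.cofType_eq.trans hω)]
    exact (hardyIter_le_hardyIter_of_fundCompatible hk' ha hb hω h ih _).trans (hmono hn)

theorem hardy_le_hardy_of_padLE (hk : 1 ≤ k) (hkk : k ≤ k') (hb : IsCountable b) :
    ∀ {a}, IsCountable a → PadLE a b → hardy a k ≤ hardy b k' := by
  induction hb using IsCountable.induction with
  | nil =>
    intro a _ h
    rwa [h.eq_nil, hardy_nil, hardy_nil]
  | succ b hb hs ih =>
    intro a ha h
    rw [hardy_of_succ hb hs]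
    rcases h.absorbs_or_fundCompatible with h | h
    · have hle := ih ha (fundSeq_eq_of_succ hs nil (numeral 1) ▸ h.padLE)
      exact hle.trans (Nat.le_mul_of_pos_right _ (hk.trans hkk))
    · have has : cofType a = .succ := h.cofType_eq.trans hs
      rw [hardy_of_succ ha has]
      exact Nat.mul_le_mul (ih (ha.fundSeq_of_succ has nil) (h.padLE nil nil trivial rfl)) hkk
  | omega b hb hω ih =>
    intro a ha h
    rw [hardy_of_omega hb hω]
    exact hardy_le_hardyIter_of_padLE hk hkk ha hb hω h (fun n _ => ih n) (Nat.lt_succ_of_le hkk)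

theorem hardy_le_hardyIter_self (hk : 1 ≤ k) (hkk : k < k') (ha : IsCountable a)
    (hb : IsCountable b) (hω : cofType b = .omega) (h : PadLE a b) :
    hardy a k ≤ hardyIter b k' k' :=
  hardy_le_hardyIter_of_padLE hk hkk.le ha hb hω h
    (fun n _ hc => hardy_le_hardy_of_padLE hk hkk.le (hb.fundSeq_of_omega hω n) hc) hkk

theorem fundSeq_fill_psi_append_numeral_succ (l : Spine) (hi : 1 ≤ i) (c : PsiSum) (n : ℕ) :
    cofType (l.fill (cons i (append c (numeral (n + 1))) nil)) = .omega ∧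
      fundSeq (l.fill (cons i (append c (numeral (n + 1))) nil)) (numeral 2) =
        (l.comp (.after i (append c (numeral n)) .hole)).fill
          (cons i (append c (numeral n)) nil) := by
  have hne : numeral (n + 1) ≠ nil := by simp [replicate]
  have hs : cofType (append c (numeral (n + 1))) = .succ := by
    rw [cofType_append hne, cofType_numeral_succ]
  have hω := cofType_psi_succ hi hs
  refine ⟨Spine.cofType_fill hω, ?_⟩
  rw [Spine.fundSeq_fill hω, fundSeq_psi_succ hi hs, fundSeq_append hne, fundSeq_numeral_succ,
    length_replicate, Spine.fill_comp]
  rfl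

/- Each step `ψ (c + n + 1)[2] = ψ (c + n) · 2` splits off one summand, and a padding of `ψ c · n`
remains after `n` steps. -/
theorem exists_padLE_hardy_le (hk : 2 ≤ k) (hi : 1 ≤ i) (c : PsiSum) (n : ℕ) (l : Spine)
    (hc : IsCountable (l.fill (cons i (append c (numeral n)) nil))) :
    ∃ d, IsCountable d ∧ PadLE (l.fill (replicate i c (n + 1))) d ∧
      hardy d k ≤ hardy (l.fill (cons i (append c (numeral n)) nil)) k := by
  induction n generalizing l with
  | zero =>
    refine ⟨_, hc, ?_, le_rfl⟩
    rw [show append c (numeral 0) = c from append_nil c]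
    exact .refl _
  | succ n ih =>
    obtain ⟨hω, hfund⟩ := fundSeq_fill_psi_append_numeral_succ l hi c n
    have hstep := hc.fundSeq_of_omega hω 2
    rw [hfund] at hstep
    obtain ⟨d, hd, hpad, hle⟩ := ih _ hstep
    refine ⟨d, hd, PadLE.trans ?_ hpad, hle.trans ?_⟩
    · rw [Spine.fill_comp]
      refine PadLE.fill ?_ l
      exact ⟨rfl, .append_numeral _ _, .refl _⟩
    · rw [← hfund]
      exact hardy_fundSeq_le (one_le_two.trans hk) hc hω hk

theorem hardy_fill_replicate_le (hk : 2 ≤ k) (hi : 1 ≤ i) (l : Spine)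
    (hψ : IsCountable (l.fill (cons i (append c (numeral n)) nil)))
    (hrep : IsCountable (l.fill (replicate i c (n + 1)))) :
    hardy (l.fill (replicate i c (n + 1))) k ≤
      hardy (l.fill (cons i (append c (numeral n)) nil)) k := by
  obtain ⟨d, hd, hpad, hle⟩ := exists_padLE_hardy_le hk hi c n l hψ
  exact (hardy_le_hardy_of_padLE (one_le_two.trans hk) le_rfl hd hrep hpad).trans hle

end PsiSum

/-! ## Clean sums -/

namespace PsiSum

variable {i : ℕ} {a b e q r s x : PsiSum} {inner low low' argLow : Prop}

/-- A nonempty sum headed by `1` fits only a position that is `low`, one headed by an index `≥ 2`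
only a position that is not, and one headed by a `ψ₀`-term fits both. -/
def HeadFits (low : Prop) : PsiSum → Prop
  | nil => True
  | cons i _ _ => (i = 0 → low) ∧ (2 ≤ i → ¬ low)

/- The relation on terms proves `1 < ψ₀ α` but neither `1 < ψ₁ α` nor `1 < ψ₂ α`, so that `1` is
comparable with no term headed by `ψ₁` or `ψ₂`. As membership in `OT` requires comparisons, this
excludes terms such as `ψ₀ 1` and `Ω + 1`. Clean sums are exactly what is left. -/
/-- The sums whose code can be compared with the codes admitted at the same position. At a position
that is `low` the sum may start with `1` but not with `ψ₁`; `argLow` says the same of the argument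
of a leading `ψ₁`-term, and `inner` marks the positions inside an argument of `ψ₁`. -/
def Clean : (inner low argLow : Prop) → PsiSum → Prop
  | _, _, _, nil => True
  | inner, low, argLow, cons i a r =>
    HeadFits low (cons i a r) ∧ Clean (2 ≤ i) (2 ≤ i ∧ argLow) False a ∧
      Clean inner (i ≤ 1) (2 ≤ i ∧ ¬ inner ∧ headIdx a ≤ 1) r

namespace Clean

theorem headFits : ∀ {q}, Clean inner low argLow q → HeadFits low q
  | nil, _ => trivial
  | cons _ _ _, h => h.1

theorem numeral (hlow : low) (n : ℕ) : Clean inner low argLow (numeral n) := by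
  induction n generalizing low argLow with
  | zero => trivial
  | succ n ih => exact ⟨⟨fun _ => hlow, fun h => absurd h (by simp)⟩, trivial, ih (Nat.zero_le 1)⟩

theorem of_headFits (h : Clean inner low argLow q) (h' : HeadFits low' q) :
    Clean inner low' argLow q := by
  cases q with
  | nil => trivial
  | cons i a r => exact ⟨h', h.2⟩

theorem fundSeq_of_succ (hq : cofType q = .succ) (h : Clean inner low argLow q) (x : PsiSum) :
    Clean inner low argLow (fundSeq q x) := by
  fun_induction cofType q generalizing low argLow with
  | case2 i a j b s ih => exact ⟨h.1, h.2.1, ih hq h.2.2⟩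
  | case3 a => rw [fundSeq_one]; trivial
  | _ => simp_all

theorem headFits_replicate_arg (hinner : inner → ¬ argLow)
    (hb : Clean (2 ≤ i) (2 ≤ i ∧ argLow) False b) :
    HeadFits (2 ≤ i ∧ 2 ≤ i ∧ ¬ inner ∧ headIdx b ≤ 1) b := by
  cases b with
  | nil => trivial
  | cons j c r =>
    obtain ⟨h0, -⟩ := hb.1
    simp only [HeadFits, headIdx]
    exact ⟨fun hj => ⟨(h0 hj).1, (h0 hj).1, fun hin => hinner hin (h0 hj).2, by omega⟩,
      fun hj h => absurd h.2.2.2 (by omega)⟩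

theorem replicate (hinner : inner → ¬ argLow) (hi : 1 ≤ i)
    (h : Clean inner low argLow (cons i a nil))
    (hb : Clean (2 ≤ i) (2 ≤ i ∧ argLow) False b) :
    ∀ n, Clean inner low argLow (replicate i b n) := by
  have htail : ∀ n, Clean inner (i ≤ 1) (2 ≤ i ∧ ¬ inner ∧ headIdx b ≤ 1)
      (PsiSum.replicate i b n) := by
    intro n
    induction n with
    | zero => trivial
    | succ n ih =>
      exact ⟨⟨fun h => by omega, fun h => by omega⟩,
        hb.of_headFits (headFits_replicate_arg hinner hb), ih⟩
  rintro (_ | n)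
  · trivial
  · exact ⟨h.1, hb, htail n⟩

theorem fundSeq_of_uncountable (he : cofType e = .uncountable) (h : Clean inner low argLow e)
    (hx : ∀ inner low argLow, Clean inner low argLow x) :
    Clean inner low argLow (fundSeq e x) := by
  obtain ⟨k, i, hk, hi, rfl⟩ := exists_fill_cardinal he
  rw [fundSeq_fill_cardinal hk hi]
  clear he
  induction k generalizing inner low argLow with
  | hole => exact hx _ _ _
  | after i b k ih => exact ⟨h.1, h.2.1, ih hk h.2.2⟩
  | under i k ih => exact ⟨h.1, ih hk.2 h.2.1, trivial⟩

theorem nestIter (he : cofType e = .uncountable) (h : Clean False False False e) (n : ℕ) :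
    ∀ inner low argLow, Clean inner low argLow (nestIter (fundSeq e) n) := by
  induction n with
  | zero => exact fun _ _ _ => trivial
  | succ n ih =>
    intro inner low argLow
    refine ⟨⟨fun h => by omega, fun h => by omega⟩, ?_, trivial⟩
    simpa using h.fundSeq_of_uncountable he ih

end Clean

theorem lt_single_of_forall_clean
    (h : ∀ p, Clean (2 ≤ i) (2 ≤ i ∧ argLow) False p → p < b → p < s)
    (hp : Clean inner low argLow p) (hlt : p < cons i b nil) : p < cons i s nil := by
  cases p with
  | nil => simp
  | cons j c u =>
    simp only [cons_lt_cons, not_lt_nil, and_false, or_false] at hlt ⊢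
    rcases hlt with hlt | ⟨rfl, hlt⟩
    · exact .inl hlt
    · exact .inr ⟨rfl, h c hp.2.1 hlt⟩

theorem lt_cons_of_forall_clean
    (h : ∀ p, Clean inner (i ≤ 1) (2 ≤ i ∧ ¬ inner ∧ headIdx b ≤ 1) p → p < r → p < s)
    (hp : Clean inner low argLow p) (hlt : p < cons i b r) : p < cons i b s := by
  cases p with
  | nil => simp
  | cons j c u =>
    simp only [cons_lt_cons] at hlt ⊢
    rcases hlt with hlt | ⟨rfl, hlt | ⟨rfl, hlt⟩⟩
    · exact .inl hlt
    · exact .inr ⟨rfl, .inl hlt⟩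
    · exact .inr ⟨rfl, .inr ⟨rfl, h _ hp.2.2 hlt⟩⟩

/-- `q` contains a term `ψᵢ (c + ω)` such that no clean sum lies between `q` and its variant with
`ψᵢ (c + 1)`, whereas the variants with `ψᵢ c · n` are clean. -/
def HasArgGap (inner low argLow : Prop) (q : PsiSum) : Prop :=
  ∃ (l : Spine) (i : ℕ) (c : PsiSum), 1 ≤ i ∧ q = l.fill (cons i (append c (cons 1 nil nil)) nil) ∧
    (∀ n, Clean inner low argLow (l.fill (replicate i c n))) ∧
    ∀ p, Clean inner low argLow p → p < q → p < l.fill (cons i (append c (cons 0 nil nil)) nil)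

/-- `q` is a sum `c + ω` such that no clean sum lies between `c` and `q`. -/
def HasTailGap (inner low argLow : Prop) (q : PsiSum) : Prop :=
  ¬ low ∧ ∃ c, q = append c (cons 1 nil nil) ∧ (c = nil ∨ 2 ≤ headIdx c) ∧
    Clean inner low argLow c ∧
    ∀ p, Clean inner low argLow p → p < q → p < append c (cons 0 nil nil)

theorem hasTailGap_omega (hlow : ¬ low) : HasTailGap inner low argLow (cons 1 nil nil) := by
  refine ⟨hlow, nil, rfl, .inl rfl, trivial, fun p hp hlt => ?_⟩
  cases p with
  | nil => simp [append]
  | cons j c u =>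
    simp only [cons_lt_cons, not_lt_nil, and_false, or_false] at hlt
    exact absurd (hp.1.1 (Nat.lt_one_iff.1 hlt)) hlow

theorem HasArgGap.psi (hq : HeadFits low (cons (i + 1) q nil))
    (h : HasArgGap (2 ≤ i + 1) (2 ≤ i + 1 ∧ argLow) False q) :
    HasArgGap inner low argLow (cons (i + 1) q nil) := by
  obtain ⟨l, j, c, hj, rfl, hclean, hlt⟩ := h
  exact ⟨.under i l, j, c, hj, rfl, fun n => ⟨hq, hclean n, trivial⟩,
    fun p => lt_single_of_forall_clean hlt⟩

theorem HasTailGap.psi (hinner : inner → ¬ argLow)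
    (hq : Clean inner low argLow (cons (i + 1) q nil))
    (h : HasTailGap (2 ≤ i + 1) (2 ≤ i + 1 ∧ argLow) False q) :
    HasArgGap inner low argLow (cons (i + 1) q nil) := by
  obtain ⟨-, c, rfl, -, hclean, hlt⟩ := h
  exact ⟨.hole, i + 1, c, Nat.le_add_left 1 i, rfl,
    hq.replicate hinner (Nat.le_add_left 1 i) hclean, fun p => lt_single_of_forall_clean hlt⟩

theorem HasArgGap.cons (hq : Clean inner low argLow (cons i a r))
    (h : HasArgGap inner (i ≤ 1) (2 ≤ i ∧ ¬ inner ∧ headIdx a ≤ 1) r) :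
    HasArgGap inner low argLow (cons i a r) := by
  obtain ⟨l, j, c, hj, rfl, hclean, hlt⟩ := h
  exact ⟨.after i a l, j, c, hj, rfl, fun n => ⟨hq.1, hq.2.1, hclean n⟩,
    fun p => lt_cons_of_forall_clean hlt⟩

theorem HasTailGap.cons (hq : Clean inner low argLow (cons i a r))
    (h : HasTailGap inner (i ≤ 1) (2 ≤ i ∧ ¬ inner ∧ headIdx a ≤ 1) r) :
    HasTailGap inner low argLow (cons i a r) := by
  obtain ⟨hi, c, rfl, -, hclean, hlt⟩ := h
  have hi2 : 2 ≤ i := Nat.lt_of_not_le hi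
  exact ⟨hq.1.2 hi2, .cons i a c, rfl, .inr hi2, ⟨hq.1, hq.2.1, hclean⟩,
    fun p => lt_cons_of_forall_clean hlt⟩

theorem Clean.fundSeq_or_gap : ∀ {q} {inner low argLow : Prop}, cofType q = .omega →
    (inner → ¬ argLow) → Clean inner low argLow q →
    (∀ n, Clean inner low argLow (fundSeq q (PsiSum.numeral n))) ∨
      HasArgGap inner low argLow q ∨ HasTailGap inner low argLow q
  | cons i a (cons j b s), inner, low, argLow, hω, _, h =>
    (fundSeq_or_gap (q := cons j b s) hω (fun hin h => h.2.1 hin) h.2.2).imp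
      (fun hclean n => ⟨h.1, h.2.1, hclean n⟩) (Or.imp (.cons h) (.cons h))
  | cons (i + 1) a nil, inner, low, argLow, hω, hinner, h => by
    have hi : 1 ≤ i + 1 := Nat.le_add_left 1 i
    cases ha : cofType a with
    | zero =>
      obtain rfl := cofType_eq_zero_iff.1 ha
      obtain rfl : i = 0 := by
        by_contra hne
        simp [cofType_cardinal (show 2 ≤ i + 1 by omega)] at hω
      by_cases hlow : low
      · exact .inl fun n => by rw [fundSeq_cardinal]; exact .numeral hlow n
      · exact .inr (.inr (hasTailGap_omega hlow))
    | succ =>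
      refine .inl fun n => ?_
      rw [fundSeq_psi_succ hi ha]
      exact h.replicate hinner hi (h.2.1.fundSeq_of_succ ha _) _
    | omega =>
      refine (fundSeq_or_gap ha (fun _ => id) h.2.1).imp (fun hclean n => ?_)
        fun hgap => .inl (hgap.elim (HasArgGap.psi h.1) (HasTailGap.psi hinner h))
      rw [fundSeq_psi_omega ha]
      exact ⟨h.1, hclean n, trivial⟩
    | uncountable =>
      obtain rfl : i = 0 := by
        by_contra hne
        simp [cofType_psi_uncountable (Nat.pos_of_ne_zero hne) ha] at hω
      have harg : Clean False False False a := by simpa using h.2.1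
      refine .inl fun n => ?_
      rw [fundSeq_psi_zero_uncountable ha]
      refine ⟨h.1, ?_, trivial⟩
      simpa using harg.fundSeq_of_uncountable ha (harg.nestIter ha _)

end PsiSum

/-! ## Codes of terms below `Ω` -/

namespace PsiSum

variable {i j : ℕ} {a b q r s : PsiSum} {inner low argLow : Prop} {γ : Tm}

namespace Clean

theorem arg_psi_zero (h : Clean inner low argLow (cons 1 a r)) : Clean False False False a := by
  simpa only [Nat.not_ofNat_le_one, false_and] using h.2.1

theorem arg_psi_one (h : Clean inner low argLow (cons 2 a r)) : Clean True argLow False a := by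
  simpa only [le_refl, true_and] using h.2.1

theorem tail (h : Clean inner low argLow (cons i a r)) :
    Clean inner (i ≤ 1) (2 ≤ i ∧ ¬ inner ∧ headIdx a ≤ 1) r :=
  h.2.2

theorem tail_of_inner (h : Clean True low argLow (cons i a r)) : Clean True (i ≤ 1) False r := by
  simpa only [not_true_eq_false, false_and, and_false] using h.tail

theorem low_of_headIdx_eq_zero (h : Clean inner low argLow q) (hq : q ≠ nil)
    (h0 : headIdx q = 0) : low := by
  cases q with
  | nil => exact absurd rfl hq
  | cons => exact h.1.1 h0

theorem headIdx_le_one (h : Clean inner low argLow q) (hlow : low) : headIdx q ≤ 1 := by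
  cases q with
  | nil => exact Nat.zero_le _
  | cons => exact Nat.le_of_lt_succ (not_le.1 fun h2 => h.1.2 h2 hlow)

end Clean

theorem tLt_toTm_cons_of_tLt (h : TLt (toTm (cons i a nil)) (toTm (cons j b nil))) :
    TLt (toTm (cons i a r)) (toTm (cons j b s)) := by
  by_cases hrs : r = nil ∧ s = nil
  · rwa [hrs.1, hrs.2]
  · refine TLt.lex_hd ?_ (by rwa [hd_toTm, hd_toTm])
    refine (not_and_or.1 hrs).imp (fun hr => ?_) (fun hs => ?_)
    · rw [toTm_cons hr]; trivial
    · rw [toTm_cons hs]; trivial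

theorem tLt_toTm_cons_of_idx_lt (hi : 1 ≤ i) (hij : i < j) :
    TLt (toTm (cons i a r)) (toTm (cons j b s)) := by
  refine tLt_toTm_cons_of_tLt ?_
  obtain ⟨i, rfl⟩ := Nat.exists_eq_add_of_le' hi
  obtain ⟨j, rfl⟩ := Nat.exists_eq_add_of_lt hij
  rw [toTm_single, toTm_single]
  exact TLt.psi_lt (by omega)

theorem tLt_one_toTm : TLt (toTm (cons 0 a r)) (toTm (cons 1 b s)) := by
  refine tLt_toTm_cons_of_tLt ?_
  rw [toTm_single, toTm_single]
  exact TLt.one_lt_psi0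

theorem tLt_toTm_nil (hq : q ≠ nil) : TLt (toTm nil) (toTm q) :=
  TLt.zero_lt (toTm_eq_zero_iff.not.2 hq)

theorem tLt_toTm_of_lt : ∀ {q r} {inner low low' argLow : Prop}, IsCode q → IsCode r →
    Clean inner low argLow q → Clean inner low' argLow r →
    (q ≠ nil → headIdx q = 0 → headIdx r ≤ 1) → q < r → TLt (toTm q) (toTm r)
  | _, nil, _, _, _, _, _, _, _, _, _, h => absurd h (not_lt_nil _)
  | nil, cons j b s, _, _, _, _, _, _, _, _, _, _ => tLt_toTm_nil nofun
  | cons i a r, cons j b s, _, _, _, _, hq, hr, hcq, hcr, hhead, h => by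
    rcases cons_lt_cons.1 h with hij | ⟨rfl, hab | ⟨rfl, hrs⟩⟩
    · rcases i with _ | i
      · obtain rfl : j = 1 := le_antisymm (hhead nofun rfl) hij
        exact tLt_one_toTm
      · exact tLt_toTm_cons_of_idx_lt i.succ_pos hij
    · refine tLt_toTm_cons_of_tLt ?_
      rcases i with _ | i
      · exact absurd (hr.2.1 rfl ▸ hab) (not_lt_nil a)
      · rw [toTm_single, toTm_single]
        exact TLt.psi_mono (tLt_toTm_of_lt hq.2.2.1 hr.2.2.1 hcq.2.1 hcr.2.1
          (fun hne h0 => hcr.2.1.headIdx_le_one (hcq.2.1.low_of_headIdx_eq_zero hne h0)) hab)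
    · have hs : s ≠ nil := by rintro rfl; exact not_lt_nil _ hrs
      refine TLt.lex_tl (Or.inr (by rw [toTm_cons hs]; trivial)) (by rw [hd_toTm, hd_toTm]) ?_
      rw [tl_toTm, tl_toTm]
      exact tLt_toTm_of_lt hq.2.2.2 hr.2.2.2 hcq.tail hcr.tail
        (fun hne h0 => hcr.tail.headIdx_le_one (hcq.tail.low_of_headIdx_eq_zero hne h0)) hrs

theorem tLt_toTm_of_lt_of_not_low (hq : IsCode q) (hr : IsCode r)
    (hcq : Clean inner False argLow q) (hcr : Clean inner low argLow r) (h : q < r) :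
    TLt (toTm q) (toTm r) :=
  tLt_toTm_of_lt hq hr hcq hcr (fun hne h0 => (hcq.low_of_headIdx_eq_zero hne h0).elim) h

theorem toTm_Omega : toTm (cons 2 nil nil) = OmegaT := toTm_single ..

theorem toTm_Omega₂ : toTm (cons 3 nil nil) = Omega2T := toTm_single ..

theorem toTm_psi_one_Omega₂ : toTm (cons 2 (cons 3 nil nil) nil) = .psi 1 Omega2T := by
  rw [toTm_single, toTm_Omega₂]
  rfl

theorem mem_G1_toTm_cons :
    γ ∈ G1 (toTm (cons i a r)) ↔ γ ∈ G1 (collapse i (toTm a)) ∨ γ ∈ G1 (toTm r) := by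
  by_cases hr : r = nil
  · simp [hr, toTm, G1]
  · simp [toTm_cons hr, G1]

theorem mem_G0_toTm_cons :
    γ ∈ G0 (toTm (cons i a r)) ↔ γ ∈ G0 (collapse i (toTm a)) ∨ γ ∈ G0 (toTm r) := by
  by_cases hr : r = nil
  · simp [hr, toTm, G0]
  · simp [toTm_cons hr, G0]

theorem Clean.tLt_Omega₂ (h : Clean inner False argLow a) (ha : IsCode a) :
    TLt (toTm a) Omega2T := by
  rw [← toTm_Omega₂]
  cases a with
  | nil => exact tLt_toTm_nil nofun
  | cons i a r =>
    exact tLt_toTm_cons_of_idx_lt (Nat.one_le_iff_ne_zero.2 h.1.1) (Nat.lt_succ_of_le ha.1)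

theorem Clean.tLt_psi_one_Omega₂ (h : Clean False False False a) (ha : IsCode a) :
    TLt (toTm a) (.psi 1 Omega2T) := by
  rw [← toTm_psi_one_Omega₂]
  cases a with
  | nil => exact tLt_toTm_nil nofun
  | cons i a r =>
    obtain hi | rfl : i < 2 ∨ i = 2 := ha.1.lt_or_eq
    · exact tLt_toTm_cons_of_idx_lt (Nat.one_le_iff_ne_zero.2 h.1.1) hi
    · refine tLt_toTm_cons_of_tLt ?_
      rw [toTm_single, toTm_single, toTm_Omega₂]
      exact TLt.psi_mono (h.arg_psi_one.tLt_Omega₂ ha.2.2.1)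

theorem Standard.lt_psi_one_self : ∀ {c : PsiSum}, Standard 2 c → ∀ r, c < cons 2 c r
  | nil, _, _ => nil_lt_cons ..
  | cons j d s, h, r => by
    rcases h.idx_le.lt_or_eq with hj | rfl
    · exact cons_lt_cons.2 (Or.inl hj)
    · exact cons_lt_cons.2 (Or.inr ⟨rfl, Or.inl (h.arg.lt_psi_one_self s)⟩)

/-- The elements of `G₁ p` are arguments of a `ψ₁` in `p`, hence below `p`. -/
theorem Clean.tLt_of_mem_G1 (ha : Clean True low False a) (hca : IsCode a) :
    ∀ {p} {low' : Prop}, Standard 2 p → Clean True low' False p → p ≤ a →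
      ∀ γ ∈ G1 (toTm p), TLt γ (toTm a)
  | nil, _, _, _, _, γ, hγ => by simp [toTm, G1] at hγ
  | cons i c r, _, hp, h, hle, γ, hγ => by
    rcases mem_G1_toTm_cons.1 hγ with hγ | hγ
    · obtain rfl | rfl | rfl : i = 0 ∨ i = 1 ∨ i = 2 := by have := hp.idx_le; omega
      · simp [collapse, G1] at hγ
      · simp [collapse, G1] at hγ
      · have hlt : c < a := (hp.arg.lt_psi_one_self r).trans_le hle
        rcases Finset.mem_insert.1 hγ with rfl | hγ
        · exact tLt_toTm_of_lt_of_not_low hp.arg.isCode hca h.arg_psi_one ha hlt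
        · exact ha.tLt_of_mem_G1 hca hp.arg h.arg_psi_one hlt.le γ hγ
    · exact ha.tLt_of_mem_G1 hca hp.tail h.tail_of_inner (hp.tail_lt.le.trans hle) γ hγ

theorem CoeffsBelow.forall_mem_G0 {P : Tm → Prop}
    (hP : ∀ c, Standard 2 c → Clean False False False c → c < a → P (toTm c)) :
    ∀ {p} {inner low argLow : Prop}, Standard 2 p → Clean inner low argLow p →
      CoeffsBelow 1 p a → ∀ γ ∈ G0 (toTm p), P γ
  | nil, _, _, _, _, _, _, γ, hγ => by simp [toTm, G0] at hγ
  | cons i c r, _, _, _, hp, h, hb, γ, hγ => by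
    rcases mem_G0_toTm_cons.1 hγ with hγ | hγ
    · obtain rfl | rfl | rfl : i = 0 ∨ i = 1 ∨ i = 2 := by have := hp.idx_le; omega
      · simp [collapse, G0] at hγ
      · rcases Finset.mem_insert.1 hγ with rfl | hγ
        · exact hP c hp.arg h.arg_psi_zero ((hb.1 le_rfl).1 rfl)
        · exact forall_mem_G0 hP hp.arg h.arg_psi_zero (hb.1 le_rfl).2 γ hγ
      · exact forall_mem_G0 hP hp.arg h.arg_psi_one (hb.1 one_le_two).2 γ hγ
    · exact forall_mem_G0 hP hp.tail h.tail hb.2 γ hγ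

theorem tLe_hd_toTm (hp : Standard 2 (cons i a r)) (h : Clean inner low argLow (cons i a r))
    (hr : r ≠ nil) : TLe (toTm r).hd (collapse i (toTm a)) := by
  cases r with
  | nil => exact absurd rfl hr
  | cons j b s =>
    rw [hd_toTm, ← toTm_single]
    rcases hp.headLE with hji | ⟨rfl, hba⟩
    · rcases j with _ | j
      · obtain rfl : i = 1 := le_antisymm (h.tail.1.1 rfl) hji
        exact Or.inl tLt_one_toTm
      · exact Or.inl (tLt_toTm_cons_of_idx_lt j.succ_pos hji)
    · rcases hba.lt_or_eq with hba | rfl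
      · rcases j with _ | j
        · exact absurd (hp.arg_eq_nil ▸ hba) (not_lt_nil b)
        · rw [toTm_single, toTm_single]
          exact Or.inl (TLt.psi_mono (tLt_toTm_of_lt hp.tail.arg.isCode hp.arg.isCode h.tail.2.1
            h.2.1 (fun hne h0 => (h.tail.2.1.low_of_headIdx_eq_zero hne h0).2.2.2) hba))
      · exact Or.inr rfl

theorem isPrincipal_collapse (i : ℕ) (t : Tm) : (collapse i t).IsPrincipal := by
  cases i <;> trivial

theorem inT_collapse (hi : i ≤ 2) {t : Tm} (ht : InT t) : InT (collapse i t) := by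
  cases i with
  | zero => exact .one
  | succ i => exact .psi (by omega) ht

theorem inT_toTm : ∀ {q} {inner low argLow : Prop}, Standard 2 q → Clean inner low argLow q →
    InT (toTm q)
  | nil, _, _, _, _, _ => .zero
  | cons i a r, _, _, _, hq, h => by
    have hp : InT (collapse i (toTm a)) := inT_collapse hq.idx_le (inT_toTm hq.arg h.2.1)
    by_cases hr : r = nil
    · rwa [hr, toTm_single]
    · rw [toTm_cons hr]
      exact .add (isPrincipal_collapse ..) hp (inT_toTm hq.tail h.tail)
        (toTm_eq_zero_iff.not.2 hr) (tLe_hd_toTm hq h hr)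

theorem inOT_collapse (hq : Standard 2 (cons i a r)) (h : Clean inner low argLow (cons i a r))
    (ha : InOT (toTm a)) : InOT (collapse i (toTm a)) := by
  obtain rfl | rfl | rfl : i = 0 ∨ i = 1 ∨ i = 2 := by have := hq.idx_le; omega
  · exact .one
  · refine .psi0 ha ?_ (h.arg_psi_zero.tLt_Omega₂ hq.arg.isCode)
    exact CoeffsBelow.forall_mem_G0 (P := (TLt · (toTm a)))
      (fun c hc hcc hlt => tLt_toTm_of_lt_of_not_low hc.isCode hq.arg.isCode hcc h.arg_psi_zero hlt)
      hq.arg h.arg_psi_zero (hq.coeffsBelow (by omega))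
  · exact .psi1 ha (h.arg_psi_one.tLt_of_mem_G1 hq.arg.isCode hq.arg h.arg_psi_one le_rfl)

theorem inOT_toTm : ∀ {q} {inner low argLow : Prop}, Standard 2 q → Clean inner low argLow q →
    InOT (toTm q)
  | nil, _, _, _, _, _ => .zero
  | cons i a r, _, _, _, hq, h => by
    have hp : InOT (collapse i (toTm a)) := inOT_collapse hq h (inOT_toTm hq.arg h.2.1)
    by_cases hr : r = nil
    · rwa [hr, toTm_single]
    · have hadd := inT_toTm hq h
      rw [toTm_cons hr] at hadd ⊢
      exact .add hadd hp (inOT_toTm hq.tail h.tail)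

/-- The sums which denote the terms in `OT₀` below `Ω`, the indices of the Hardy hierarchy. -/
structure IsNotation (q : PsiSum) : Prop extends IsCountable q where
  clean : Clean False False False q

namespace IsNotation

theorem isCode (h : IsNotation q) : IsCode q := h.standard.isCode

theorem fundSeq_of_succ (h : IsNotation q) (hq : cofType q = .succ) (x : PsiSum) :
    IsNotation (fundSeq q x) :=
  ⟨h.toIsCountable.fundSeq_of_succ hq x, h.clean.fundSeq_of_succ hq x⟩

theorem inOT0 (h : IsNotation q) : InOT0 (toTm q) :=
  ⟨inOT_toTm h.standard h.clean, h.clean.tLt_psi_one_Omega₂ h.isCode,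
    CoeffsBelow.forall_mem_G0 (fun _ hc hcc _ => hcc.tLt_psi_one_Omega₂ hc.isCode) h.standard
      h.clean (coeffsBelow_cons_three h.standard)⟩

theorem tLt_Omega (h : IsNotation q) : TLt (toTm q) OmegaT := by
  rw [← toTm_Omega]
  cases q with
  | nil => exact tLt_toTm_nil nofun
  | cons i a r =>
    exact tLt_toTm_cons_of_idx_lt (Nat.one_le_iff_ne_zero.2 h.clean.1.1)
      (Nat.lt_succ_of_le h.headIdx_le)

theorem tLt_toTm_iff (hq : IsNotation q) (hr : IsNotation r) :
    TLt (toTm q) (toTm r) ↔ q < r :=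
  ⟨lt_of_tLt_toTm hq.isCode hr.isCode,
    tLt_toTm_of_lt_of_not_low hq.isCode hr.isCode hq.clean hr.clean⟩

end IsNotation

end PsiSum

/-- The leading principal term. -/
def leading : Tm → Tm
  | .add a _ => leading a
  | t => t

section leading

variable {i : ℕ} {a b c s t : Tm}

theorem leading_hd (t : Tm) : leading t.hd = leading t := by cases t <;> rfl

theorem leading_eq_self (h : a.IsPrincipal) : leading a = a := by
  cases a <;> first | rfl | exact h.elim

theorem leading_eq_psi_of_tLt (h : TLt t s) (ht : leading t = .psi i c) :
    ∃ j c', i ≤ j ∧ leading s = .psi j c' := by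
  induction h with
  | zero_lt | one_lt_psi0 => simp [leading] at ht
  | psi_mono => exact ⟨_, _, (Tm.psi.inj ht).1.ge, rfl⟩
  | psi_lt hij => exact ⟨_, _, (Tm.psi.inj ht).1 ▸ hij.le, rfl⟩
  | lex_hd _ _ ih => simpa only [leading_hd] using ih (by rwa [leading_hd])
  | lex_tl _ he => exact ⟨_, _, le_rfl, by rwa [← leading_hd, ← he, leading_hd]⟩

theorem leading_of_one_tLt (h : TLt t s) (ht : leading t = .one) :
    leading s = .one ∨ ∃ c, leading s = .psi 0 c := by
  induction h with
  | zero_lt | psi_mono | psi_lt => simp [leading] at ht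
  | one_lt_psi0 => exact Or.inr ⟨_, rfl⟩
  | lex_hd _ _ ih => simpa only [leading_hd] using ih (by rwa [leading_hd])
  | lex_tl _ he => exact Or.inl (by rwa [← leading_hd, ← he, leading_hd])

theorem leading_of_tLt_psi (h : TLt t (.psi i b)) {j : ℕ} (ht : leading t = .psi j c) :
    j < i ∨ (j = i ∧ TLt c b) := by
  generalize hs : Tm.psi i b = s at h
  induction h with
  | zero_lt | one_lt_psi0 => simp [leading] at ht
  | psi_mono h =>
    obtain ⟨rfl, rfl⟩ := Tm.psi.inj hs
    obtain ⟨rfl, rfl⟩ := Tm.psi.inj ht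
    exact Or.inr ⟨rfl, h⟩
  | psi_lt hij =>
    obtain ⟨rfl, -⟩ := Tm.psi.inj hs
    obtain ⟨rfl, -⟩ := Tm.psi.inj ht
    exact Or.inl hij
  | lex_hd _ _ ih => subst hs; exact ih (by rwa [leading_hd]) rfl
  | lex_tl _ _ h => subst hs; exact (PsiSum.not_tLt_zero h).elim

theorem tLt_of_psi_tLt_psi (h : TLt (.psi i a) (.psi i b)) : TLt a b :=
  (leading_of_tLt_psi h rfl).resolve_left (lt_irrefl i) |>.2

/-- The leading term is `0`, `1`, a `ψ₀`- or a `ψ₁`-term. -/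
def HasLowHead (t : Tm) : Prop :=
  ∀ i c, leading t = .psi i c → i ≤ 1

theorem HasLowHead.of_tLt (hs : HasLowHead s) (h : TLt t s) : HasLowHead t := by
  intro i c hc
  obtain ⟨j, c', hij, hs'⟩ := leading_eq_psi_of_tLt h hc
  exact hij.trans (hs _ _ hs')

theorem hasLowHead_psi_one : HasLowHead (.psi 1 a) := by
  intro i c hc
  exact (Tm.psi.inj hc).1.ge

theorem hasLowHead_of_tLt_Omega₂ (h : TLt t Omega2T) : HasLowHead t := by
  intro i c hc
  rcases leading_of_tLt_psi h hc with hi | ⟨-, hc⟩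
  · omega
  · exact (PsiSum.not_tLt_zero hc).elim

theorem InT.leading_tail (h : InT (.add a b)) : TLe (leading b) (leading a) := by
  rcases h with _ | _ | _ | ⟨ha, -, hb, -, hle⟩
  rw [leading_eq_self ha]
  rcases hb with _ | _ | _ | ⟨hp⟩
  · exact hle
  · exact hle
  · exact hle
  · rwa [leading, leading_eq_self hp]

theorem leading_idem (t : Tm) : leading (leading t) = leading t := by
  induction t with
  | add _ _ ih => exact ih
  | _ => rfl

theorem HasLowHead.tail (h : HasLowHead (.add a b)) (hab : InT (.add a b)) : HasLowHead b := by
  intro i c hc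
  rcases hab.leading_tail with hlt | heq
  · exact HasLowHead.of_tLt (s := leading a) (fun i c hc => h i c (by rwa [← leading_idem])) hlt
      i c (by rwa [leading_idem])
  · exact h i c (heq ▸ hc)

theorem hasLowHead_arg_tail (h : HasLowHead (.add a b)) (hab : InT (.add a b))
    (harg : ∀ c, leading (.add a b) = .psi 1 c → HasLowHead c) (hc : leading b = .psi 1 c) :
    HasLowHead c := by
  rcases hab.leading_tail with hlt | heq
  · obtain ⟨j, c', hj, ha⟩ := leading_eq_psi_of_tLt (i := 1) (c := c) hlt (by rwa [leading_idem])
    rw [leading_idem] at ha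
    obtain rfl : j = 1 := le_antisymm (h j c' ha) hj
    rw [hc, ha] at hlt
    exact (harg c' ha).of_tLt (tLt_of_psi_tLt_psi hlt)
  · exact harg c (heq ▸ hc)

theorem hasLowHead_of_mem_G1 : ∀ {b}, InOT b → HasLowHead b →
    (∀ c, leading b = .psi 1 c → HasLowHead c) → ∀ γ ∈ G1 b, HasLowHead γ
  | .zero, _, _, _, γ, hγ | .one, _, _, _, γ, hγ => by simp [G1] at hγ
  | .psi i a, ho, h, harg, γ, hγ => by
    obtain rfl | rfl : i = 0 ∨ i = 1 := by have := h i a rfl; omega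
    · simp [G1] at hγ
    · rcases Finset.mem_insert.1 hγ with rfl | hγ
      · exact harg γ rfl
      · rcases ho with _ | _ | _ | _ | ⟨-, hg⟩
        exact (harg a rfl).of_tLt (hg γ hγ)
  | .add a b, ho, h, harg, γ, hγ => by
    rcases ho with _ | _ | _ | ⟨hT, hoa, hob⟩
    rcases Finset.mem_union.1 hγ with hγ | hγ
    · exact hasLowHead_of_mem_G1 hoa h harg γ hγ
    · exact hasLowHead_of_mem_G1 hob (h.tail hT) (fun _ => hasLowHead_arg_tail h hT harg) γ hγ

/-- A term in which `ψ₂` does not occur. -/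
def IsPsiTwoFree : Tm → Prop
  | .zero => True
  | .one => True
  | .psi i a => i ≤ 1 ∧ IsPsiTwoFree a
  | .add a b => IsPsiTwoFree a ∧ IsPsiTwoFree b

theorem hasLowHead_of_mem_G1_of_tLt (hb : InOT b) (h : TLt b (.psi 1 Omega2T)) :
    ∀ γ ∈ G1 b, HasLowHead γ :=
  hasLowHead_of_mem_G1 hb (hasLowHead_psi_one.of_tLt h) fun _ hc =>
    hasLowHead_of_tLt_Omega₂ (((leading_of_tLt_psi h hc).resolve_left (lt_irrefl 1)).2)

theorem isPsiTwoFree_of_forall_mem_G : ∀ {t}, InOT t → HasLowHead t → (∀ γ ∈ G1 t, HasLowHead γ) →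
    (∀ γ ∈ G0 t, TLt γ (.psi 1 Omega2T)) → IsPsiTwoFree t
  | .zero, _, _, _, _ | .one, _, _, _, _ => trivial
  | .psi i b, ho, h, h1, h0 => by
    refine ⟨h i b rfl, ?_⟩
    obtain rfl | rfl : i = 0 ∨ i = 1 := by have := h i b rfl; omega
    · rcases ho with _ | _ | _ | _ | _ | ⟨hb, -, -⟩
      simp only [G0, Finset.mem_insert, forall_eq_or_imp] at h0
      exact isPsiTwoFree_of_forall_mem_G hb (hasLowHead_psi_one.of_tLt h0.1)
        (hasLowHead_of_mem_G1_of_tLt hb h0.1) h0.2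
    · rcases ho with _ | _ | _ | _ | ⟨hb, -⟩
      simp only [G1, Finset.mem_insert, forall_eq_or_imp] at h1
      exact isPsiTwoFree_of_forall_mem_G hb h1.1 h1.2 h0
  | .add a b, ho, h, h1, h0 => by
    simp only [G1, G0, Finset.mem_union, or_imp, forall_and] at h1 h0
    rcases ho with _ | _ | _ | ⟨hT, hoa, hob⟩
    exact ⟨isPsiTwoFree_of_forall_mem_G hoa h h1.1 h0.1,
      isPsiTwoFree_of_forall_mem_G hob (h.tail hT) h1.2 h0.2⟩

theorem InOT0.isPsiTwoFree (h : InOT0 t) : IsPsiTwoFree t :=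
  isPsiTwoFree_of_forall_mem_G h.1 (hasLowHead_psi_one.of_tLt h.2.1)
    (hasLowHead_of_mem_G1_of_tLt h.1 h.2.1) h.2.2

end leading

namespace PsiSum

variable {i j : ℕ} {a b q r s : PsiSum} {t : Tm}

theorem exists_toTm_eq : ∀ {t}, InOT t → IsPsiTwoFree t → ∃ q, IsCode q ∧ toTm q = t
  | .zero, _, _ => ⟨nil, trivial, rfl⟩
  | .one, _, _ => ⟨cons 0 nil nil, ⟨Nat.zero_le 2, fun _ => rfl, trivial, trivial⟩, rfl⟩
  | .psi i b, ho, h => by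
    have hb : InOT b := by cases ho <;> assumption
    obtain ⟨q, hq, rfl⟩ := exists_toTm_eq hb h.2
    exact ⟨cons (i + 1) q nil, ⟨Nat.succ_le_succ h.1, nofun, hq, trivial⟩, toTm_single ..⟩
  | .add a b, ho, h => by
    rcases ho with _ | _ | _ | ⟨hT, hoa, hob⟩
    rcases hT with _ | _ | _ | ⟨hp, -, -, hb, -⟩
    obtain ⟨q, hq, rfl⟩ := exists_toTm_eq hoa h.1
    obtain ⟨r, hr, rfl⟩ := exists_toTm_eq hob h.2
    rcases q with _ | ⟨i, c, s⟩
    · exact hp.elim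
    obtain rfl : s = nil := by
      by_contra hs
      rw [toTm_cons hs] at hp
      exact hp
    exact ⟨cons i c r, ⟨hq.1, hq.2.1, hq.2.2.1, hr⟩, by
      rw [toTm_cons (toTm_eq_zero_iff.not.1 hb), toTm_single]⟩

theorem coeffsBelow_of_forall_mem_G0 (ha : IsCode a) : ∀ {q}, IsCode q →
    (∀ γ ∈ G0 (toTm q), TLt γ (toTm a)) → CoeffsBelow 1 q a
  | nil, _, _ => trivial
  | cons i c r, hq, h => by
    simp only [mem_G0_toTm_cons, or_imp, forall_and] at h
    refine ⟨fun hi => ?_, coeffsBelow_of_forall_mem_G0 ha hq.2.2.2 h.2⟩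
    obtain rfl | rfl : i = 1 ∨ i = 2 := by have := hq.1; omega
    · simp only [collapse, G0, Finset.mem_insert, forall_eq_or_imp] at h
      exact ⟨fun _ => lt_of_tLt_toTm hq.2.2.1 ha h.1.1,
        coeffsBelow_of_forall_mem_G0 ha hq.2.2.1 h.1.2⟩
    · exact ⟨nofun, coeffsBelow_of_forall_mem_G0 ha hq.2.2.1 h.1⟩

theorem inOT_head (h : InOT (toTm (cons i a r))) : InOT (collapse i (toTm a)) := by
  by_cases hr : r = nil
  · rwa [hr, toTm_single] at h
  · rw [toTm_cons hr] at h
    rcases h with _ | _ | _ | ⟨-, h, -⟩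
    exact h

theorem inOT_tail (h : InOT (toTm (cons i a r))) : InOT (toTm r) := by
  by_cases hr : r = nil
  · rw [hr]; exact .zero
  · rw [toTm_cons hr] at h
    rcases h with _ | _ | _ | ⟨-, -, h⟩
    exact h

theorem inOT_arg (hq : IsCode (cons i a r)) (h : InOT (toTm (cons i a r))) : InOT (toTm a) := by
  have hp := inOT_head h
  cases i with
  | zero => rw [hq.2.1 rfl]; exact .zero
  | succ i => rw [collapse] at hp; cases hp <;> assumption

theorem tLe_of_inOT (h : InOT (toTm (cons i a (cons j b s)))) :
    TLe (toTm (cons j b nil)) (toTm (cons i a nil)) := by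
  rw [toTm_cons (r := cons j b s) nofun] at h
  rcases h with _ | _ | _ | ⟨hT, -, -⟩
  rcases hT with _ | _ | _ | ⟨-, -, -, -, hle⟩
  rwa [← hd_toTm j b s, toTm_single]

theorem standard_of_inOT : ∀ {q}, IsCode q → InOT (toTm q) → Standard 2 q
  | nil, _, _ => trivial
  | cons i a r, hq, h => by
    refine ⟨hq.1, hq.2.1, standard_of_inOT hq.2.2.1 (inOT_arg hq h),
      standard_of_inOT hq.2.2.2 (inOT_tail h), ?_, ?_⟩
    · rcases r with _ | ⟨j, b, s⟩
      · trivial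
      rcases tLe_of_inOT h with hlt | heq
      · refine headLE_of_lt_single (r := cons j b s) ?_
        have := lt_of_tLt_toTm hq.2.2.2.single hq.single hlt
        simpa only [cons_lt_cons, not_lt_nil, and_false, or_false] using this
      · obtain ⟨rfl, rfl, -⟩ := cons.inj (toTm_inj hq.2.2.2.single hq.single heq)
        exact Or.inr ⟨rfl, le_rfl⟩
    · rintro ⟨hi, hi'⟩
      obtain rfl : i = 1 := by omega
      rcases inOT_head h with _ | _ | _ | _ | _ | ⟨-, hg, -⟩
      exact coeffsBelow_of_forall_mem_G0 hq.2.2.1 hq.2.2.1 hg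

theorem leading_toTm (i : ℕ) (a r : PsiSum) :
    leading (toTm (cons i a r)) = collapse i (toTm a) := by
  rw [← leading_hd, hd_toTm, toTm_single, leading_eq_self (isPrincipal_collapse ..)]

theorem leading_toTm_eq_one (hq : q ≠ nil) (h0 : headIdx q = 0) : leading (toTm q) = .one := by
  rcases q with _ | ⟨i, a, r⟩
  · exact absurd rfl hq
  · rw [leading_toTm, show i = 0 from h0, collapse]

theorem headIdx_le_one_of_one_tLt (h : TLt t (toTm q)) (ht : leading t = .one) :
    headIdx q ≤ 1 := by
  rcases q with _ | ⟨_ | i, a, r⟩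
  · exact Nat.zero_le _
  · exact Nat.zero_le _
  · have := leading_of_one_tLt h ht
    simp only [leading_toTm, collapse, reduceCtorEq, Tm.psi.injEq, false_or] at this
    obtain ⟨-, rfl, -⟩ := this
    exact le_rfl

theorem headFits_false_of_tLt (h : TLt (toTm q) (toTm r)) (hr : 2 ≤ headIdx r) :
    HeadFits False q := by
  rcases q with _ | ⟨i, a, s⟩
  · trivial
  · exact ⟨fun h0 => absurd (headIdx_le_one_of_one_tLt h (leading_toTm_eq_one nofun h0)) (by omega),
      fun _ => not_false⟩

theorem not_mem_G1_toTm : ∀ {q}, Standard 2 q → headIdx q ≤ 1 → ∀ γ, γ ∉ G1 (toTm q)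
  | nil, _, _, γ => by simp [toTm, G1]
  | cons i a r, hq, h, γ => by
    rw [mem_G1_toTm_cons, not_or]
    refine ⟨?_, not_mem_G1_toTm hq.tail (hq.headIdx_tail_le.trans h) γ⟩
    obtain rfl | rfl : i = 0 ∨ i = 1 := Nat.le_one_iff_eq_zero_or_eq_one.1 h
    all_goals simp [collapse, G1]

theorem leading_ne_one_of_mem_G1 (hq : Standard 2 (cons 2 a r)) (h : InOT (toTm (cons 2 a r))) :
    ∀ γ ∈ G1 (toTm a), leading γ ≠ .one := by
  intro γ hγ hone
  rcases inOT_head h with _ | _ | _ | _ | ⟨-, hg⟩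
  exact not_mem_G1_toTm hq.arg (headIdx_le_one_of_one_tLt (hg γ hγ) hone) γ hγ

theorem headFits_tail_of_inOT (hq : Standard 2 (cons i a r)) (h : InOT (toTm (cons i a r))) :
    HeadFits (i ≤ 1) r := by
  rcases r with _ | ⟨j, b, s⟩
  · trivial
  refine ⟨?_, fun hj hi => absurd (hq.headIdx_tail_le.trans hi) (Nat.not_le.2 hj)⟩
  rintro rfl
  rcases tLe_of_inOT h with hlt | heq
  · exact headIdx_le_one_of_one_tLt hlt (leading_toTm_eq_one nofun rfl)
  · rcases i with _ | i
    · exact Nat.zero_le 1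
    · simp [toTm_single, collapse] at heq

theorem headFits_arg_tail_of_inOT (hq : Standard 2 (cons 2 a (cons 2 b s)))
    (h : InOT (toTm (cons 2 a (cons 2 b s)))) : HeadFits (headIdx a ≤ 1) b := by
  rcases b with _ | ⟨j, c, u⟩
  · trivial
  have hba : cons j c u ≤ a := (hq.headLE.resolve_left (lt_irrefl 2)).2
  refine ⟨?_, fun hj ha => absurd ((headIdx_mono hba).trans ha) (Nat.not_le.2 hj)⟩
  rintro rfl
  rcases tLe_of_inOT h with hlt | heq
  · rw [toTm_single, toTm_single] at hlt
    exact headIdx_le_one_of_one_tLt (tLt_of_psi_tLt_psi hlt) (leading_toTm_eq_one nofun rfl)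
  · have := toTm_inj hq.tail.isCode.single hq.isCode.single heq
    obtain ⟨-, rfl, -⟩ := cons.inj this
    exact Nat.zero_le 1

theorem headFits_false_arg_of_tLt (h : TLt (toTm (cons 2 b s)) (.psi 1 Omega2T)) :
    HeadFits False b := by
  have hb := (leading_of_tLt_psi h (leading_toTm 2 b s)).resolve_left (lt_irrefl 1)
  rw [← toTm_Omega₂] at hb
  exact headFits_false_of_tLt hb.2 (by simp [headIdx])

theorem clean_of_inOT : ∀ {q} {inner low argLow : Prop}, Standard 2 q → InOT (toTm q) →
    HeadFits low q → (¬ inner → ∀ a r, q = cons 2 a r → HeadFits argLow a) →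
    (inner → ¬ argLow ∧ ∀ γ ∈ G1 (toTm q), leading γ ≠ .one) →
    (∀ γ ∈ G0 (toTm q), TLt γ (.psi 1 Omega2T)) → Clean inner low argLow q
  | nil, _, _, _, _, _, _, _, _, _ => trivial
  | cons i a r, inner, _, argLow, hq, h, hhead, harg, hinner, h0 => by
    have hoa := inOT_arg hq.isCode h
    simp only [mem_G0_toTm_cons, or_imp, forall_and] at h0
    refine ⟨hhead, ?_, clean_of_inOT hq.tail (inOT_tail h) (headFits_tail_of_inOT hq h) ?_ ?_ h0.2⟩
    · obtain rfl | rfl | rfl : i = 0 ∨ i = 1 ∨ i = 2 := by have := hq.idx_le; omega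
      · rw [hq.arg_eq_nil]; trivial
      · simp only [collapse, G0, Finset.mem_insert, forall_eq_or_imp] at h0
        have ha := h0.1.1
        rw [← toTm_psi_one_Omega₂] at ha
        simpa only [Nat.not_ofNat_le_one, false_and] using
          clean_of_inOT hq.arg hoa (headFits_false_of_tLt ha le_rfl)
            (fun _ b s hbs => headFits_false_arg_of_tLt (hbs ▸ h0.1.1)) False.elim h0.1.2
      · suffices Clean True argLow False a by simpa only [le_refl, true_and] using this
        refine clean_of_inOT hq.arg hoa ?_ (fun hn => absurd trivial hn)
          (fun _ => ⟨not_false, leading_ne_one_of_mem_G1 hq h⟩) h0.1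
        by_cases hin : inner
        · rcases a with _ | ⟨j, b, s⟩
          · trivial
          have hmem : toTm (cons j b s) ∈ G1 (toTm (cons 2 (cons j b s) r)) :=
            mem_G1_toTm_cons.2 (Or.inl (Finset.mem_insert_self ..))
          exact ⟨fun hj => absurd (leading_toTm_eq_one (q := cons j b s) nofun hj)
            ((hinner hin).2 _ hmem), fun _ => (hinner hin).1⟩
        · exact harg hin a r rfl
    · rintro hin b s rfl
      obtain rfl : i = 2 := le_antisymm hq.idx_le hq.headIdx_tail_le
      simpa only [le_refl, hin, not_false_iff, true_and] using headFits_arg_tail_of_inOT hq h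
    · exact fun hin => ⟨fun hn => hn.2.1 hin,
        fun γ hγ => (hinner hin).2 γ (mem_G1_toTm_cons.2 (Or.inr hγ))⟩

theorem exists_isNotation (h : InOT0 t) (ht : TLt t OmegaT) : ∃ q, IsNotation q ∧ toTm q = t := by
  obtain ⟨q, hq, rfl⟩ := exists_toTm_eq h.1 h.isPsiTwoFree
  have hs := standard_of_inOT hq h.1
  rw [← toTm_Omega] at ht
  have hlt := lt_of_tLt_toTm (r := cons 2 nil nil) hq ⟨le_rfl, nofun, trivial, trivial⟩ ht
  have hidx : headIdx q ≤ 1 := by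
    rcases q with _ | ⟨i, a, r⟩
    · exact Nat.zero_le _
    · simp only [cons_lt_cons, not_lt_nil, and_false, or_false] at hlt
      exact Nat.le_of_lt_succ hlt
  refine ⟨q, ⟨⟨hs, hidx⟩, clean_of_inOT hs h.1 (headFits_false_of_tLt ht le_rfl) ?_ False.elim
    h.2.2⟩, rfl⟩
  rintro - a r rfl
  simp [headIdx] at hidx

end PsiSum

/-! ## Base change on sums -/

namespace PsiSum

variable {i : ℕ} {a b c q r : PsiSum} {φ : ℕ → ℕ} {lag lag' : Bool}

/-- Sums in which, at every depth, the components of index `0` form a numeral that ends the sum. -/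
def HasNumeralTails : PsiSum → Prop
  | nil => True
  | cons i a r =>
    (i = 0 → a = nil ∧ r = numeral (length r)) ∧ HasNumeralTails a ∧ HasNumeralTails r

namespace HasNumeralTails

theorem arg (h : HasNumeralTails (cons i a r)) : HasNumeralTails a := h.2.1

theorem tail (h : HasNumeralTails (cons i a r)) : HasNumeralTails r := h.2.2

theorem cons_zero_eq (h : HasNumeralTails (cons 0 a r)) : cons 0 a r = numeral (length r + 1) := by
  obtain ⟨rfl, hr⟩ := h.1 rfl
  rw [numeral_succ, ← hr]

end HasNumeralTails

theorem Standard.hasNumeralTails {L : ℕ} : ∀ {q : PsiSum}, Standard L q → HasNumeralTails q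
  | nil, _ => trivial
  | cons i a r, h => by
    refine ⟨?_, h.arg.hasNumeralTails, h.tail.hasNumeralTails⟩
    rintro rfl
    exact ⟨h.arg_eq_nil, h.tail.eq_numeral (Nat.le_zero.1 h.headIdx_tail_le)⟩

/-- The action of a base change `φ` of numbers on sums, which replaces every numeral `m` by `φ m`.
With `lag`, the numeral `m + 1` at which the descent along last summands ends becomes `φ m + 1`
instead of `φ (m + 1)`: this is the least value that exceeds all base changes of smaller sums. -/
def baseChange (φ : ℕ → ℕ) : Bool → PsiSum → PsiSum
  | _, nil => nil
  | lag, cons 0 _ r => numeral (if lag then φ (length r) + 1 else φ (length r + 1))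
  | lag, cons (i + 1) a r =>
    cons (i + 1) (baseChange φ (lag && decide (r = nil)) a) (baseChange φ lag r)

/-- The monotonicity properties of base change on numbers. -/
structure IsBaseMap (φ : ℕ → ℕ) : Prop where
  strictMono : StrictMono φ
  map_zero : φ 0 = 0

theorem baseChange_nil (φ : ℕ → ℕ) (lag : Bool) : baseChange φ lag nil = nil := rfl

theorem baseChange_cons (hi : 1 ≤ i) : baseChange φ lag (cons i a r) =
    cons i (baseChange φ (lag && decide (r = nil)) a) (baseChange φ lag r) := by
  obtain ⟨i, rfl⟩ := Nat.exists_eq_add_of_le' hi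
  rfl

theorem baseChange_false_cons (hi : 1 ≤ i) :
    baseChange φ false (cons i a r) = cons i (baseChange φ false a) (baseChange φ false r) :=
  baseChange_cons hi

theorem baseChange_single (hi : 1 ≤ i) :
    baseChange φ lag (cons i a nil) = cons i (baseChange φ lag a) nil := by
  simp [baseChange_cons hi, baseChange_nil]

theorem baseChange_true_cons (hi : 1 ≤ i) (hr : r ≠ nil) :
    baseChange φ true (cons i a r) = cons i (baseChange φ false a) (baseChange φ true r) := by
  simp [baseChange_cons hi, hr]

namespace IsBaseMap

theorem le_apply (h : IsBaseMap φ) (n : ℕ) : n ≤ φ n := h.strictMono.le_apply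

theorem exists_baseChange_eq_numeral_succ (h : IsBaseMap φ) (lag : Bool) (a r : PsiSum) :
    ∃ n, length r ≤ n ∧ baseChange φ lag (cons 0 a r) = numeral (n + 1) := by
  cases lag with
  | false =>
    have hle := h.le_apply (length r + 1)
    refine ⟨φ (length r + 1) - 1, by omega, ?_⟩
    rw [Nat.sub_add_cancel (by omega)]
    rfl
  | true => exact ⟨φ (length r), h.le_apply _, rfl⟩

theorem baseChange_numeral (h : IsBaseMap φ) (n : ℕ) :
    baseChange φ false (numeral n) = numeral (φ n) := by
  cases n with
  | zero => rw [h.map_zero]; rfl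
  | succ n => simp [numeral_succ, baseChange]

theorem headIdx_baseChange (h : IsBaseMap φ) (lag : Bool) :
    ∀ q, headIdx (baseChange φ lag q) = headIdx q
  | nil => rfl
  | cons 0 a r => by
    obtain ⟨n, -, hn⟩ := h.exists_baseChange_eq_numeral_succ lag a r
    rw [hn]
    rfl
  | cons (_ + 1) _ _ => rfl

theorem baseChange_eq_nil_iff (h : IsBaseMap φ) : baseChange φ lag q = nil ↔ q = nil := by
  rcases q with _ | ⟨_ | i, a, r⟩
  · simp [baseChange_nil]
  · obtain ⟨n, -, hn⟩ := h.exists_baseChange_eq_numeral_succ lag a r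
    simp [hn, numeral_succ]
  · simp [baseChange]

theorem baseChange_true_le_false (h : IsBaseMap φ) : ∀ q, baseChange φ true q ≤ baseChange φ false q
  | nil => le_rfl
  | cons 0 _ _ => numeral_le_numeral.2 (h.strictMono (Nat.lt_succ_self _))
  | cons (i + 1) a r => by
    rw [baseChange_false_cons i.succ_pos]
    by_cases hr : r = nil
    · subst hr
      rw [baseChange_single i.succ_pos, baseChange_nil, single_le_single]
      exact h.baseChange_true_le_false a
    · rw [baseChange_true_cons i.succ_pos hr, cons_le_cons_right]
      exact h.baseChange_true_le_false r

theorem baseChange_le_false (h : IsBaseMap φ) (lag : Bool) (q : PsiSum) :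
    baseChange φ lag q ≤ baseChange φ false q := by
  cases lag
  · exact le_rfl
  · exact h.baseChange_true_le_false q

theorem baseChange_true_le (h : IsBaseMap φ) (lag : Bool) (q : PsiSum) :
    baseChange φ true q ≤ baseChange φ lag q := by
  cases lag
  · exact h.baseChange_true_le_false q
  · exact le_rfl

theorem baseChange_false_lt_true (h : IsBaseMap φ) : ∀ {a b : PsiSum}, HasNumeralTails a →
    HasNumeralTails b → a < b → baseChange φ false a < baseChange φ true b
  | _, nil, _, _, hlt => absurd hlt (not_lt_nil _)
  | nil, cons j b s, _, _, _ => nil_lt_iff.2 (h.baseChange_eq_nil_iff.not.2 nofun)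
  | cons i a r, cons j b s, ha, hb, hlt => by
    rcases cons_lt_cons.1 hlt with hij | ⟨rfl, hm⟩
    · rw [baseChange_cons (i := j) (by omega)]
      apply lt_cons_of_headIdx_lt
      rwa [h.headIdx_baseChange]
    · rcases Nat.eq_zero_or_pos i with rfl | hi
      · rw [ha.cons_zero_eq, hb.cons_zero_eq, numeral_lt_numeral] at hlt
        have hle := h.strictMono.monotone (show length r + 1 ≤ length s by omega)
        exact numeral_lt_numeral.2 (Nat.lt_succ_of_le hle)
      · rw [baseChange_cons hi, baseChange_cons hi, cons_lt_cons]
        refine Or.inr ⟨rfl, ?_⟩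
        rcases hm with hm | ⟨rfl, hm⟩
        · exact Or.inl <|
            (h.baseChange_false_lt_true ha.arg hb.arg hm).trans_le (h.baseChange_true_le _ _)
        · have hs : s ≠ nil := by rintro rfl; exact not_lt_nil _ hm
          exact Or.inr ⟨by simp [hs], h.baseChange_false_lt_true ha.tail hb.tail hm⟩

theorem baseChange_lt (h : IsBaseMap φ) (ha : HasNumeralTails a) (hb : HasNumeralTails b)
    (hlt : a < b) : baseChange φ lag a < baseChange φ lag' b :=
  (h.baseChange_le_false lag a).trans_lt
    ((h.baseChange_false_lt_true ha hb hlt).trans_le (h.baseChange_true_le lag' b))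

theorem baseChange_le (h : IsBaseMap φ) (ha : HasNumeralTails a) (hb : HasNumeralTails b)
    (hle : a ≤ b) : baseChange φ false a ≤ baseChange φ false b := by
  rcases hle.lt_or_eq with hlt | rfl
  · exact (h.baseChange_lt ha hb hlt).le
  · exact le_rfl

theorem coeffsBelow_baseChange (h : IsBaseMap φ) (hc : HasNumeralTails c) :
    ∀ {q}, HasNumeralTails q → CoeffsBelow 1 q c →
      CoeffsBelow 1 (baseChange φ false q) (baseChange φ false c)
  | nil, _, _ => trivial
  | cons 0 _ _, _, _ => coeffsBelow_numeral _ _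
  | cons (i + 1) a r, hq, hg => by
    rw [baseChange_false_cons i.succ_pos]
    obtain ⟨ha, hr⟩ := hg
    exact ⟨fun hi => ⟨fun e => h.baseChange_lt hq.arg hc ((ha hi).1 e),
      h.coeffsBelow_baseChange hc hq.arg (ha hi).2⟩, h.coeffsBelow_baseChange hc hq.tail hr⟩

theorem headLE_baseChange (h : IsBaseMap φ) (hi : 1 ≤ i) (ha : HasNumeralTails a) :
    ∀ {r}, HasNumeralTails r → HeadLE r i a →
      HeadLE (baseChange φ false r) i (baseChange φ false a)
  | nil, _, _ => trivial
  | cons 0 b s, _, _ => by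
    obtain ⟨n, -, hn⟩ := h.exists_baseChange_eq_numeral_succ false b s
    rw [hn]
    exact Or.inl hi
  | cons (j + 1) b s, hr, hle => by
    rw [baseChange_false_cons j.succ_pos]
    exact hle.imp_right fun hj => ⟨hj.1, h.baseChange_le hr.arg ha hj.2⟩

theorem headLE_of_baseChange (h : IsBaseMap φ) (hi : 1 ≤ i) (ha : HasNumeralTails a) :
    ∀ {r}, HasNumeralTails r → HeadLE (baseChange φ lag r) i (baseChange φ lag' a) → HeadLE r i a
  | nil, _, _ => trivial
  | cons 0 _ _, _, _ => Or.inl hi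
  | cons (j + 1) b s, hr, hle => by
    rw [baseChange_cons j.succ_pos] at hle
    exact hle.imp_right fun hj =>
      ⟨hj.1, not_lt.1 fun hlt => hj.2.not_gt (h.baseChange_lt ha hr.arg hlt)⟩

theorem standard_baseChange (h : IsBaseMap φ) :
    ∀ {q}, Standard 2 q → Standard 2 (baseChange φ false q)
  | nil, _ => trivial
  | cons 0 _ _, _ => standard_one.replicate _
  | cons (i + 1) a r, hq => by
    rw [baseChange_false_cons i.succ_pos]
    have ha := hq.arg.hasNumeralTails
    refine ⟨hq.idx_le, by omega, h.standard_baseChange hq.arg, h.standard_baseChange hq.tail,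
      h.headLE_baseChange i.succ_pos ha hq.tail.hasNumeralTails hq.headLE, fun hi => ?_⟩
    obtain rfl : i = 0 := by omega
    exact h.coeffsBelow_baseChange ha ha (hq.coeffsBelow hi)

theorem clean_baseChange (h : IsBaseMap φ) : ∀ {q lag inner low argLow},
    Clean inner low argLow q → Clean inner low argLow (baseChange φ lag q)
  | nil, _, _, _, _, _ => trivial
  | cons 0 _ _, _, _, _, _, hq => Clean.numeral (hq.1.1 rfl) _
  | cons (i + 1) a r, lag, _, _, _, hq => by
    rw [baseChange_cons i.succ_pos]
    refine ⟨hq.1, h.clean_baseChange hq.2.1, ?_⟩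
    rw [h.headIdx_baseChange]
    exact h.clean_baseChange hq.2.2

theorem clean_of_baseChange (h : IsBaseMap φ) : ∀ {q lag inner low argLow},
    HasNumeralTails q → Clean inner low argLow (baseChange φ lag q) → Clean inner low argLow q
  | nil, _, _, _, _, _, _ => trivial
  | cons 0 a r, lag, _, _, _, hn, hq => by
    obtain ⟨n, -, he⟩ := h.exists_baseChange_eq_numeral_succ lag a r
    rw [he] at hq
    rw [hn.cons_zero_eq]
    exact Clean.numeral (hq.headFits.1 rfl) _
  | cons (i + 1) a r, lag, _, _, _, hn, hq => by
    rw [baseChange_cons i.succ_pos] at hq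
    obtain ⟨hhead, ha, hr⟩ := hq
    rw [h.headIdx_baseChange] at hr
    exact ⟨hhead, h.clean_of_baseChange hn.arg ha, h.clean_of_baseChange hn.tail hr⟩

theorem isNotation_baseChange (h : IsBaseMap φ) (hq : IsNotation q) :
    IsNotation (baseChange φ false q) :=
  ⟨⟨h.standard_baseChange hq.standard, (h.headIdx_baseChange _ _).trans_le hq.headIdx_le⟩,
    h.clean_baseChange hq.clean⟩

/- The flags with which `q` and `c` are changed may differ, so equality of a coefficient with `c`
is not excluded by monotonicity; the size bound excludes it. -/
theorem coeffsBelow_of_baseChange (h : IsBaseMap φ) (hc : HasNumeralTails c) : ∀ {q lag},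
    HasNumeralTails q → size q ≤ size c →
      CoeffsBelow 1 (baseChange φ lag q) (baseChange φ lag' c) → CoeffsBelow 1 q c
  | nil, _, _, _, _ => trivial
  | cons 0 a r, _, hq, _, _ => by
    rw [hq.cons_zero_eq]
    exact coeffsBelow_numeral _ _
  | cons (i + 1) a r, lag, hq, hs, hg => by
    rw [baseChange_cons i.succ_pos] at hg
    simp only [size] at hs
    refine ⟨fun hi => ⟨fun e => ?_, h.coeffsBelow_of_baseChange hc hq.arg (by omega) (hg.1 hi).2⟩,
      h.coeffsBelow_of_baseChange hc hq.tail (by omega) hg.2⟩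
    rcases lt_trichotomy a c with hlt | rfl | hlt
    · exact hlt
    · omega
    · exact absurd ((hg.1 hi).1 e) (h.baseChange_lt hc hq.arg hlt).not_gt

theorem standard_of_baseChange (h : IsBaseMap φ) : ∀ {q lag},
    HasNumeralTails q → Standard 2 (baseChange φ lag q) → Standard 2 q
  | nil, _, _, _ => trivial
  | cons 0 a r, _, hn, _ => by
    rw [hn.cons_zero_eq]
    exact standard_one.replicate _
  | cons (i + 1) a r, lag, hn, hq => by
    rw [baseChange_cons i.succ_pos] at hq
    refine ⟨hq.idx_le, by omega, h.standard_of_baseChange hn.arg hq.arg,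
      h.standard_of_baseChange hn.tail hq.tail,
      h.headLE_of_baseChange i.succ_pos hn.arg hn.tail hq.headLE, fun hi => ?_⟩
    obtain rfl : i = 0 := by omega
    exact h.coeffsBelow_of_baseChange hn.arg hn.arg le_rfl (hq.coeffsBelow hi)

theorem isNotation_of_baseChange (h : IsBaseMap φ) (hn : HasNumeralTails q)
    (hq : IsNotation (baseChange φ lag q)) : IsNotation q :=
  ⟨⟨h.standard_of_baseChange hn hq.standard,
      (h.headIdx_baseChange _ _).symm.trans_le hq.headIdx_le⟩,
    h.clean_of_baseChange hn hq.clean⟩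

end IsBaseMap

/-- The number of components of positive index, at any depth. Base change preserves it. -/
def psiCount : PsiSum → ℕ
  | nil => 0
  | cons i a r => psiCount a + psiCount r + if i = 0 then 0 else 1

theorem psiCount_numeral (n : ℕ) : psiCount (numeral n) = 0 := by
  induction n with
  | zero => rfl
  | succ n ih => simp [numeral_succ, psiCount, ih]

theorem IsBaseMap.psiCount_baseChange (h : IsBaseMap φ) : ∀ {q lag},
    HasNumeralTails q → psiCount (baseChange φ lag q) = psiCount q
  | nil, _, _ => rfl
  | cons 0 a r, _, hn => by
    rw [hn.cons_zero_eq, psiCount_numeral]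
    exact psiCount_numeral _
  | cons (i + 1) a r, _, hn => by
    simp only [baseChange, psiCount, h.psiCount_baseChange hn.arg, h.psiCount_baseChange hn.tail]

theorem psiCount_le_size : ∀ q, psiCount q ≤ size q
  | nil => le_rfl
  | cons i a r => by
    have ha := psiCount_le_size a
    have hr := psiCount_le_size r
    simp only [psiCount, size]
    split_ifs <;> omega

theorem padLE_numeral : ∀ {m n : ℕ}, m ≤ n → PadLE (numeral m) (numeral n)
  | 0, n, _ => .nil_numeral n
  | m + 1, 0, h => absurd h (by omega)
  | m + 1, n + 1, h => ⟨rfl, trivial, padLE_numeral (by omega)⟩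

theorem IsBaseMap.padLE_baseChange (h : IsBaseMap φ) : ∀ {q lag},
    HasNumeralTails q → PadLE q (baseChange φ lag q)
  | nil, _, _ => trivial
  | cons 0 a r, lag, hn => by
    obtain ⟨n, hle, he⟩ := h.exists_baseChange_eq_numeral_succ lag a r
    rw [he, hn.cons_zero_eq]
    exact padLE_numeral (by omega)
  | cons (i + 1) a r, _, hn => ⟨rfl, h.padLE_baseChange hn.arg, h.padLE_baseChange hn.tail⟩

theorem append_numeral_one (n : ℕ) : append (numeral n) (cons 0 nil nil) = numeral (n + 1) := by
  induction n with
  | zero => rfl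
  | succ n ih => rw [numeral_succ, append, ih]; rfl

theorem length_append_one : ∀ c, length (append c (cons 0 nil nil)) = length c + 1
  | nil => rfl
  | cons i a r => by rw [append, length, length, length_append_one r]

theorem HasNumeralTails.append_one : ∀ {c : PsiSum}, HasNumeralTails c →
    HasNumeralTails (append c (cons 0 nil nil))
  | nil, _ => ⟨fun _ => ⟨rfl, rfl⟩, trivial, trivial⟩
  | cons i a r, h => by
    refine ⟨fun hi => ⟨(h.1 hi).1, ?_⟩, h.arg, h.tail.append_one⟩
    rw [length_append_one, (h.1 hi).2, append_numeral_one, length_replicate]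

theorem IsBaseMap.baseChange_append_one (h : IsBaseMap φ) : ∀ {c}, HasNumeralTails c →
    baseChange φ true (append c (cons 0 nil nil)) = append (baseChange φ false c) (cons 0 nil nil)
  | nil, _ => by simp [append, baseChange, length, h.map_zero, replicate]
  | cons 0 a r, _ => by simp [append, baseChange, length_append_one, append_numeral_one]
  | cons (i + 1) a r, hn => by
    have hne : append r (cons 0 nil nil) ≠ nil := append_ne_nil (by simp)
    rw [append, baseChange_true_cons i.succ_pos hne, h.baseChange_append_one hn.tail]
    rfl

end PsiSum

/-! ## Base change and fundamental sequences -/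

namespace PsiSum

variable {i n k : ℕ} {a b c q s s' t t' : PsiSum} {φ g : ℕ → ℕ} {lag : Bool}

namespace Spine

variable {l : Spine}

/-- Spines which do not run through a numeral and whose side components have numeral tails. -/
def AvoidsOnes : Spine → Prop
  | hole => True
  | after i b l => 1 ≤ i ∧ AvoidsOnes l ∧ HasNumeralTails b
  | under _ l => AvoidsOnes l

/-- Base change of the side components of a spine. -/
def baseChange (φ : ℕ → ℕ) : Spine → Spine
  | hole => hole
  | after i b l => after i (PsiSum.baseChange φ false b) (baseChange φ l)
  | under i l => under i (baseChange φ l)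

theorem one_le_headIdx_fill (ht : 1 ≤ headIdx t) :
    ∀ {l : Spine}, Standard 2 (l.fill t) → 1 ≤ headIdx (l.fill t)
  | hole, _ => ht
  | after _ _ _, h => (one_le_headIdx_fill ht h.tail).trans h.headIdx_tail_le
  | under _ _, _ => Nat.le_add_left _ _

theorem avoidsOnes_of_standard_fill (ht : 1 ≤ headIdx t) :
    ∀ {l : Spine}, Standard 2 (l.fill t) → AvoidsOnes l
  | hole, _ => trivial
  | after _ _ _, h =>
    ⟨one_le_headIdx_fill ht h, avoidsOnes_of_standard_fill ht h.tail, h.arg.hasNumeralTails⟩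
  | under _ l, h => avoidsOnes_of_standard_fill ht (l := l) h.arg

theorem AvoidsOnes.baseChange_fill (ht : t ≠ nil) : ∀ {l : Spine}, l.AvoidsOnes →
    PsiSum.baseChange φ true (l.fill t) = (l.baseChange φ).fill (PsiSum.baseChange φ true t)
  | hole, _ => rfl
  | after i b l, hl => by
    rw [fill, baseChange_true_cons hl.1 (fill_ne_nil ht), hl.2.1.baseChange_fill ht]
    rfl
  | under i l, hl => by
    rw [fill, baseChange_single i.succ_pos, AvoidsOnes.baseChange_fill (l := l) ht hl]
    rfl

theorem AvoidsPsiZero.baseChange (hl : l.AvoidsPsiZero) : (l.baseChange φ).AvoidsPsiZero := by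
  induction l with
  | hole => trivial
  | after i b l ih => exact ih hl
  | under i l ih => exact ⟨hl.1, ih hl.2⟩

end Spine

open Spine

theorem OmegaBase.one_le_headIdx (h : OmegaBase t) : 1 ≤ headIdx t := by
  cases h with
  | omega | collapse => exact le_rfl
  | psi_succ i a hi => exact hi

theorem exists_eq_cons_of_mem_Ico (hs : cons i b s ≤ q) (ht : q < cons i c t) :
    ∃ a r, q = cons i a r := by
  cases q with
  | nil => simp at hs
  | cons j a r =>
    obtain rfl : j = i := le_antisymm (headIdx_mono ht.le) (headIdx_mono hs)
    exact ⟨a, r, rfl⟩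

theorem IsBaseMap.exists_eq_cons_of_baseChange_mem_Ico (h : IsBaseMap φ)
    (hs : cons i b s ≤ baseChange φ lag q) (ht : baseChange φ lag q < cons i c t) :
    ∃ a r, q = cons i a r := by
  obtain ⟨a, r, he⟩ := exists_eq_cons_of_mem_Ico hs ht
  have hidx : headIdx q = i := by rw [← h.headIdx_baseChange lag, he, headIdx]
  cases q with
  | nil => simp [baseChange_nil] at he
  | cons j a' r' => exact ⟨a', r', by rw [← hidx, headIdx]⟩

/-- If the base change of a standard sum falls into `[s, t)`, then the sum lies below some `c` whose
lagging base change is `t`. -/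
def Lifts (φ : ℕ → ℕ) (s t : PsiSum) : Prop :=
  ∀ q, Standard 2 q → s ≤ baseChange φ false q → baseChange φ false q < t →
    ∃ c, HasNumeralTails c ∧ t = baseChange φ true c ∧ q < c

namespace Lifts

theorem cons (h : IsBaseMap φ) (hi : 1 ≤ i) (hl : Lifts φ s t) :
    Lifts φ (cons i b s) (cons i b t) := by
  intro q hq hs ht
  obtain ⟨a, r, rfl⟩ := h.exists_eq_cons_of_baseChange_mem_Ico hs ht
  rw [baseChange_false_cons hi] at hs ht
  obtain rfl : b = baseChange φ false a := by
    simp only [cons_le_cons, cons_lt_cons, lt_irrefl, true_and, false_or] at hs ht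
    grind
  rw [cons_le_cons_right] at hs
  rw [cons_lt_cons_right] at ht
  obtain ⟨c, hc, rfl, hlt⟩ := hl r hq.tail hs ht
  have hne : c ≠ nil := by rintro rfl; exact not_lt_nil _ hlt
  exact ⟨.cons i a c, ⟨fun hi0 => absurd hi0 (by omega), hq.arg.hasNumeralTails, hc⟩,
    (baseChange_true_cons hi hne).symm, cons_lt_cons_right.2 hlt⟩

theorem single (h : IsBaseMap φ) (hi : 1 ≤ i) (hl : Lifts φ s t) :
    Lifts φ (.cons i s nil) (.cons i t nil) := by
  intro q hq hs ht
  obtain ⟨a, r, rfl⟩ := h.exists_eq_cons_of_baseChange_mem_Ico hs ht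
  rw [baseChange_false_cons hi] at hs ht
  have hsa : s ≤ baseChange φ false a := by
    simp only [cons_le_cons, lt_irrefl, true_and, false_or] at hs
    exact hs.elim le_of_lt fun he => he.1.le
  have hat : baseChange φ false a < t := by
    simpa [cons_lt_cons] using ht
  obtain ⟨c, hc, rfl, hlt⟩ := hl a hq.arg hsa hat
  exact ⟨.cons i c nil, ⟨fun hi0 => absurd hi0 (by omega), hc, trivial⟩,
    (baseChange_single hi).symm, cons_lt_cons.2 (.inr ⟨rfl, .inl hlt⟩)⟩

theorem fill (h : IsBaseMap φ) (hst : Lifts φ s t) :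
    ∀ {l : Spine}, l.AvoidsOnes → Lifts φ (l.fill s) (l.fill t)
  | hole, _ => hst
  | after _ _ _, hl => (fill h hst hl.2.1).cons h hl.1
  | under i l, hl => (fill h hst (l := l) hl).single h i.succ_pos

end Lifts

theorem Standard.one_le_headIdx_append_omega : ∀ {c : PsiSum},
    Standard 2 (append c (cons 1 nil nil)) → 1 ≤ headIdx (append c (cons 1 nil nil))
  | nil, _ => le_rfl
  | cons _ _ _, hs => hs.tail.one_le_headIdx_append_omega.trans hs.headIdx_tail_le

namespace IsBaseMap

theorem lifts_cardinal (h : IsBaseMap φ) (hi : 1 ≤ i) : Lifts φ s (cons i nil nil) := by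
  intro q hq _ ht
  refine ⟨cons i nil nil, ⟨fun hi0 => absurd hi0 (by omega), trivial, trivial⟩,
    by rw [baseChange_single hi, baseChange_nil], lt_cons_of_headIdx_lt ?_⟩
  have hle := headIdx_mono ht.le
  rw [h.headIdx_baseChange] at hle
  refine lt_of_le_of_ne hle fun he => ?_
  cases q with
  | nil => exact absurd (he.trans_ge hi) (by simp [headIdx])
  | cons j a r =>
    obtain rfl : j = i := he
    simp [baseChange_false_cons hi, cons_lt_cons] at ht

theorem lifts_psi_succ (h : IsBaseMap φ) (hi : 1 ≤ i) (ha : cofType a = .succ)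
    (hs : Standard 2 a) : Lifts φ (cons i (fundSeq a nil) s) (cons i a nil) := by
  intro q hq hge hlt
  obtain ⟨b, r, rfl⟩ := h.exists_eq_cons_of_baseChange_mem_Ico hge hlt
  rw [baseChange_false_cons hi] at hge hlt
  obtain ⟨c, -, rfl, hfund⟩ := hs.exists_append_one ha
  rw [hfund] at hge
  have hb : baseChange φ false b < append c (cons 0 nil nil) := by
    simpa [cons_lt_cons] using hlt
  obtain rfl : baseChange φ false b = c := by
    refine (le_of_lt_append_one hb).antisymm ?_
    simp only [cons_le_cons, lt_irrefl, true_and, false_or] at hge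
    exact hge.elim le_of_lt fun he => he.1.le
  have hbn := hq.arg.hasNumeralTails
  refine ⟨cons i (append b (cons 0 nil nil)) nil,
    ⟨fun hi0 => absurd hi0 (by omega), hbn.append_one, trivial⟩, ?_, ?_⟩
  · rw [baseChange_single hi, h.baseChange_append_one hbn]
  · exact cons_lt_cons.2 (.inr ⟨rfl, .inl (lt_append b (by simp))⟩)

theorem lifts_fundSeq_omegaBase (h : IsBaseMap φ) (ht : OmegaBase t) (hs : Standard 2 t)
    (hn : 1 ≤ n) : Lifts φ (fundSeq t (numeral n)) t := by
  cases ht with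
  | omega => exact h.lifts_cardinal le_rfl
  | psi_succ i a hi ha =>
    obtain ⟨n, rfl⟩ := Nat.exists_eq_add_of_le' hn
    rw [fundSeq_psi_succ hi ha, length_replicate]
    exact h.lifts_psi_succ hi ha hs.arg
  | collapse a ha =>
    obtain ⟨l, i, hl, hi, rfl⟩ := exists_fill_cardinal ha
    rw [fundSeq_psi_zero_uncountable ha, fundSeq_fill_cardinal hl hi]
    have hone : 1 ≤ headIdx (cons i nil nil) := Nat.one_le_of_lt hi
    exact ((h.lifts_cardinal (by omega)).fill h
      (avoidsOnes_of_standard_fill hone hs.arg)).single h le_rfl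

theorem lifts_fundSeq (h : IsBaseMap φ) (hq : cofType q = .omega) (hs : Standard 2 q)
    (hn : 1 ≤ n) : Lifts φ (fundSeq q (numeral n)) q := by
  obtain ⟨l, t, ht, rfl⟩ := exists_fill_omegaBase hq
  rw [fundSeq_fill ht.cofType]
  exact (h.lifts_fundSeq_omegaBase ht hs.of_fill hn).fill h
    (avoidsOnes_of_standard_fill ht.one_le_headIdx hs)

theorem lifts_append_omega (h : IsBaseMap φ) : ∀ {c : PsiSum},
    Standard 2 (append c (cons 1 nil nil)) → Lifts φ c (append c (cons 1 nil nil))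
  | nil, _ => h.lifts_cardinal le_rfl
  | cons _ _ c, hs => by
    exact (h.lifts_append_omega hs.tail).cons h
      (hs.tail.one_le_headIdx_append_omega.trans hs.headIdx_tail_le)

theorem lifts_fill_append_omega (h : IsBaseMap φ) {l : Spine} (hi : 1 ≤ i)
    (hs : Standard 2 (l.fill (cons i (append c (cons 1 nil nil)) nil))) :
    Lifts φ (l.fill (cons i c nil)) (l.fill (cons i (append c (cons 1 nil nil)) nil)) := by
  have hidx : 1 ≤ headIdx (cons i (append c (cons 1 nil nil)) nil) := hi
  exact ((h.lifts_append_omega hs.of_fill.arg).single h hi).fill h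
    (avoidsOnes_of_standard_fill hidx hs)

end IsBaseMap

theorem lt_replicate_psiCount_succ (hi : 1 ≤ i) : ∀ {u : PsiSum}, Standard 2 u →
    u < cons i (append c (cons 0 nil nil)) nil → u < replicate i c (psiCount u + 1)
  | nil, _, _ => by simp [replicate]
  | cons j b r, hu, hlt => by
    simp only [cons_lt_cons, not_lt_nil, and_false, or_false] at hlt
    simp only [replicate]
    rcases hlt with hj | ⟨hj, hb⟩
    · exact cons_lt_cons.2 (.inl hj)
    subst j
    rcases (le_of_lt_append_one hb).lt_or_eq with hbc | hbc
    · exact cons_lt_cons.2 (.inr ⟨rfl, .inl hbc⟩)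
    subst b
    have hr : r < cons i (append c (cons 0 nil nil)) nil :=
      hu.tail_lt.trans (cons_lt_cons.2 (.inr ⟨rfl, .inl hb⟩))
    refine cons_lt_cons_right.2 ((lt_replicate_psiCount_succ hi hu.tail hr).trans_le
      (replicate_le_replicate ?_))
    rw [psiCount, if_neg (by omega)]
    omega

theorem lt_fill_replicate_psiCount_succ (hi : 1 ≤ i) : ∀ (l : Spine) {u : PsiSum},
    Standard 2 u → u < l.fill (cons i (append c (cons 0 nil nil)) nil) →
      u < l.fill (replicate i c (psiCount u + 1))
  | hole, _, hu, hlt => lt_replicate_psiCount_succ hi hu hlt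
  | after _ _ _, nil, _, _ | under _ _, nil, _, _ => nil_lt_cons ..
  | after j b l, cons j' b' r, hu, hlt => by
    simp only [fill, cons_lt_cons] at hlt ⊢
    refine hlt.imp_right (And.imp_right (Or.imp_right (And.imp_right fun hr => ?_)))
    refine (lt_fill_replicate_psiCount_succ hi l hu.tail hr).trans_le
      (fill_le_fill.2 (replicate_le_replicate ?_))
    rw [psiCount]
    omega
  | under j l, cons j' b' r, hu, hlt => by
    simp only [fill, cons_lt_cons, not_lt_nil, and_false, or_false] at hlt ⊢
    refine hlt.imp_right (And.imp_right fun hb => ?_)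
    refine (lt_fill_replicate_psiCount_succ hi l hu.arg hb).trans_le
      (fill_le_fill.2 (replicate_le_replicate ?_))
    rw [psiCount]
    omega

/-- Base change takes all standard sums below `s` to sums below `s'`. -/
def MapsBelow (φ : ℕ → ℕ) (s s' : PsiSum) : Prop :=
  ∀ q, Standard 2 q → q < s → baseChange φ false q < s'

namespace MapsBelow

theorem nil : MapsBelow φ nil s := fun _ _ hlt => absurd hlt (not_lt_nil _)

theorem of_le (hs : MapsBelow φ s t) (ht : t ≤ t') : MapsBelow φ s t' :=
  fun q hq hlt => (hs q hq hlt).trans_le ht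

theorem cons (h : IsBaseMap φ) (hi : 1 ≤ i) (hb : HasNumeralTails b) (hs : MapsBelow φ s s') :
    MapsBelow φ (cons i b s) (cons i (baseChange φ false b) s') := by
  intro q hq hlt
  cases q with
  | nil => exact nil_lt_cons ..
  | cons j d r =>
    rcases cons_lt_cons.1 hlt with hj | ⟨rfl, hd⟩
    · exact lt_cons_of_headIdx_lt (by rwa [h.headIdx_baseChange])
    · rw [baseChange_false_cons hi, cons_lt_cons]
      refine Or.inr ⟨rfl, hd.imp (h.baseChange_lt hq.arg.hasNumeralTails hb) ?_⟩
      rintro ⟨rfl, hr⟩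
      exact ⟨rfl, hs r hq.tail hr⟩

theorem single (h : IsBaseMap φ) (hi : 1 ≤ i) (hs : MapsBelow φ s s') :
    MapsBelow φ (.cons i s .nil) (.cons i s' .nil) := by
  intro q hq hlt
  cases q with
  | nil => exact nil_lt_cons ..
  | cons j d r =>
    simp only [cons_lt_cons, not_lt_nil, and_false, or_false] at hlt
    rcases hlt with hj | ⟨rfl, hd⟩
    · exact lt_cons_of_headIdx_lt (by rwa [h.headIdx_baseChange])
    · rw [baseChange_false_cons hi]
      exact cons_lt_cons.2 (.inr ⟨rfl, .inl (hs d hq.arg hd)⟩)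

theorem fill (h : IsBaseMap φ) (hs : MapsBelow φ s s') : ∀ {l : Spine}, l.AvoidsOnes →
    MapsBelow φ (l.fill s) ((l.baseChange φ).fill s')
  | hole, _ => hs
  | after _ _ _, hl => (fill h hs hl.2.1).cons h hl.1 hl.2.2
  | under i l, hl => (fill h hs (l := l) hl).single h i.succ_pos

theorem numeral (h : IsBaseMap φ) (hmn : ∀ x < m, φ x < n) :
    MapsBelow φ (numeral m) (numeral n) := by
  intro q hq hlt
  have hidx : headIdx q ≤ 0 := (headIdx_mono hlt.le).trans (by cases m <;> exact le_rfl)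
  rw [hq.eq_numeral (Nat.le_zero.1 hidx), numeral_lt_numeral] at hlt
  rw [hq.eq_numeral (Nat.le_zero.1 hidx), h.baseChange_numeral, numeral_lt_numeral]
  exact hmn _ hlt

theorem replicate (h : IsBaseMap φ) (hi : 1 ≤ i) (hb : HasNumeralTails b) (n : ℕ) :
    MapsBelow φ (replicate i b n) (replicate i (baseChange φ false b) n) := by
  induction n with
  | zero => exact .nil
  | succ n ih => exact ih.cons h hi hb

end MapsBelow

/-- Base change is compatible with the fundamental sequence of `q`: the members of the sequence of
the lagging base change of `q` bound the base changes of the sums below the members for `q`. -/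
structure TransfersFundSeq (φ : ℕ → ℕ) (q : PsiSum) : Prop where
  cofType_eq : cofType (baseChange φ true q) = .omega
  mapsBelow : ∀ m n, (∀ x < m, φ x < n) →
    MapsBelow φ (fundSeq q (numeral m)) (fundSeq (baseChange φ true q) (numeral n))

namespace IsBaseMap

theorem le_of_forall_lt (h : IsBaseMap φ) (hmn : ∀ x < m, φ x < n) : m ≤ n :=
  _root_.le_of_forall_lt fun x hx => (h.le_apply x).trans_lt (hmn x hx)

theorem transfersFundSeq_psi_succ (h : IsBaseMap φ) (hi : 1 ≤ i) (ha : cofType a = .succ)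
    (hs : Standard 2 a) : TransfersFundSeq φ (cons i a nil) := by
  obtain ⟨c, hc, rfl, hfund⟩ := hs.exists_append_one ha
  have hone : (cons 0 nil nil : PsiSum) ≠ nil := by simp
  have hbc := h.baseChange_append_one hc.hasNumeralTails
  have hcof : cofType (baseChange φ true (append c (cons 0 nil nil))) = .succ := by
    rw [hbc, cofType_append hone, cofType_one]
  have hfund' :
      fundSeq (baseChange φ true (append c (cons 0 nil nil))) nil = baseChange φ false c := by
    rw [hbc, fundSeq_append hone, fundSeq_one, append_nil]
  constructor
  · rw [baseChange_single hi, cofType_psi_succ hi hcof]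
  · intro m n hmn
    rw [baseChange_single hi, fundSeq_psi_succ hi ha, fundSeq_psi_succ hi hcof, hfund, hfund',
      length_replicate, length_replicate]
    exact (MapsBelow.replicate h hi hc.hasNumeralTails m).of_le
      (replicate_le_replicate (h.le_of_forall_lt hmn))

theorem transfersFundSeq_collapse (h : IsBaseMap φ) (ha : cofType a = .uncountable)
    (hs : Standard 2 a) : TransfersFundSeq φ (cons 1 a nil) := by
  obtain ⟨l, i, hl, hi, rfl⟩ := exists_fill_cardinal ha
  have hi1 : 1 ≤ headIdx (cons i nil nil) := Nat.one_le_of_lt hi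
  have hones := avoidsOnes_of_standard_fill hi1 hs
  have hbc : baseChange φ true (l.fill (cons i nil nil)) =
      (l.baseChange φ).fill (cons i nil nil) := by
    rw [hones.baseChange_fill (by simp), baseChange_single (i := i) hi1, baseChange_nil]
  have hl' : (l.baseChange φ).AvoidsPsiZero := hl.baseChange
  have hcof := hl'.cofType_fill (cofType_cardinal hi)
  have hnest : ∀ n, MapsBelow φ (nestIter (fundSeq (l.fill (cons i nil nil))) n)
      (nestIter (fundSeq ((l.baseChange φ).fill (cons i nil nil))) n) := by
    intro n
    induction n with
    | zero => exact .nil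
    | succ n ih =>
      simp only [nestIter, fundSeq_fill_cardinal hl hi, fundSeq_fill_cardinal hl' hi]
      exact (ih.fill h hones).single h le_rfl
  constructor
  · rw [baseChange_single le_rfl, hbc, cofType_psi_zero_uncountable hcof]
  · intro m n hmn
    rw [baseChange_single le_rfl, hbc, fundSeq_psi_zero_uncountable ha,
      fundSeq_psi_zero_uncountable hcof, fundSeq_fill_cardinal hl hi, fundSeq_fill_cardinal hl' hi,
      length_replicate, length_replicate]
    have hmono := (strictMono_nat_of_lt_succ (nestIter_lt_succ hcof)).monotone
      (h.le_of_forall_lt hmn)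
    exact (((hnest m).of_le hmono).fill h hones).single h le_rfl

theorem transfersFundSeq (h : IsBaseMap φ) (hq : cofType q = .omega) (hs : Standard 2 q) :
    TransfersFundSeq φ q := by
  obtain ⟨l, t, ht, rfl⟩ := exists_fill_omegaBase hq
  have hones := avoidsOnes_of_standard_fill ht.one_le_headIdx hs
  have htn : t ≠ nil := by
    rintro rfl
    exact absurd ht.one_le_headIdx (by simp [headIdx])
  obtain ⟨hcof, hmaps⟩ : TransfersFundSeq φ t := by
    cases ht with
    | omega =>
      exact ⟨by rw [baseChange_single le_rfl]; rfl, fun m n hmn => by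
        rw [baseChange_single le_rfl]
        exact MapsBelow.numeral h hmn⟩
    | psi_succ i a hi ha => exact h.transfersFundSeq_psi_succ hi ha hs.of_fill.arg
    | collapse a ha => exact h.transfersFundSeq_collapse ha hs.of_fill.arg
  constructor
  · rw [hones.baseChange_fill htn, cofType_fill hcof]
  · intro m n hmn
    rw [hones.baseChange_fill htn, fundSeq_fill ht.cofType, fundSeq_fill hcof]
    exact (hmaps m n hmn).fill h hones

theorem cofType_eq_omega_of_baseChange (h : IsBaseMap φ) (hq : IsCountable q)
    (hcof : cofType (baseChange φ true q) = .omega) : cofType q = .omega := by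
  rcases hq.eq_nil_or_cofType with rfl | hsucc | homega
  · simp [baseChange_nil] at hcof
  · obtain ⟨c, hc, rfl, -⟩ := hq.standard.exists_append_one hsucc
    rw [h.baseChange_append_one hc.hasNumeralTails, cofType_append (by simp)] at hcof
    simp at hcof
  · exact homega

end IsBaseMap

theorem exists_isBaseMap_of_strictMonoOn (hm : 1 ≤ m) (h0 : g 0 = 0)
    (hg : StrictMonoOn g (Set.Iio m)) : ∃ φ, IsBaseMap φ ∧ ∀ x < m, φ x = g x := by
  refine ⟨fun x => if x < m then g x else g (m - 1) + (x - (m - 1)),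
    ⟨fun x y hxy => ?_, by simpa only [if_pos (show 0 < m from hm)] using h0⟩,
    fun x hx => if_pos hx⟩
  split_ifs with hx hy hy
  · exact hg hx hy hxy
  · have hle := hg.monotoneOn (a := x) (b := m - 1) hx (Nat.sub_lt hm one_pos) (by omega)
    omega
  · omega
  · omega

theorem length_le_size : ∀ q, length q ≤ size q
  | nil => le_rfl
  | cons i a r => by
    have := length_le_size r
    rw [length, size]
    omega

theorem baseChange_congr : ∀ {q : PsiSum} {lag : Bool}, (∀ x < m, φ x = g x) → size q < m →
    baseChange φ lag q = baseChange g lag q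
  | nil, _, _, _ => rfl
  | cons 0 a r, _, h, hs => by
    have := length_le_size r
    rw [size] at hs
    simp only [baseChange, h (length r) (by omega), h (length r + 1) (by omega)]
  | cons (i + 1) a r, _, h, hs => by
    rw [size] at hs
    simp only [baseChange, baseChange_congr (q := a) h (by omega),
      baseChange_congr (q := r) h (by omega)]

theorem size_pos (h : q ≠ nil) : 0 < size q := by
  cases q with
  | nil => exact absurd rfl h
  | cons => exact Nat.succ_pos _

theorem size_numeral (n : ℕ) : size (numeral n) = n := by simp [size_replicate, size]

theorem normN_toTm : ∀ {q : PsiSum}, IsCode q → normN (toTm q) = size q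
  | nil, _ => rfl
  | cons i a r, h => by
    have hhead : normN (collapse i (toTm a)) = size a + 1 := by
      rcases i with _ | i
      · rw [h.2.1 rfl]
        rfl
      · rw [collapse, normN, normN_toTm h.2.2.1, Nat.add_comm]
    by_cases hr : r = nil
    · rw [hr, toTm_single, hhead]
      rfl
    · rw [toTm_cons hr, normN, hhead, normN_toTm h.2.2.2, size]
      omega

theorem bcT_toTm_numeral (hk : 2 ≤ k) (n : ℕ) :
    bcT k (toTm (numeral n)) = toTm (numeral (bcN k n)) := by
  match n with
  | 0 | 1 =>
    rw [bcN, dif_pos (by omega)]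
    simp [replicate, toTm, collapse, bcT]
  | n + 2 =>
    rw [toTm_numeral_add_two, bcT, if_pos rfl, ← toTm_numeral_add_two, tmToNat_toTm_numeral,
      natToTm_eq_toTm]

theorem bcT_toTm (hk : 2 ≤ k) : ∀ {q : PsiSum}, Standard 2 q →
    (∀ x, 1 ≤ x → x ≤ size q → 1 ≤ bcN k x) → bcT k (toTm q) = toTm (baseChange (bcN k) false q)
  | nil, _, _ => by simp [toTm, bcT, baseChange]
  | cons 0 a r, hq, _ => by
    rw [hq.hasNumeralTails.cons_zero_eq, bcT_toTm_numeral hk]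
    simp [numeral_succ, baseChange]
  | cons (i + 1) a r, hq, hpos => by
    rw [size] at hpos
    have iha := bcT_toTm hk hq.arg fun x hx hxa => hpos x hx (by omega)
    have ihr := bcT_toTm hk hq.tail fun x hx hxr => hpos x hx (by omega)
    rw [baseChange_false_cons i.succ_pos]
    by_cases hr : r = nil
    · rw [hr, baseChange_nil, toTm_single, toTm_single, collapse, bcT, iha, collapse]
    · have hr' : baseChange (bcN k) false r ≠ nil := by
        rcases r with _ | ⟨_ | j, b, s⟩
        · exact absurd rfl hr
        · have hs := length_le_size s
          have := hpos (length s + 1) (by omega) (by rw [size]; omega)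
          obtain ⟨n, hn⟩ := Nat.exists_eq_add_of_le' this
          simp [baseChange, hn, numeral_succ]
        · simp [baseChange]
      have hnorm : 0 < normN (toTm r) := by
        rw [normN_toTm hq.tail.isCode]
        exact size_pos hr
      rw [toTm_cons hr, toTm_cons hr', collapse, collapse, bcT, if_neg (by simp),
        dif_pos ⟨by rw [normN]; omega, hnorm⟩, ihr, bcT, iha]

end PsiSum

/-! ## Normal forms -/

namespace PsiSum

variable {i k m n : ℕ} {a b c q r : PsiSum} {l : Spine} {φ : ℕ → ℕ}

open Spine

theorem finite_setOf_size_le (n : ℕ) : {q | IsCode q ∧ size q ≤ n}.Finite := by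
  induction n with
  | zero =>
    refine (Set.finite_singleton nil).subset fun q ⟨_, hq⟩ => ?_
    by_contra hne
    exact absurd (size_pos hne) (Nat.not_lt.2 hq)
  | succ n ih =>
    have himage := ((Set.finite_Iic 2).prod (ih.prod ih)).image
      fun p : ℕ × PsiSum × PsiSum => cons p.1 p.2.1 p.2.2
    refine (himage.union (Set.finite_singleton nil)).subset ?_
    rintro (_ | ⟨i, a, r⟩) ⟨⟨hi, -, ha, hr⟩, hsize⟩
    · exact .inr rfl
    · rw [size] at hsize
      exact .inl ⟨(i, a, r),
        ⟨hi, ⟨ha, (by omega : size a ≤ n)⟩, ⟨hr, (by omega : size r ≤ n)⟩⟩, rfl⟩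

/-- `q` is the notation in the `k`-normal form of `m`. -/
structure IsNormalForm (k m : ℕ) (q : PsiSum) : Prop where
  isNotation : IsNotation q
  hardy_le : hardy q k ≤ m
  lt_hardy : ∀ r, IsNotation r → q < r → m < hardy r k

theorem isNotation_nil : IsNotation nil := ⟨⟨trivial, Nat.zero_le _⟩, trivial⟩

theorem isNotation_omega : IsNotation (cons 1 nil nil) :=
  ⟨⟨⟨by omega, by simp, trivial, trivial, trivial, fun _ => trivial⟩, le_rfl⟩,
    by simp [Clean, HeadFits]⟩

theorem exists_isNormalForm (hk : 2 ≤ k) (hm : k ≤ m) : ∃ q, IsNormalForm k m q := by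
  have hfin : {q | IsNotation q ∧ hardy q k ≤ m}.Finite := by
    refine (finite_setOf_size_le m).subset fun q ⟨hq, hle⟩ => ⟨hq.isCode, ?_⟩
    have := size_add_le_hardy hk hq.toIsCountable
    omega
  obtain ⟨q, hq, hmax⟩ :=
    Set.exists_max_image _ id hfin ⟨nil, isNotation_nil, by rwa [hardy_nil]⟩
  exact ⟨q, hq.1, hq.2, fun r hr hlt => not_le.1 fun hle => (hmax r ⟨hr, hle⟩).not_gt hlt⟩

namespace IsNormalForm

theorem le_of_le (h : IsNormalForm k m a) (hb : IsNormalForm k n b) (hnm : n ≤ m) : b ≤ a :=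
  not_lt.1 fun hlt => (hnm.trans_lt (h.lt_hardy b hb.isNotation hlt)).not_ge hb.hardy_le

theorem unique (ha : IsNormalForm k m a) (hb : IsNormalForm k m b) : a = b :=
  (hb.le_of_le ha le_rfl).antisymm (ha.le_of_le hb le_rfl)

theorem size_add_le (hk : 2 ≤ k) (h : IsNormalForm k m q) : size q + k ≤ m :=
  (size_add_le_hardy hk h.isNotation.toIsCountable).trans h.hardy_le

theorem nfAlpha_eq (h : IsNormalForm k m q) : nfAlpha k m = toTm q := by
  have hspec : InOT0 (nfAlpha k m) ∧ TLt (nfAlpha k m) OmegaT ∧ H (nfAlpha k m) k ≤ m ∧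
      ∀ β, InOT0 β → TLt β OmegaT → TLt (nfAlpha k m) β → m < H β k := by
    refine Classical.epsilon_spec (p := fun α => InOT0 α ∧ TLt α OmegaT ∧ H α k ≤ m ∧
      ∀ β, InOT0 β → TLt β OmegaT → TLt α β → m < H β k)
      ⟨toTm q, h.isNotation.inOT0, h.isNotation.tLt_Omega, h.hardy_le, fun β hβ hΩ hlt => ?_⟩
    obtain ⟨r, hr, rfl⟩ := exists_isNotation hβ hΩ
    exact h.lt_hardy r hr ((h.isNotation.tLt_toTm_iff hr).1 hlt)
  obtain ⟨h0, hΩ, hle, hlt⟩ := hspec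
  obtain ⟨r, hr, he⟩ := exists_isNotation h0 hΩ
  rw [← he] at hle hlt ⊢
  have hnf : IsNormalForm k m r := ⟨hr, hle, fun s hs hrs =>
    hlt _ hs.inOT0 hs.tLt_Omega ((hr.tLt_toTm_iff hs).2 hrs)⟩
  rw [hnf.unique h]

end IsNormalForm

theorem bcN_of_lt (h : m < k) : bcN k m = m := by rw [bcN, dif_pos h]

theorem IsNormalForm.bcN_eq_of_pos (hk : 2 ≤ k) (h : IsNormalForm k m q)
    (hpos : ∀ c, 1 ≤ c → c < m → 1 ≤ bcN k c) :
    bcN k m =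
      hardy (baseChange (bcN k) false q) (k + 1) * (m / hardy q k) + bcN k (m % hardy q k) := by
  have hsize := h.size_add_le hk
  have hge := le_hardy (by omega : 1 ≤ k) h.isNotation.toIsCountable
  rcases (by omega : k ≤ m).eq_or_lt with rfl | hkm
  · obtain rfl : q = nil := by
      by_contra hne
      have := size_pos hne
      omega
    rw [baseChange_nil, hardy_nil, hardy_nil, Nat.div_self (by omega), Nat.mod_self,
      bcN_of_lt (by omega : 0 < k), bcN]
    simp
  · have he := h.nfAlpha_eq
    rw [bcN, dif_neg (by omega), dif_neg (by omega), dif_pos, he,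
      bcT_toTm hk h.isNotation.standard fun c h1 hc => hpos c h1 (by omega)]
    · rfl
    · rw [he, normN_toTm h.isNotation.isCode]
      exact ⟨by omega, (by omega : 0 < hardy q k), h.hardy_le⟩

/-! ## Successors of notations -/

/-- The notation that follows `q`. No positive integer is below `Ω` in the order on terms, so that
`0` is followed by `ω`. -/
def nextNotation (q : PsiSum) : PsiSum :=
  if q = nil then cons 1 nil nil else append q (cons 0 nil nil)

theorem nextNotation_nil : nextNotation nil = cons 1 nil nil := if_pos rfl

theorem nextNotation_of_ne_nil (hq : q ≠ nil) : nextNotation q = append q (cons 0 nil nil) :=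
  if_neg hq

theorem Standard.append_one : ∀ {q}, Standard 2 q → Standard 2 (append q (cons 0 nil nil))
  | nil, _ => standard_one.replicate 1
  | cons i a nil, h => by
    refine ⟨h.1, h.2.1, h.arg, h.tail.append_one, ?_, h.coeffsBelow⟩
    rcases Nat.eq_zero_or_pos i with rfl | hi
    · exact .inr ⟨rfl, nil_le _⟩
    · exact .inl hi
  | cons i a (cons j b s), h =>
    ⟨h.1, h.2.1, h.arg, h.tail.append_one, h.headLE, h.coeffsBelow⟩

theorem headIdx_append (h : q ≠ nil) : headIdx (append q r) = headIdx q := by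
  cases q with
  | nil => exact absurd rfl h
  | cons => rfl

theorem Clean.append_one : ∀ {q} {low argLow : Prop}, q ≠ nil ∨ low → Standard 2 q →
    headIdx q ≤ 1 → Clean False low argLow q → Clean False low argLow (append q (cons 0 nil nil))
  | nil, _, _, h, _, _, _ => Clean.numeral (by simpa using h) 1
  | cons _ _ _, _, _, _, hs, hi, h =>
    ⟨h.1, h.2.1, append_one (.inr hi) hs.tail (hs.headIdx_tail_le.trans hi) h.2.2⟩

namespace IsNotation

theorem nextNotation (h : IsNotation q) : IsNotation (nextNotation q) := by
  by_cases hq : q = nil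
  · rw [hq, nextNotation_nil]
    exact isNotation_omega
  · rw [nextNotation_of_ne_nil hq]
    exact ⟨⟨h.standard.append_one, by rw [headIdx_append hq]; exact h.headIdx_le⟩,
      h.clean.append_one (.inl hq) h.standard h.headIdx_le⟩

theorem hardy_nextNotation (h : IsNotation q) (hq : q ≠ nil) (k : ℕ) :
    hardy (PsiSum.nextNotation q) k = hardy q k * k := by
  have hone : (cons 0 nil nil : PsiSum) ≠ nil := by simp
  have hs := h.nextNotation.toIsCountable
  rw [nextNotation_of_ne_nil hq] at hs ⊢
  rw [hardy_of_succ hs (by rw [cofType_append hone, cofType_one]), fundSeq_append hone, fundSeq_one,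
    append_nil]

end IsNotation

theorem lt_nextNotation (q : PsiSum) : q < nextNotation q := by
  by_cases hq : q = nil
  · rw [hq, nextNotation_nil]
    exact nil_lt_cons ..
  · rw [nextNotation_of_ne_nil hq]
    exact lt_append q (by simp)

/-! ## The next notation after a base change -/

/-- The facts on base change of the numbers below `m` which the induction on `m` provides: each such
number is at most as large as the Hardy values beyond the base change of some notation. -/
structure IsBaseChangeBelow (k m : ℕ) (φ : ℕ → ℕ) : Prop extends IsBaseMap φ where
  eq_self : ∀ c < k, φ c = c
  exists_lt_hardy : ∀ c ∈ Set.Ico k m, ∃ d, IsNotation d ∧ hardy d k ≤ c ∧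
    ∀ b, IsNotation b → baseChange φ false d < b → φ c < hardy b (k + 1)

/-- The bound `H_{next a}(k) ≤ H_b(k)` holds for all notations `b` strictly between `a` and `q`. -/
def BoundedBelow (k : ℕ) (a q : PsiSum) : Prop :=
  ∀ b, IsNotation b → b < q → a < b → hardy (nextNotation a) k ≤ hardy b k

theorem hardy_nextNotation_le_of_succ (hk : 1 ≤ k) (hb : IsNotation b) (hsucc : cofType b = .succ)
    (hab : a < b) (ih : BoundedBelow k a b) : hardy (nextNotation a) k ≤ hardy b k := by
  have hle := hb.standard.le_fundSeq_of_lt hsucc hab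
  rcases hle.lt_or_eq with hlt | rfl
  · rw [hardy_of_succ hb.toIsCountable hsucc]
    exact (ih _ (hb.fundSeq_of_succ hsucc nil) (fundSeq_lt_of_succ hsucc nil) hlt).trans
      (Nat.le_mul_of_pos_right _ hk)
  · obtain ⟨s, -, rfl, hfund⟩ := hb.standard.exists_append_one hsucc
    have hs : s ≠ nil := by
      rintro rfl
      simpa [append, Clean, HeadFits] using hb.clean
    rw [hfund, nextNotation_of_ne_nil hs]

namespace IsBaseChangeBelow

theorem hardyIter_le_and_lt (h : IsBaseChangeBelow k m φ) (hk : 2 ≤ k) (ha : IsNormalForm k m a)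
    (hg : IsNotation g) (hω : cofType g = .omega) (hag : a < g)
    (hb : IsNotation (baseChange φ true g))
    (hfund : ∀ n, IsNotation (fundSeq (baseChange φ true g) (numeral n)))
    (hle : fundSeq (baseChange φ true g)
      (numeral (hardyIter (baseChange φ true g) (k + 1) (k + 1))) ≤ baseChange φ false a)
    (n : ℕ) (hn : n ≤ k + 1) : hardyIter g k n ≤ m ∧
      ∀ c < hardyIter g k n, φ c < hardyIter (baseChange φ true g) (k + 1) n := by
  obtain ⟨hω', hmaps⟩ := h.transfersFundSeq hω hg.standard
  induction n with
  | zero => exact ⟨Nat.zero_le _, fun c hc => absurd hc (Nat.not_lt_zero c)⟩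
  | succ n ih =>
    have hmap := hmaps _ _ (ih (by omega)).2
    have hga : fundSeq g (numeral (hardyIter g k n)) ≤ a := by
      by_contra hlt
      have hmono := fundSeq_numeral_mono hω'
        (hardyIter_mono (by omega : 1 ≤ k + 1) hb.toIsCountable hω' (by omega : n ≤ k + 1))
      exact (hmap a ha.isNotation.standard (not_le.1 hlt)).not_ge (hmono.trans hle)
    have hm : hardyIter g k (n + 1) ≤ m :=
      (hardy_fundSeq_le_of_mem_Ico (by omega) hg.toIsCountable hω ha.isNotation.toIsCountable
        ⟨hga, hag⟩).trans ha.hardy_le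
    refine ⟨hm, fun c hc => ?_⟩
    rcases Nat.lt_or_ge c k with hck | hck
    · have := le_hardyIter (by omega : 1 ≤ k + 1) hb.toIsCountable hω' (Nat.le_add_left 1 n)
      rw [h.eq_self c hck]
      omega
    · obtain ⟨d, hd, hdc, hlt⟩ := h.exists_lt_hardy c ⟨hck, hc.trans_le hm⟩
      refine hlt _ (hfund _) (hmap d hd.standard (not_le.1 fun hgd => ?_))
      rcases lt_or_ge d g with hdg | hgd'
      · have := hardy_fundSeq_le_of_mem_Ico (by omega) hg.toIsCountable hω hd.toIsCountable
          ⟨hgd, hdg⟩ (k := k)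
        exact (hc.trans_le (this.trans hdc)).false
      · exact ((ha.lt_hardy d hd (hag.trans_le hgd')).trans_le (hdc.trans (hc.le.trans hm))).false

/-- If `β` is a limit of notations, then the base change of `a` lies below `β{k + 1}`: otherwise `β`
is the lagging base change of some notation `g > a` whose Hardy value, computed by iteration
along that of `β`, is at most `m`. -/
theorem lt_fundSeq_hardyIter (h : IsBaseChangeBelow k m φ) (hk : 2 ≤ k) (ha : IsNormalForm k m a)
    (hb : IsNotation b) (hω : cofType b = .omega) (hab : baseChange φ false a < b)
    (hfund : ∀ n, IsNotation (fundSeq b (numeral n))) :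
    baseChange φ false a < fundSeq b (numeral (hardyIter b (k + 1) (k + 1))) := by
  by_contra! hle
  have hpos : 1 ≤ hardyIter b (k + 1) (k + 1) := by
    have := le_hardyIter (by omega : 1 ≤ k + 1) hb.toIsCountable hω (by omega : 1 ≤ k + 1)
    omega
  obtain ⟨g, hn, rfl, hag⟩ := h.lifts_fundSeq hω hb.standard hpos a ha.isNotation.standard hle hab
  have hg := h.isNotation_of_baseChange hn hb
  have hωg := h.cofType_eq_omega_of_baseChange hg.toIsCountable hω
  have hlt := ha.lt_hardy g hg hag
  rw [hardy_of_omega hg.toIsCountable hωg] at hlt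
  exact hlt.not_ge (h.hardyIter_le_and_lt hk ha hg hωg hag hb hfund hle _ le_rfl).1

end IsBaseChangeBelow

theorem fundSeq_fill_psi_append_omega (hi : 1 ≤ i) (n : ℕ) :
    fundSeq (l.fill (cons i (append c (cons 1 nil nil)) nil)) (numeral n) =
      l.fill (cons i (append c (numeral n)) nil) := by
  obtain ⟨i, rfl⟩ := Nat.exists_eq_add_of_le' hi
  have hω : cofType (append c (cons 1 nil nil)) = .omega := by
    rw [cofType_append (by simp), cofType_omega]
  rw [fundSeq_fill (cofType_psi_omega hω), fundSeq_psi_omega hω, fundSeq_append (by simp),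
    fundSeq_cardinal]

theorem cofType_fill_psi_append_one (hi : 1 ≤ i) :
    cofType (l.fill (cons i (append c (cons 0 nil nil)) nil)) = .omega :=
  cofType_fill (cofType_psi_succ hi (by rw [cofType_append (by simp), cofType_one]))

theorem fundSeq_fill_psi_append_one (hi : 1 ≤ i) (n : ℕ) :
    fundSeq (l.fill (cons i (append c (cons 0 nil nil)) nil)) (numeral n) =
      l.fill (replicate i c n) := by
  have hsucc : cofType (append c (cons 0 nil nil)) = .succ := by
    rw [cofType_append (by simp), cofType_one]
  rw [fundSeq_fill (cofType_psi_succ hi hsucc), fundSeq_psi_succ hi hsucc,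
    fundSeq_append (by simp), fundSeq_one, append_nil, length_replicate]

namespace IsBaseChangeBelow

theorem hardy_nextNotation_le_of_hasArgGap (h : IsBaseChangeBelow k m φ) (hk : 2 ≤ k)
    (ha : IsNormalForm k m a) (hb : IsNotation b) (hω : cofType b = .omega)
    (hab : baseChange φ false a < b) (hgap : HasArgGap False False False b)
    (ih : BoundedBelow (k + 1) (baseChange φ false a) b) :
    hardy (nextNotation (baseChange φ false a)) (k + 1) ≤ hardy b (k + 1) := by
  obtain ⟨l, i, c, hi, rfl, hclean, hlt⟩ := hgap
  have hfund := fundSeq_fill_psi_append_omega (l := l) (c := c) hi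
  have hcount n := hfund n ▸ hb.toIsCountable.fundSeq_of_omega hω n
  have hcof := cofType_fill_psi_append_one (l := l) (c := c) hi
  have hrep n : IsNotation (l.fill (replicate i c n)) :=
    ⟨fundSeq_fill_psi_append_one hi n ▸ (hcount 1).fundSeq_of_omega hcof n, hclean n⟩
  have hrep_lt n : l.fill (replicate i c n) < l.fill (cons i (append c (cons 1 nil nil)) nil) := by
    rw [← fundSeq_fill_psi_append_one hi n]
    exact (fundSeq_numeral_lt hcof n).trans (hfund 1 ▸ fundSeq_numeral_lt hω 1)
  by_cases hac : baseChange φ false a < l.fill (cons i c nil)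
  · refine (ih _ (hrep 1) (hrep_lt 1) hac).trans ?_
    have hzero := hardy_fundSeq_le (by omega) hb.toIsCountable hω (Nat.zero_le (k + 1))
    rwa [hfund, show (numeral 0 : PsiSum) = nil from rfl, append_nil] at hzero
  obtain ⟨g, hn, he, hag⟩ := h.lifts_fill_append_omega hi hb.standard a ha.isNotation.standard
    (not_lt.1 hac) hab
  have hg : IsNotation g := h.isNotation_of_baseChange hn (he ▸ hb)
  have hiter := hardy_le_hardyIter_self (by omega) (by omega : k < k + 1) hg.toIsCountable
    hb.toIsCountable hω (he ▸ h.padLE_baseChange hn)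
  have hψ := lt_fill_replicate_psiCount_succ hi l (h.standard_baseChange ha.isNotation.standard)
    (hlt _ (h.clean_baseChange ha.isNotation.clean) hab)
  rw [h.psiCount_baseChange ha.isNotation.standard.hasNumeralTails] at hψ
  have hcount_le := psiCount_le_size a
  have hsize := ha.size_add_le hk
  have hm := ha.lt_hardy g hg hag
  calc hardy (nextNotation (baseChange φ false a)) (k + 1)
      ≤ hardy (l.fill (replicate i c (psiCount a + 1))) (k + 1) := ih _ (hrep _) (hrep_lt _) hψ
    _ ≤ hardy (l.fill (cons i (append c (numeral (psiCount a))) nil)) (k + 1) :=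
        hardy_fill_replicate_le (by omega) hi l (hcount _) (hrep _).toIsCountable
    _ ≤ hardy (l.fill (cons i (append c (cons 1 nil nil)) nil)) (k + 1) := by
        rw [hardy_of_omega hb.toIsCountable hω, hardyIter, ← hfund]
        exact hardy_fundSeq_mono (by omega) hb.toIsCountable hω (by omega)

theorem hardy_nextNotation_le (h : IsBaseChangeBelow k m φ) (hk : 2 ≤ k)
    (ha : IsNormalForm k m a) (hb : IsNotation b) (hab : baseChange φ false a < b) :
    hardy (nextNotation (baseChange φ false a)) (k + 1) ≤ hardy b (k + 1) := by
  have ⟨⟨hs, hidx⟩, hclean⟩ := hb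
  induction hs using Standard.induction with
  | h b hs ih =>
    have ih' : BoundedBelow (k + 1) (baseChange φ false a) b := fun s hs hlt has =>
      ih s hs.standard hlt hs has hs.headIdx_le hs.clean
    rcases hb.toIsCountable.eq_nil_or_cofType with rfl | hsucc | hω
    · exact absurd hab (not_lt_nil _)
    · exact hardy_nextNotation_le_of_succ (by omega) hb hsucc hab ih'
    rcases hclean.fundSeq_or_gap hω (by simp) with hfund | hgap | ⟨-, c, rfl, hc, -, hlt⟩
    · have hfund' n : IsNotation (fundSeq b (numeral n)) :=
        ⟨hb.toIsCountable.fundSeq_of_omega hω n, hfund n⟩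
      rw [hardy_of_omega hb.toIsCountable hω, hardyIter]
      exact ih' _ (hfund' _) (fundSeq_numeral_lt hω _)
        (h.lt_fundSeq_hardyIter hk ha hb hω hab hfund')
    · exact h.hardy_nextNotation_le_of_hasArgGap hk ha hb hω hab hgap ih'
    · obtain rfl : c = nil := by
        by_contra hne
        have := hc.resolve_left hne
        rw [headIdx_append hne] at hidx
        omega
      have hnil := le_of_lt_append_one (hlt _ (h.clean_baseChange ha.isNotation.clean) hab)
      rw [le_nil_iff.1 hnil, nextNotation_nil, append]

end IsBaseChangeBelow

end PsiSum

/-! ## Base change of numbers -/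

namespace PsiSum

variable {c k m : ℕ} {a q : PsiSum}

theorem hardy_numeral (n k : ℕ) : hardy (numeral n) k = k * k ^ n := by
  induction n with
  | zero => rw [pow_zero, mul_one, show (numeral 0 : PsiSum) = nil from rfl, hardy_nil]
  | succ n ih =>
    have hc : IsCountable (numeral (n + 1)) := ⟨standard_one.replicate _, Nat.zero_le _⟩
    rw [hardy_of_succ hc (cofType_numeral_succ n), fundSeq_numeral_succ, ih, pow_succ, mul_assoc]

theorem succ_mul_succ_le_hardy_omega (hk : 2 ≤ k) (h : m < hardy (cons 1 nil nil) k) :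
    (k + 1) * (m + 1) ≤ hardy (cons 1 nil nil) (k + 1) := by
  have hc := isNotation_omega.toIsCountable
  have hω : cofType (cons 1 nil nil) = .omega := cofType_omega
  have hle := hardy_le_hardyIter_self (by omega) (by omega : k < k + 1) hc hc hω (.refl _)
  rw [hardy_of_omega hc hω, hardyIter, fundSeq_cardinal, hardy_numeral]
  have hpow := Nat.lt_pow_self (by omega : 1 < k + 1)
    (n := hardyIter (cons 1 nil nil) (k + 1) (k + 1))
  exact Nat.mul_le_mul_left _ (by omega)

/-- The base change of `m` exceeds those of all smaller numbers, and the base change of the notation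
in the normal form of `m` satisfies the maximality condition of the normal form of `bcN k m`. -/
structure BaseChangeMonotoneAt (k m : ℕ) : Prop where
  bcN_lt : ∀ c < m, bcN k c < bcN k m
  lt_hardy : ∀ q, IsNormalForm k m q → ∀ b, IsNotation b → baseChange (bcN k) false q < b →
    bcN k m < hardy b (k + 1)

theorem exists_isBaseChangeBelow (hk : 2 ≤ k) (hm : k ≤ m)
    (ih : ∀ c < m, BaseChangeMonotoneAt k c) : ∃ φ, IsBaseChangeBelow k m φ ∧
      ∀ c ≤ m, ∀ q, IsNormalForm k c q → baseChange φ false q = baseChange (bcN k) false q := by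
  obtain ⟨φ, hφ, heq⟩ := exists_isBaseMap_of_strictMonoOn (g := bcN k) (by omega : 1 ≤ m)
    (bcN_of_lt (by omega)) fun c _ d hd hcd => (ih d hd).bcN_lt c hcd
  have hbase : ∀ c ≤ m, ∀ q, IsNormalForm k c q →
      baseChange φ false q = baseChange (bcN k) false q := fun c hc q hq => by
    have := hq.size_add_le hk
    exact baseChange_congr heq (by omega)
  refine ⟨φ, ⟨hφ, fun c hc => by rw [heq c (by omega), bcN_of_lt hc], fun c hc => ?_⟩, hbase⟩
  obtain ⟨d, hd⟩ := exists_isNormalForm hk hc.1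
  refine ⟨d, hd.isNotation, hd.hardy_le, fun b hb hlt => ?_⟩
  rw [heq c hc.2]
  exact (ih c hc.2).lt_hardy d hd b hb (hbase c hc.2.le d hd ▸ hlt)

namespace IsNormalForm

theorem le_left (hk : 1 ≤ k) (h : IsNormalForm k m q) : k ≤ m :=
  (le_hardy hk h.isNotation.toIsCountable).trans h.hardy_le

section InductionStep

variable (ih : ∀ c < m, BaseChangeMonotoneAt k c)
include ih

theorem isNotation_baseChange_of_forall_lt (hk : 2 ≤ k) (h : IsNormalForm k m q) :
    IsNotation (baseChange (bcN k) false q) := by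
  obtain ⟨φ, hφ, hbase⟩ := exists_isBaseChangeBelow hk (h.le_left (by omega)) ih
  exact hbase m le_rfl q h ▸ hφ.isNotation_baseChange h.isNotation

theorem bcN_eq_of_forall_lt (hk : 2 ≤ k) (h : IsNormalForm k m q) : bcN k m =
    hardy (baseChange (bcN k) false q) (k + 1) * (m / hardy q k) + bcN k (m % hardy q k) :=
  h.bcN_eq_of_pos hk fun c hc hcm => (Nat.zero_le _).trans_lt ((ih c hcm).bcN_lt 0 hc)

theorem bcN_lt_hardy_of_lt (hk : 2 ≤ k) (h : IsNormalForm k m q) (hc : c < m)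
    (ha : IsNormalForm k c a) (haq : a < q) :
    bcN k c < hardy (baseChange (bcN k) false q) (k + 1) := by
  obtain ⟨φ, hφ, hbase⟩ := exists_isBaseChangeBelow hk (h.le_left (by omega)) ih
  refine (ih c hc).lt_hardy a ha _ (h.isNotation_baseChange_of_forall_lt ih hk) ?_
  rw [← hbase m le_rfl q h, ← hbase c hc.le a ha]
  exact hφ.baseChange_lt ha.isNotation.standard.hasNumeralTails
    h.isNotation.standard.hasNumeralTails haq

theorem bcN_lt_hardy_baseChange (hk : 2 ≤ k) (h : IsNormalForm k m q) (hc : c < hardy q k) :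
    bcN k c < hardy (baseChange (bcN k) false q) (k + 1) := by
  rcases Nat.lt_or_ge c k with hck | hck
  · have hle := le_hardy (by omega : 1 ≤ k + 1)
      (h.isNotation_baseChange_of_forall_lt ih hk).toIsCountable
    rw [bcN_of_lt hck]
    omega
  · obtain ⟨a, ha⟩ := exists_isNormalForm hk hck
    have hcm := hc.trans_le h.hardy_le
    refine h.bcN_lt_hardy_of_lt ih hk hcm ha ((h.le_of_le ha hcm.le).lt_of_ne ?_)
    rintro rfl
    exact hc.not_ge ha.hardy_le

theorem bcN_lt_hardy_nextNotation (hk : 2 ≤ k) (h : IsNormalForm k m q) :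
    bcN k m < hardy (nextNotation (baseChange (bcN k) false q)) (k + 1) := by
  obtain ⟨φ, hφ, hbase⟩ := exists_isBaseChangeBelow hk (h.le_left (by omega)) ih
  have hpos := (by omega : 0 < k).trans_le (le_hardy (by omega) h.isNotation.toIsCountable)
  have hrem := h.bcN_lt_hardy_baseChange ih hk (Nat.mod_lt m hpos)
  have hnext := h.lt_hardy _ h.isNotation.nextNotation (lt_nextNotation q)
  calc bcN k m < hardy (baseChange (bcN k) false q) (k + 1) * (m / hardy q k + 1) := by
        rw [h.bcN_eq_of_forall_lt ih hk, mul_add_one]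
        omega
    _ ≤ _ := ?_
  by_cases hq : q = nil
  · subst hq
    rw [nextNotation_nil] at hnext
    rw [baseChange_nil, nextNotation_nil, hardy_nil, hardy_nil]
    exact (Nat.mul_le_mul_left _ (Nat.succ_le_succ (Nat.div_le_self m k))).trans
      (succ_mul_succ_le_hardy_omega hk hnext)
  · rw [h.isNotation.hardy_nextNotation hq] at hnext
    rw [(h.isNotation_baseChange_of_forall_lt ih hk).hardy_nextNotation
      (hbase m le_rfl q h ▸ hφ.baseChange_eq_nil_iff.not.2 hq)]
    exact Nat.mul_le_mul_left _ ((Nat.div_lt_of_lt_mul hnext).trans (Nat.lt_succ_self k))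

theorem bcN_lt_bcN_of_same (hk : 2 ≤ k) (h : IsNormalForm k m q) (hc : c < m)
    (hcq : IsNormalForm k c q) : bcN k c < bcN k m := by
  have hpos := (by omega : 0 < k).trans_le (le_hardy (by omega) h.isNotation.toIsCountable)
  have hrem := h.bcN_lt_hardy_baseChange ih hk (Nat.mod_lt c hpos)
  rw [h.bcN_eq_of_forall_lt ih hk,
    hcq.bcN_eq_of_forall_lt (fun d hd => ih d (hd.trans hc)) hk]
  rcases (Nat.div_le_div_right hc.le : c / hardy q k ≤ m / hardy q k).lt_or_eq with hlt | heq
  · have := Nat.mul_le_mul_left (hardy (baseChange (bcN k) false q) (k + 1)) hlt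
    rw [Nat.succ_eq_add_one, mul_add_one] at this
    omega
  · have hmod : c % hardy q k < m % hardy q k := by
      have hdc := Nat.div_add_mod c (hardy q k)
      have hdm := Nat.div_add_mod m (hardy q k)
      rw [heq] at hdc
      omega
    rw [heq]
    exact Nat.add_lt_add_left
      ((ih _ ((Nat.mod_lt m hpos).trans_le h.hardy_le)).bcN_lt _ hmod) _

theorem bcN_lt_bcN (hk : 2 ≤ k) (h : IsNormalForm k m q) (hc : c < m) : bcN k c < bcN k m := by
  have hpos := (by omega : 0 < k).trans_le (le_hardy (by omega) h.isNotation.toIsCountable)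
  have hle : hardy (baseChange (bcN k) false q) (k + 1) ≤ bcN k m := by
    rw [h.bcN_eq_of_forall_lt ih hk]
    exact le_add_right (Nat.le_mul_of_pos_right _ (Nat.div_pos h.hardy_le hpos))
  rcases Nat.lt_or_ge c k with hck | hck
  · exact (h.bcN_lt_hardy_baseChange ih hk
      (hck.trans_le (le_hardy (by omega) h.isNotation.toIsCountable))).trans_le hle
  obtain ⟨a, ha⟩ := exists_isNormalForm hk hck
  rcases (h.le_of_le ha hc.le).lt_or_eq with haq | rfl
  · exact (h.bcN_lt_hardy_of_lt ih hk hc ha haq).trans_le hle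
  · exact h.bcN_lt_bcN_of_same ih hk hc ha

end InductionStep

end IsNormalForm

theorem baseChangeMonotoneAt (hk : 2 ≤ k) (m : ℕ) : BaseChangeMonotoneAt k m := by
  induction m using Nat.strong_induction_on with
  | _ m ih =>
    rcases Nat.lt_or_ge m k with hm | hm
    · refine ⟨fun c hc => ?_, fun q hq => absurd (hq.le_left (by omega)) hm.not_ge⟩
      rwa [bcN_of_lt hm, bcN_of_lt (hc.trans hm)]
    obtain ⟨q, hq⟩ := exists_isNormalForm hk hm
    refine ⟨fun c hc => hq.bcN_lt_bcN ih hk hc, fun a ha b hb hab => ?_⟩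
    obtain ⟨φ, hφ, hbase⟩ := exists_isBaseChangeBelow hk hm ih
    refine (ha.bcN_lt_hardy_nextNotation ih hk).trans_le ?_
    rw [← hbase m le_rfl a ha] at hab ⊢
    exact hφ.hardy_nextNotation_le hk ha hb hab

theorem isBaseMap_bcN (hk : 2 ≤ k) : IsBaseMap (bcN k) :=
  ⟨fun c m hc => (baseChangeMonotoneAt hk m).bcN_lt c hc, bcN_of_lt (by omega)⟩

namespace IsNormalForm

theorem bcN_eq (hk : 2 ≤ k) (h : IsNormalForm k m q) : bcN k m =
    hardy (baseChange (bcN k) false q) (k + 1) * (m / hardy q k) + bcN k (m % hardy q k) :=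
  h.bcN_eq_of_forall_lt (fun c _ => baseChangeMonotoneAt hk c) hk

theorem bcN_eq_hardy_add (hk : 2 ≤ k) (h : IsNormalForm k m q) :
    bcN k m = hardy (baseChange (bcN k) false q) (k + 1) + bcN k (m - hardy q k) := by
  have hpos := (by omega : 0 < k).trans_le (le_hardy (by omega) h.isNotation.toIsCountable)
  obtain ⟨n, rfl⟩ := Nat.exists_eq_add_of_le h.hardy_le
  rw [Nat.add_sub_cancel_left, h.bcN_eq hk, Nat.add_div_left _ hpos, Nat.add_mod_left,
    Nat.mul_succ, add_comm (_ * _) (hardy _ _), add_assoc]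
  rcases Nat.lt_or_ge n (hardy q k) with hn | hn
  · rw [Nat.div_eq_of_lt hn, Nat.mod_eq_of_lt hn, mul_zero, zero_add]
  · have hnq : IsNormalForm k n q :=
      ⟨h.isNotation, hn, fun b hb hlt => (Nat.le_add_left _ _).trans_lt (h.lt_hardy b hb hlt)⟩
    rw [hnq.bcN_eq hk]

theorem isNormalForm_bcN (hk : 2 ≤ k) (h : IsNormalForm k m q) :
    IsNormalForm (k + 1) (bcN k m) (baseChange (bcN k) false q) where
  isNotation := (isBaseMap_bcN hk).isNotation_baseChange h.isNotation
  hardy_le := h.bcN_eq_hardy_add hk ▸ Nat.le_add_right _ _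
  lt_hardy := (baseChangeMonotoneAt hk m).lt_hardy q h

end IsNormalForm

end PsiSum

/-! ## Ordinals of numbers -/

namespace PsiSum

variable {i k m : ℕ} {a b q : PsiSum}

/-- The sum `q` with its components `ψᵢ` replaced by `ψᵢ₊₁` and its numerals `n` by `f n`. Raising
the indices makes room for the values of `f`, which are countable. -/
def ordinalSum (f : ℕ → PsiSum) : PsiSum → PsiSum
  | nil => nil
  | cons 0 _ r => f (length r + 1)
  | cons (i + 1) a r => cons (i + 2) (ordinalSum f a) (ordinalSum f r)

/-- The ordinal which is assigned to `m` in base `k`: if `m = H_q(k) + n` is the normal form, then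
it is `ψ₀(ordinalSum (ordinalOf k) q) + ordinalOf k n`. The guard `c < m` excludes no number that
occurs in `q`. -/
noncomputable def ordinalOf (k m : ℕ) : PsiSum :=
  if h : 2 ≤ k ∧ k ≤ m then
    let q := (exists_isNormalForm h.1 h.2).choose
    cons 1 (ordinalSum (fun c => if _ : c < m then ordinalOf k c else nil) q)
      (ordinalOf k (m - hardy q k))
  else numeral m
termination_by m
decreasing_by
  · assumption
  · have hle := le_hardy (by omega : 1 ≤ k)
      (exists_isNormalForm h.1 h.2).choose_spec.isNotation.toIsCountable
    exact Nat.sub_lt (by omega) (by omega)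

section OrdinalSum

variable {f g : ℕ → PsiSum}

theorem ordinalSum_numeral (h0 : f 0 = nil) (n : ℕ) : ordinalSum f (numeral n) = f n := by
  cases n with
  | zero => exact h0.symm
  | succ n => simp only [numeral_succ, ordinalSum, length_replicate]

theorem ordinalSum_congr : ∀ {q : PsiSum}, (∀ c ≤ size q, f c = g c) →
    ordinalSum f q = ordinalSum g q
  | nil, _ => rfl
  | cons 0 a r, h => by
    have := length_le_size r
    exact h _ (by rw [size]; omega)
  | cons (i + 1) a r, h => by
    rw [size] at h
    rw [ordinalSum, ordinalSum, ordinalSum_congr fun c hc => h c (by omega),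
      ordinalSum_congr fun c hc => h c (by omega)]

theorem ordinalSum_lt (h0 : f 0 = nil) (hf : StrictMonoOn f (Set.Iio m))
    (hidx : ∀ c, headIdx (f c) ≤ 1) : ∀ {a b : PsiSum}, HasNumeralTails a → HasNumeralTails b →
      size a < m → size b < m → a < b → ordinalSum f a < ordinalSum f b
  | _, nil, _, _, _, _, hlt => absurd hlt (not_lt_nil _)
  | nil, cons 0 b s, _, _, hm, hn, _ => by
    have := length_le_size s
    rw [size] at hn
    rw [ordinalSum, ordinalSum, ← h0]
    exact hf (Set.mem_Iio.2 (by omega)) (Set.mem_Iio.2 (by omega)) (Nat.succ_pos _)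
  | nil, cons (j + 1) b s, _, _, _, _, _ => nil_lt_cons _ _ _
  | cons 0 a r, cons 0 b s, ha, hb, hm, hn, hlt => by
    rw [ha.cons_zero_eq, hb.cons_zero_eq, numeral_lt_numeral] at hlt
    rw [ha.cons_zero_eq, size_numeral] at hm
    rw [hb.cons_zero_eq, size_numeral] at hn
    exact hf hm hn hlt
  | cons 0 a r, cons (j + 1) b s, _, _, _, _, _ =>
    lt_cons_of_headIdx_lt ((hidx _).trans_lt (by omega))
  | cons (i + 1) a r, cons 0 b s, _, _, _, _, hlt => by
    simp [cons_lt_cons] at hlt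
  | cons (i + 1) a r, cons (j + 1) b s, ha, hb, hm, hn, hlt => by
    rw [size] at hm hn
    rw [ordinalSum, ordinalSum, cons_lt_cons]
    rcases cons_lt_cons.1 hlt with hij | ⟨hij, hab | ⟨rfl, hrs⟩⟩
    · exact .inl (by omega)
    · exact .inr ⟨by omega, .inl
        (ordinalSum_lt h0 hf hidx ha.arg hb.arg (by omega) (by omega) hab)⟩
    · exact .inr ⟨by omega, .inr ⟨rfl,
        ordinalSum_lt h0 hf hidx ha.tail hb.tail (by omega) (by omega) hrs⟩⟩

theorem coeffsBelow_one_ordinalSum : ∀ {q : PsiSum}, (∀ c ≤ size q, CoeffsBelow 1 (f c) b) →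
    CoeffsBelow 1 (ordinalSum f q) b
  | nil, _ => trivial
  | cons 0 a r, h => by
    have := length_le_size r
    exact h _ (by rw [size]; omega)
  | cons (i + 1) a r, h => by
    rw [size] at h
    exact ⟨fun _ => ⟨fun hi => by omega, coeffsBelow_one_ordinalSum fun c hc => h c (by omega)⟩,
      coeffsBelow_one_ordinalSum fun c hc => h c (by omega)⟩

theorem ordinalSum_baseChange {φ : ℕ → ℕ} (h0 : f 0 = nil) : ∀ {q : PsiSum},
    (∀ c ≤ size q, f (φ c) = g c) → ordinalSum f (baseChange φ false q) = ordinalSum g q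
  | nil, _ => rfl
  | cons 0 a r, h => by
    have := length_le_size r
    rw [size] at h
    exact (ordinalSum_numeral h0 _).trans (h _ (by omega))
  | cons (i + 1) a r, h => by
    rw [size] at h
    rw [baseChange_false_cons i.succ_pos, ordinalSum, ordinalSum,
      ordinalSum_baseChange h0 fun c hc => h c (by omega),
      ordinalSum_baseChange h0 fun c hc => h c (by omega)]

end OrdinalSum

theorem ordinalOf_of_lt (h : m < k) : ordinalOf k m = numeral m := by
  rw [ordinalOf, dif_neg (by omega)]

theorem ordinalOf_zero (hk : 2 ≤ k) : ordinalOf k 0 = nil := ordinalOf_of_lt (by omega)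

theorem headIdx_numeral (n : ℕ) : headIdx (numeral n) = 0 := by
  cases n <;> rfl

theorem headIdx_ordinalOf (k m : ℕ) : headIdx (ordinalOf k m) ≤ 1 := by
  rw [ordinalOf]
  split
  · exact le_rfl
  · rw [headIdx_numeral]
    omega

namespace IsNormalForm

theorem sub_hardy_lt (hk : 1 ≤ k) (h : IsNormalForm k m q) : m - hardy q k < m := by
  have := le_hardy hk h.isNotation.toIsCountable
  have := h.hardy_le
  omega

theorem ordinalOf_eq (hk : 2 ≤ k) (h : IsNormalForm k m q) : ordinalOf k m =
    cons 1 (ordinalSum (ordinalOf k) q) (ordinalOf k (m - hardy q k)) := by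
  have hkm : 2 ≤ k ∧ k ≤ m := ⟨hk, h.le_left (by omega)⟩
  have hsize := h.size_add_le hk
  rw [ordinalOf, dif_pos hkm, (exists_isNormalForm hkm.1 hkm.2).choose_spec.unique h]
  simp only
  rw [ordinalSum_congr fun c hc => dif_pos (by omega : c < m)]

end IsNormalForm

theorem ordinalOf_lt (hk : 2 ≤ k) {c : ℕ} (hc : c < m) : ordinalOf k c < ordinalOf k m := by
  induction m using Nat.strong_induction_on generalizing c with
  | _ m ih =>
    rcases Nat.lt_or_ge m k with hm | hm
    · rw [ordinalOf_of_lt hm, ordinalOf_of_lt (hc.trans hm)]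
      exact numeral_lt_numeral.2 hc
    obtain ⟨q, hq⟩ := exists_isNormalForm hk hm
    rw [hq.ordinalOf_eq hk]
    rcases Nat.lt_or_ge c k with hck | hck
    · rw [ordinalOf_of_lt hck]
      exact lt_cons_of_headIdx_lt (by rw [headIdx_numeral]; omega)
    obtain ⟨a, ha⟩ := exists_isNormalForm hk hck
    rw [ha.ordinalOf_eq hk]
    refine cons_lt_cons.2 (.inr ⟨rfl, ?_⟩)
    rcases (hq.le_of_le ha hc.le).lt_or_eq with haq | rfl
    · have hsa := ha.size_add_le hk
      have hsq := hq.size_add_le hk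
      exact .inl (ordinalSum_lt (ordinalOf_zero hk) (fun _ _ d hd hcd => ih d hd hcd)
        (headIdx_ordinalOf k) ha.isNotation.standard.hasNumeralTails
        hq.isNotation.standard.hasNumeralTails (by omega) (by omega) haq)
    · have := ha.hardy_le
      exact .inr ⟨rfl, ih _ (hq.sub_hardy_lt (by omega)) (by omega)⟩

theorem ordinalSum_ordinalOf_lt (hk : 2 ≤ k) (ha : HasNumeralTails a) (hb : HasNumeralTails b)
    (hab : a < b) : ordinalSum (ordinalOf k) a < ordinalSum (ordinalOf k) b :=
  ordinalSum_lt (m := max (size a) (size b) + 1) (ordinalOf_zero hk)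
    (fun _ _ _ _ => ordinalOf_lt hk) (headIdx_ordinalOf k) ha hb (by omega) (by omega) hab

theorem ordinalSum_ordinalOf_le (hk : 2 ≤ k) (ha : HasNumeralTails a) (hb : HasNumeralTails b)
    (hab : a ≤ b) : ordinalSum (ordinalOf k) a ≤ ordinalSum (ordinalOf k) b := by
  rcases hab.lt_or_eq with hlt | rfl
  · exact (ordinalSum_ordinalOf_lt hk ha hb hlt).le
  · exact le_rfl

/-! ## Ordinals of numbers are standard -/

theorem coeffsBelow_of_headIdx_lt : ∀ {q}, Standard 3 q → headIdx q < i → CoeffsBelow i q b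
  | nil, _, _ => trivial
  | cons _ _ _, h, hi =>
    ⟨fun hle => absurd hi hle.not_gt,
      coeffsBelow_of_headIdx_lt h.tail (h.headIdx_tail_le.trans_lt hi)⟩

theorem coeffsBelow_two_ordinalSum (hk : 2 ≤ k) (hb : HasNumeralTails b) :
    ∀ {q}, HasNumeralTails q → (∀ c ≤ size q, Standard 3 (ordinalOf k c)) → CoeffsBelow 1 q b →
      CoeffsBelow 2 (ordinalSum (ordinalOf k) q) (ordinalSum (ordinalOf k) b)
  | nil, _, _, _ => trivial
  | cons 0 a r, _, hs, _ => by
    have := length_le_size r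
    exact coeffsBelow_of_headIdx_lt (hs _ (by rw [size]; omega))
      ((headIdx_ordinalOf k _).trans_lt (by omega))
  | cons (i + 1) a r, hq, hs, h => by
    rw [size] at hs
    obtain ⟨hlt, ha⟩ := h.1 (by omega)
    exact ⟨fun _ => ⟨fun hi => ordinalSum_ordinalOf_lt hk hq.arg hb (hlt (by omega)),
      coeffsBelow_two_ordinalSum hk hb hq.arg (fun c hc => hs c (by omega)) ha⟩,
      coeffsBelow_two_ordinalSum hk hb hq.tail (fun c hc => hs c (by omega)) h.2⟩

theorem headLE_ordinalSum (hk : 2 ≤ k) (hi : 1 ≤ i) (ha : HasNumeralTails a) :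
    ∀ {r}, HasNumeralTails r → HeadLE r i a →
      HeadLE (ordinalSum (ordinalOf k) r) (i + 1) (ordinalSum (ordinalOf k) a)
  | nil, _, _ => trivial
  | cons 0 b s, _, _ =>
    headLE_of_lt_single (lt_cons_of_headIdx_lt ((headIdx_ordinalOf k _).trans_lt (by omega)))
  | cons (j + 1) b s, hr, h =>
    h.imp Nat.succ_lt_succ fun ⟨hj, hba⟩ =>
      ⟨congrArg (· + 1) hj, ordinalSum_ordinalOf_le hk hr.arg ha hba⟩

theorem Standard.ordinalSum (hk : 2 ≤ k) : ∀ {q}, Standard 2 q →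
    (∀ c ≤ size q, Standard 3 (ordinalOf k c)) → Standard 3 (ordinalSum (ordinalOf k) q)
  | nil, _, _ => trivial
  | cons 0 a r, _, hs => by
    have := length_le_size r
    exact hs _ (by rw [size]; omega)
  | cons (i + 1) a r, h, hs => by
    rw [size] at hs
    have ha := h.arg.hasNumeralTails
    refine ⟨Nat.succ_le_succ h.idx_le, fun hi => by omega,
      h.arg.ordinalSum hk fun c hc => hs c (by omega),
      h.tail.ordinalSum hk fun c hc => hs c (by omega),
      headLE_ordinalSum hk i.succ_pos ha h.tail.hasNumeralTails h.headLE, fun hi => ?_⟩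
    obtain rfl : i = 0 := by omega
    exact coeffsBelow_two_ordinalSum hk ha ha (fun c hc => hs c (by omega))
      (h.coeffsBelow (by omega))

namespace IsNormalForm

/-- The numbers below `H_q(k)` have normal forms with notations below `q`. -/
theorem coeffsBelow_ordinalOf (hk : 2 ≤ k) (h : IsNormalForm k m q)
    (ih : ∀ d < m, ∀ a, IsNormalForm k d a →
      CoeffsBelow 1 (PsiSum.ordinalSum (ordinalOf k) a) (PsiSum.ordinalSum (ordinalOf k) a))
    {c : ℕ} (hc : c < hardy q k) :
    CoeffsBelow 1 (ordinalOf k c) (PsiSum.ordinalSum (ordinalOf k) q) := by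
  induction c using Nat.strong_induction_on with
  | _ c ihc =>
    rcases Nat.lt_or_ge c k with hck | hck
    · rw [ordinalOf_of_lt hck]
      exact coeffsBelow_numeral _ _
    obtain ⟨a, ha⟩ := exists_isNormalForm hk hck
    have hcm := hc.trans_le h.hardy_le
    have haq : a < q := (h.le_of_le ha hcm.le).lt_of_ne fun haq =>
      (haq ▸ ha.hardy_le).not_gt hc
    have hlt := ordinalSum_ordinalOf_lt hk ha.isNotation.standard.hasNumeralTails
      h.isNotation.standard.hasNumeralTails haq
    have hsub := ha.sub_hardy_lt (by omega)
    rw [ha.ordinalOf_eq hk]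
    exact ⟨fun _ => ⟨fun _ => hlt, (ih c hcm a ha).mono hlt.le⟩, ihc _ hsub (hsub.trans hc)⟩

theorem coeffsBelow_ordinalSum (hk : 2 ≤ k) (h : IsNormalForm k m q) :
    CoeffsBelow 1 (PsiSum.ordinalSum (ordinalOf k) q) (PsiSum.ordinalSum (ordinalOf k) q) := by
  induction m using Nat.strong_induction_on generalizing q with
  | _ m ih =>
    have hsize := size_add_le_hardy hk h.isNotation.toIsCountable
    exact coeffsBelow_one_ordinalSum fun c hc =>
      h.coeffsBelow_ordinalOf hk (fun d hd a ha => ih d hd ha) (by omega)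

theorem headLE_ordinalOf (hk : 2 ≤ k) (h : IsNormalForm k m q) :
    HeadLE (ordinalOf k (m - hardy q k)) 1 (PsiSum.ordinalSum (ordinalOf k) q) := by
  rcases Nat.lt_or_ge (m - hardy q k) k with hr | hr
  · rw [ordinalOf_of_lt hr]
    exact headLE_of_lt_single (lt_cons_of_headIdx_lt (by rw [headIdx_numeral]; omega))
  · obtain ⟨a, ha⟩ := exists_isNormalForm hk hr
    rw [ha.ordinalOf_eq hk]
    exact .inr ⟨rfl, ordinalSum_ordinalOf_le hk ha.isNotation.standard.hasNumeralTails
      h.isNotation.standard.hasNumeralTails (h.le_of_le ha (Nat.sub_le _ _))⟩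

end IsNormalForm

theorem standard_ordinalOf (hk : 2 ≤ k) (m : ℕ) : Standard 3 (ordinalOf k m) := by
  induction m using Nat.strong_induction_on with
  | _ m ih =>
    rcases Nat.lt_or_ge m k with hm | hm
    · rw [ordinalOf_of_lt hm]
      exact standard_one.replicate m
    obtain ⟨q, hq⟩ := exists_isNormalForm hk hm
    have hsize := hq.size_add_le hk
    rw [hq.ordinalOf_eq hk]
    exact ⟨by omega, fun h => by omega,
      hq.isNotation.standard.ordinalSum hk fun c hc => ih c (by omega),
      ih _ (hq.sub_hardy_lt (by omega)), hq.headLE_ordinalOf hk,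
      fun _ => hq.coeffsBelow_ordinalSum hk⟩

/-! ## The descent -/

theorem ordinalOf_bcN (hk : 2 ≤ k) (m : ℕ) : ordinalOf (k + 1) (bcN k m) = ordinalOf k m := by
  induction m using Nat.strong_induction_on with
  | _ m ih =>
    rcases Nat.lt_or_ge m k with hm | hm
    · rw [bcN_of_lt hm, ordinalOf_of_lt hm, ordinalOf_of_lt (hm.trans k.lt_succ_self)]
    obtain ⟨q, hq⟩ := exists_isNormalForm hk hm
    have hsize := hq.size_add_le hk
    have hrem : bcN k m - hardy (baseChange (bcN k) false q) (k + 1) = bcN k (m - hardy q k) := by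
      rw [hq.bcN_eq_hardy_add hk, Nat.add_sub_cancel_left]
    rw [hq.ordinalOf_eq hk, (hq.isNormalForm_bcN hk).ordinalOf_eq (by omega), hrem,
      ih _ (hq.sub_hardy_lt (by omega)),
      ordinalSum_baseChange (ordinalOf_zero (by omega)) fun c hc => ih c (by omega)]

theorem ordinalOf_Gseq_succ_lt {l j : ℕ} (h : Gseq l j ≠ 0) :
    ordinalOf (j + 3) (Gseq l (j + 1)) < ordinalOf (j + 2) (Gseq l j) := by
  have hpos := Nat.pos_of_ne_zero h
  have hle := (isBaseMap_bcN (by omega : 2 ≤ j + 2)).le_apply (Gseq l j)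
  rw [← ordinalOf_bcN (by omega) (Gseq l j), Gseq, if_pos hpos]
  exact ordinalOf_lt (by omega) (Nat.sub_lt (hpos.trans_le hle) one_pos)

end PsiSum

/-- The Goodstein process terminates. -/
theorem goodstein_terminates : ∀ l : ℕ, ∃ k : ℕ, Gseq l k = 0 := by
  intro l
  suffices h : ∀ q, PsiSum.Standard 3 q →
      ∀ j, PsiSum.ordinalOf (j + 2) (Gseq l j) = q → ∃ k, Gseq l k = 0 from
    h _ (PsiSum.standard_ordinalOf le_rfl _) 0 rfl
  intro q hq
  induction hq using PsiSum.Standard.induction with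
  | h q _ ih =>
    rintro j rfl
    by_cases hzero : Gseq l j = 0
    · exact ⟨j, hzero⟩
    · exact ih _ (PsiSum.standard_ordinalOf (by omega) _) (PsiSum.ordinalOf_Gseq_succ_lt hzero)
        (j + 1) rfl
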